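/- Let n > n₁ ≥ 2 and m > m₁ ≥ 2 be integers with F_n - F_{n₁} = T_m - T_{m₁}. Then min{(n-n₁)·log α, (m-m₁)·log α_T} < 2.03×10^15·log n, where α = (1+√5)/2 and α_T is the unique real root of x³ - x² - x - 1. -/

import Mathlib

/-- The Tribonacci sequence: T 0 = 0, T 1 = T 2 = 1,
    T (k+3) = T (k+2) + T (k+1) + T k. -/
def trib : ℕ → ℤ
  | 0 => 0
  | 1 => 1
  | 2 => 1
  | n + 3 => trib (n + 2) + trib (n + 1) + trib n

/-!
By Binet's formulas, an equation `F n - F n₁ = T m - T m₁` makes the linear form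
`Λ = n log φ - m log ω + log (δ / √5)`, where `T m ∼ ω ^ m / δ`, exponentially small in
`min (n - n₁) (m - m₁)`, and Baker's method bounds `|Λ|` from below.

Siegel's lemma yields integers `pᵢ`, not all zero, such that a sum `∑ pᵢ qᵢ(z) exp (γᵢ z)`, where
the `qᵢ` are Delta-polynomials and the `γᵢ` are integer combinations of the three logarithms,
vanishes to high order at many odd integers, up to an error caused by `Λ`. The Schwarz lemma and
the Liouville inequality carry zeros at the points `s / G`, `s` odd, over to the points `s / (2G)`,
at the cost of half of the order. There `φ`, `ω` and `δ / √5` enter through their square roots; as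
the three numbers are independent modulo squares of `ℚ(ω, √5)`, Kummer theory shows that the part
of the sum belonging to each residue class of the exponents modulo `2G` vanishes by itself.
Repeating this thins the exponents out until only a polynomial is left, which has more zeros than
its degree permits.
-/

/-! ### Independence modulo squares -/

section Kummer

open IntermediateField Polynomial

variable {F L J : Type*} [Field F] [Field L] [Algebra F L]

lemma exists_add_mul_eq_of_mem_adjoin_sqrt {K : IntermediateField F L} {b x : L}
    (hb : b ^ 2 ∈ K) (hx : x ∈ K⟮b⟯) : ∃ u ∈ K, ∃ v ∈ K, x = u + v * b := by
  have hint : IsIntegral K b :=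
    IsIntegral.of_pow two_pos (isIntegral_algebraMap (x := (⟨b ^ 2, hb⟩ : K)))
  rw [← mem_toSubalgebra, adjoin_simple_toSubalgebra_of_isAlgebraic hint.isAlgebraic] at hx
  induction hx using Algebra.adjoin_induction with
  | mem x hx => exact ⟨0, zero_mem K, 1, one_mem K, by simp [Set.mem_singleton_iff.1 hx]⟩
  | algebraMap r => exact ⟨r, r.2, 0, zero_mem K, by simp⟩
  | add x y _ _ hx hy =>
    obtain ⟨u, hu, v, hv, rfl⟩ := hx
    obtain ⟨u', hu', v', hv', rfl⟩ := hy
    exact ⟨u + u', add_mem hu hu', v + v', add_mem hv hv', by ring⟩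
  | mul x y _ _ hx hy =>
    obtain ⟨u, hu, v, hv, rfl⟩ := hx
    obtain ⟨u', hu', v', hv', rfl⟩ := hy
    exact ⟨u * u' + v * v' * b ^ 2, add_mem (mul_mem hu hu') (mul_mem (mul_mem hv hv') hb),
      u * v' + v * u', add_mem (mul_mem hu hv') (mul_mem hv hu'), by ring⟩

lemma eq_zero_of_add_mul_eq_zero {K : IntermediateField F L} {b u v : L} (hb : b ∉ K)
    (hu : u ∈ K) (hv : v ∈ K) (h : u + v * b = 0) : u = 0 ∧ v = 0 := by
  have hv0 : v = 0 := by
    by_contra hv0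
    refine hb ?_
    rw [show b = -u / v by field_simp; linear_combination h]
    exact div_mem (neg_mem hu) hv
  exact ⟨by simpa [hv0] using h, hv0⟩

lemma mem_or_mul_mem_of_sq_mem [NeZero (2 : L)] {K : IntermediateField F L} {b y : L}
    (hb : b ^ 2 ∈ K) (hbK : b ∉ K) (hy : y ∈ K⟮b⟯) (hyK : y ^ 2 ∈ K) : y ∈ K ∨ y * b ∈ K := by
  obtain ⟨u, hu, v, hv, rfl⟩ := exists_add_mul_eq_of_mem_adjoin_sqrt hb hy
  have huv : 2 * (u * v) = 0 :=
    (eq_zero_of_add_mul_eq_zero hbK (u := u ^ 2 + v ^ 2 * b ^ 2 - (u + v * b) ^ 2)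
      (sub_mem (add_mem (pow_mem hu 2) (mul_mem (pow_mem hv 2) hb)) hyK)
      (mul_mem (ofNat_mem K 2) (mul_mem hu hv)) (by ring)).2
  rcases mul_eq_zero.1 ((mul_eq_zero_iff_left two_ne_zero).1 huv) with rfl | rfl
  · right
    rw [show (0 + v * b) * b = v * b ^ 2 by ring]
    exact mul_mem hv hb
  · left
    simpa using hu

lemma prod_sqrt_notMem_adjoin [NeZero (2 : L)] [DecidableEq J] {K : IntermediateField F L}
    {b : J → L} {a : J} {s : Finset J} (ha : a ∉ s) (hsq : ∀ j ∈ insert a s, b j ^ 2 ∈ K)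
    (hns : ∀ S ⊆ insert a s, S.Nonempty → ∏ j ∈ S, b j ∉ K) {S : Finset J} (hS : S ⊆ s)
    (hne : S.Nonempty) : ∏ j ∈ S, b j ∉ K⟮b a⟯ := fun hmem => by
  have haK : b a ∉ K := by simpa using hns {a} (by simp) (Finset.singleton_nonempty a)
  have hS' : S ⊆ insert a s := hS.trans (Finset.subset_insert a s)
  have hSsq : (∏ j ∈ S, b j) ^ 2 ∈ K := by
    rw [← Finset.prod_pow]
    exact prod_mem fun j hj => hsq j (hS' hj)
  rcases mem_or_mul_mem_of_sq_mem (hsq a (Finset.mem_insert_self a s)) haK hmem hSsq with h | h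
  · exact hns S hS' hne h
  · refine hns (insert a S) (Finset.insert_subset_insert a hS) (Finset.insert_nonempty a S) ?_
    rwa [Finset.prod_insert fun h => ha (hS h), mul_comm]

lemma eq_zero_of_sum_mul_prod_sqrt_eq_zero [NeZero (2 : L)] {b : J → L} (s : Finset J) :
    ∀ {K : IntermediateField F L}, (∀ j ∈ s, b j ^ 2 ∈ K) →
      (∀ S ⊆ s, S.Nonempty → ∏ j ∈ S, b j ∉ K) →
      ∀ {x : Finset J → L}, (∀ S ⊆ s, x S ∈ K) →
        ∑ S ∈ s.powerset, x S * ∏ j ∈ S, b j = 0 → ∀ S ⊆ s, x S = 0 := by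
  classical
  induction s using Finset.induction_on with
  | empty =>
    intro K _ _ x _ hsum S hS
    simpa [Finset.subset_empty.1 hS] using hsum
  | insert a s ha ih =>
    intro K hsq hns x hx hsum
    have hsub {S : Finset J} (hS : S ⊆ s) : S ⊆ insert a s := hS.trans (Finset.subset_insert a s)
    have hsub' {S : Finset J} (hS : S ⊆ s) : insert a S ⊆ insert a s :=
      Finset.insert_subset_insert a hS
    let K' : IntermediateField F L := K⟮b a⟯.restrictScalars F
    have hKK' {y : L} (hy : y ∈ K) : y ∈ K' := IntermediateField.algebraMap_mem K⟮b a⟯ ⟨y, hy⟩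
    have hpair : ∀ S ⊆ s, x S + x (insert a S) * b a = 0 := by
      refine ih (K := K') (fun j hj => hKK' (hsq j (Finset.mem_insert_of_mem hj)))
        (fun S => prod_sqrt_notMem_adjoin ha hsq hns) (fun S hS => add_mem (hKK' (hx S (hsub hS)))
          (mul_mem (hKK' (hx _ (hsub' hS))) (mem_adjoin_simple_self K (b a)))) ?_
      rw [← hsum, Finset.sum_powerset_insert ha, ← Finset.sum_add_distrib]
      refine Finset.sum_congr rfl fun S hS => ?_
      rw [Finset.prod_insert fun h => ha (Finset.mem_powerset.1 hS h)]
      ring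
    intro S hS
    have hSa : S.erase a ⊆ s := Finset.subset_insert_iff.1 hS
    have haK : b a ∉ K := by simpa using hns {a} (by simp) (Finset.singleton_nonempty a)
    have hzero := eq_zero_of_add_mul_eq_zero haK (hx _ (hsub hSa)) (hx _ (hsub' hSa)) (hpair _ hSa)
    by_cases haS : a ∈ S
    · simpa [Finset.insert_erase haS] using hzero.2
    · simpa [Finset.erase_eq_of_notMem haS] using hzero.1

/-- Kummer independence of square roots: no nonempty product of the `b j` lies in the field
generated by the squares `b j ^ 2`. -/
def KummerIndependent (F : Type*) {L J : Type*} [Field F] [Field L] [Algebra F L]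
    (b : J → L) : Prop :=
  ∀ S : Finset J, S.Nonempty → ∏ j ∈ S, b j ∉ adjoin F (Set.range fun j => b j ^ 2)

lemma zpow_eq_sq_zpow_mul (b : L) (e : ℤ) :
    b ^ e = (b ^ 2) ^ (e / 2) * if Odd e then b else 1 := by
  split_ifs with h
  · obtain ⟨k, rfl⟩ := h
    rw [show (2 * k + 1) / 2 = k by omega]
    rcases eq_or_ne b 0 with rfl | hb
    · simp [zero_zpow _ (show 2 * k + 1 ≠ 0 by omega)]
    · rw [zpow_add_one₀ hb, zpow_mul]; norm_cast
  · obtain ⟨k, rfl⟩ := Int.not_odd_iff_even.1 h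
    rw [← two_mul, Int.mul_ediv_cancel_left _ two_ne_zero, zpow_mul, mul_one]; norm_cast

lemma KummerIndependent.sum_parity_class_eq_zero [NeZero (2 : L)] [Fintype J] {b : J → L}
    (hb : KummerIndependent F b) {ι : Type*} {U : Finset ι} {C : ι → L} {e : ι → J → ℤ}
    (hC : ∀ i ∈ U, C i ∈ (⊥ : IntermediateField F L)) (h : ∑ i ∈ U, C i * ∏ j, b j ^ e i j = 0)
    (r : J → ℤ) :
    ∑ i ∈ U with ∀ j, e i j ≡ r j [ZMOD 2], C i * ∏ j, b j ^ e i j = 0 := by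
  classical
  set K := adjoin F (Set.range fun j => b j ^ 2)
  have hsq (j : J) : b j ^ 2 ∈ K := subset_adjoin F _ ⟨j, rfl⟩
  let oddPart (f : J → ℤ) : Finset J := {j | Odd (f j)}
  have hodd (i : ι) : (∀ j, e i j ≡ r j [ZMOD 2]) ↔ oddPart (e i) = oddPart r := by
    simp only [oddPart, Finset.ext_iff, Finset.mem_filter_univ, Int.ModEq, Int.odd_iff]
    exact forall_congr' fun j => by omega
  have hsplit (i : ι) : C i * ∏ j, b j ^ e i j =
      (C i * ∏ j, (b j ^ 2) ^ (e i j / 2)) * ∏ j ∈ oddPart (e i), b j := by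
    simp only [zpow_eq_sq_zpow_mul (b _) (e i _), Finset.prod_mul_distrib, oddPart,
      Finset.prod_filter, mul_assoc]
  let x (S : Finset J) : L := ∑ i ∈ U with oddPart (e i) = S, C i * ∏ j, (b j ^ 2) ^ (e i j / 2)
  have hclass (S : Finset J) :
      ∑ i ∈ U with oddPart (e i) = S, C i * ∏ j, b j ^ e i j = x S * ∏ j ∈ S, b j := by
    rw [Finset.sum_mul]
    exact Finset.sum_congr rfl fun i hi => by rw [hsplit, (Finset.mem_filter.1 hi).2]
  have hx (S : Finset J) : x S ∈ K :=
    sum_mem fun i hi => mul_mem (bot_le (a := K) (hC i (Finset.mem_filter.1 hi).1))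
      (prod_mem fun j _ => zpow_mem (hsq j) _)
  have hsum : ∑ S ∈ Finset.univ.powerset, x S * ∏ j ∈ S, b j = 0 := by
    rw [← h, Finset.powerset_univ, ← Finset.sum_fiberwise U fun i => oddPart (e i)]
    exact Finset.sum_congr rfl fun S _ => (hclass S).symm
  simp only [hodd, hclass]
  rw [eq_zero_of_sum_mul_prod_sqrt_eq_zero Finset.univ (fun j _ => hsq j) (fun S _ => hb S)
    (fun S _ => hx S) hsum _ (Finset.subset_univ _), zero_mul]

end Kummer

section TribonacciField

open IntermediateField Polynomial

variable {ω : ℝ} (hω : ω ^ 3 - ω ^ 2 - ω - 1 = 0)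
include hω

lemma minpoly_tribRoot : minpoly ℚ ω = X ^ 3 - X ^ 2 - X - 1 := by
  have hmonic : (X ^ 3 - X ^ 2 - X - 1 : ℤ[X]).Monic := by monicity!
  have hdeg : (X ^ 3 - X ^ 2 - X - 1 : ℚ[X]).natDegree = 3 := by compute_degree!
  refine (minpoly.eq_of_irreducible_of_monic (irreducible_of_degree_le_three_of_not_isRoot
    (by simp [hdeg]) fun x hx => ?_) (by simpa using hω) (by monicity!)).symm
  have hx' : x ^ 3 - x ^ 2 - x - 1 = 0 := by simpa using hx
  obtain ⟨k, rfl⟩ := isInteger_of_is_root_of_monic hmonic (r := x) (by simpa using hx')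
  have hk : k * (k ^ 2 - k - 1) = 1 := by
    rw [eq_intCast] at hx'
    have : k ^ 3 - k ^ 2 - k - 1 = 0 := by exact_mod_cast hx'
    linear_combination this
  rcases Int.eq_one_or_neg_one_of_mul_eq_one hk with rfl | rfl <;> norm_num at hk

lemma isIntegral_tribRoot : IsIntegral ℤ ω :=
  ⟨X ^ 3 - X ^ 2 - X - 1, by monicity!, by simpa using hω⟩

lemma finrank_adjoin_tribRoot : Module.finrank ℚ ℚ⟮ω⟯ = 3 := by
  rw [adjoin.finrank (isIntegral_tribRoot hω).tower_top, minpoly_tribRoot hω]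
  compute_degree!

lemma eq_zero_of_quadratic_tribRoot {a b c : ℤ} (h : a + b * ω + c * ω ^ 2 = 0) :
    a = 0 ∧ b = 0 ∧ c = 0 := by
  have hp : (C (a : ℚ) + C (b : ℚ) * X + C (c : ℚ) * X ^ 2) = 0 := by
    refine eq_zero_of_dvd_of_natDegree_lt (minpoly.dvd ℚ ω (by simpa using h)) ?_
    rw [← adjoin.finrank (isIntegral_tribRoot hω).tower_top, finrank_adjoin_tribRoot hω]
    exact Nat.lt_succ_of_le (by compute_degree)
  refine ⟨?_, ?_, ?_⟩
  · simpa [-map_intCast, coeff_X, coeff_C] using congrArg (coeff · 0) hp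
  · simpa [-map_intCast, coeff_X, coeff_C] using congrArg (coeff · 1) hp
  · simpa [-map_intCast, coeff_X, coeff_C] using congrArg (coeff · 2) hp

lemma sq_ne_five_of_mem_adjoin_tribRoot {y : ℝ} (hy : y ∈ ℚ⟮ω⟯) : y ^ 2 ≠ 5 := fun h => by
  have hroot : aeval y (X ^ 2 - C 5 : ℚ[X]) = 0 := by simp [h]
  have hint : IsIntegral ℚ y := ⟨X ^ 2 - C 5, by monicity!, hroot⟩
  have hdvd : (minpoly ℚ y).natDegree ∣ 3 := by
    rw [← adjoin.finrank hint, ← finrank_adjoin_tribRoot hω]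
    exact finrank_dvd_of_le_right (adjoin_simple_le_iff.2 hy)
  have hle : (minpoly ℚ y).natDegree ≤ 2 :=
    (natDegree_le_of_dvd (minpoly.dvd ℚ y hroot) (Monic.ne_zero (by monicity!))).trans
      (by compute_degree)
  have hone : (minpoly ℚ y).natDegree = 1 := by
    rcases (Nat.dvd_prime Nat.prime_three).1 hdvd with h | h <;> omega
  obtain ⟨q, rfl⟩ := minpoly.natDegree_eq_one_iff.1 hone
  have hq : 5 = q * q := by rw [eq_ratCast] at h; exact_mod_cast (sq (q : ℝ) ▸ h).symm
  exact (by norm_num : ¬IsSquare (5 : ℚ)) ⟨q, hq⟩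

lemma exists_cubic_of_sq_eq_mul_tribRoot {y : ℝ} (hy : y ∈ ℚ⟮ω⟯) {c : ℤ} (hc : c ≠ 0)
    (h : y ^ 2 = c * ω) : ∃ p q r : ℤ, y ^ 3 + p * y ^ 2 + q * y + r = 0 := by
  have hint : IsIntegral ℤ y := IsIntegral.of_pow two_pos
    (h ▸ (isIntegral_algebraMap (R := ℤ) (x := c)).mul (isIntegral_tribRoot hω))
  have hadj : ℚ⟮y⟯ = ℚ⟮ω⟯ := by
    refine le_antisymm (adjoin_simple_le_iff.2 hy) (adjoin_simple_le_iff.2 ?_)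
    rw [show ω = y ^ 2 / c by field_simp; linear_combination -h]
    exact div_mem (pow_mem (mem_adjoin_simple_self ℚ y) 2) (intCast_mem _ c)
  have hdeg : (minpoly ℤ y).natDegree = 3 := by
    rw [← (minpoly.monic hint).natDegree_map (algebraMap ℤ ℚ),
      ← minpoly.isIntegrallyClosed_eq_field_fractions' ℚ hint, ← adjoin.finrank hint.tower_top,
      hadj, finrank_adjoin_tribRoot hω]
  have hlead : (minpoly ℤ y).coeff 3 = 1 := hdeg ▸ (minpoly.monic hint).coeff_natDegree
  have hzero := minpoly.aeval ℤ y
  rw [aeval_eq_sum_range, hdeg] at hzero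
  simp only [Finset.sum_range_succ, Finset.sum_range_zero, hlead, zsmul_eq_mul] at hzero
  exact ⟨(minpoly ℤ y).coeff 2, (minpoly ℤ y).coeff 1, (minpoly ℤ y).coeff 0, by
    push_cast at hzero; linear_combination hzero⟩

lemma coeff_relations_of_sq_eq_mul_tribRoot {y : ℝ} {c p q r : ℤ} (h : y ^ 2 = c * ω)
    (hpqr : y ^ 3 + p * y ^ 2 + q * y + r = 0) (hc : c ≠ 0) :
    p ^ 2 - 2 * q = c ∧ q ^ 2 - 2 * p * r = -c ^ 2 ∧ r ^ 2 = c ^ 3 := by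
  have hlin : y * (c * ω + q) = -(p * c * ω + r) := by
    linear_combination hpqr - (y + p) * h
  have hsq : c * ω * (c * ω + q) ^ 2 = (p * c * ω + r) ^ 2 := by
    rw [← neg_sq (p * c * ω + r), ← hlin, mul_pow, h]
  obtain ⟨h0, h1, h2⟩ := eq_zero_of_quadratic_tribRoot hω (a := c ^ 3 - r ^ 2)
    (b := c * (c ^ 2 + q ^ 2 - 2 * p * r)) (c := c ^ 2 * (c + 2 * q - p ^ 2)) (by
      push_cast; linear_combination hsq - c ^ 3 * hω)
  have h1' := (mul_eq_zero_iff_left hc).1 h1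
  have h2' := (mul_eq_zero_iff_left (pow_ne_zero 2 hc)).1 h2
  exact ⟨by linarith, by linarith, by linarith⟩

lemma sq_ne_tribRoot {y : ℝ} (hy : y ∈ ℚ⟮ω⟯) : y ^ 2 ≠ ω := fun h => by
  have h' : y ^ 2 = (1 : ℤ) * ω := by simpa using h
  obtain ⟨p, q, r, hpqr⟩ := exists_cubic_of_sq_eq_mul_tribRoot hω hy one_ne_zero h'
  obtain ⟨hp, hq, -⟩ := coeff_relations_of_sq_eq_mul_tribRoot hω h' hpqr one_ne_zero
  have hp_odd : Odd p := by
    rw [← Int.odd_pow' two_ne_zero]; exact ⟨q, by linarith⟩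
  have hq_odd : Odd q := by
    rw [← Int.odd_pow' two_ne_zero]; exact ⟨p * r - 1, by linarith⟩
  obtain ⟨k, rfl⟩ := hp_odd
  have : q = 2 * (k ^ 2 + k) := by linarith
  exact absurd hq_odd (by simp [this])

lemma sq_ne_five_mul_tribRoot {y : ℝ} (hy : y ∈ ℚ⟮ω⟯) : y ^ 2 ≠ 5 * ω := fun h => by
  have h' : y ^ 2 = (5 : ℤ) * ω := by simpa using h
  obtain ⟨p, q, r, hpqr⟩ := exists_cubic_of_sq_eq_mul_tribRoot hω hy (by norm_num) h'
  obtain ⟨-, -, hr⟩ := coeff_relations_of_sq_eq_mul_tribRoot hω h' hpqr (by norm_num)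
  exact (by norm_num : ¬IsSquare (125 : ℤ)) ⟨r, by linarith⟩

end TribonacciField

section Nonsquares

open IntermediateField Polynomial

lemma sqrt_five_sq_mem (K : IntermediateField ℚ ℝ) : √5 ^ 2 ∈ K := by
  rw [Real.sq_sqrt (by norm_num)]
  exact ofNat_mem K 5

variable {K : IntermediateField ℚ ℝ} (hK : √5 ∉ K)
include hK

lemma exists_sq_eq_norm_of_sq_eq {x A B : ℝ} (hx : x ∈ K⟮√5⟯) (hA : A ∈ K) (hB : B ∈ K)
    (h : x ^ 2 = A + B * √5) : ∃ w ∈ K, w ^ 2 = A ^ 2 - 5 * B ^ 2 := by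
  have h5 : √5 ^ 2 = 5 := Real.sq_sqrt (by norm_num)
  obtain ⟨u, hu, v, hv, rfl⟩ :=
    exists_add_mul_eq_of_mem_adjoin_sqrt (sqrt_five_sq_mem K) hx
  obtain ⟨hA', hB'⟩ := eq_zero_of_add_mul_eq_zero hK
    (sub_mem (add_mem (pow_mem hu 2) (mul_mem (ofNat_mem K 5) (pow_mem hv 2))) hA)
    (sub_mem (mul_mem (ofNat_mem K 2) (mul_mem hu hv)) hB)
    (show u ^ 2 + 5 * v ^ 2 - A + (2 * (u * v) - B) * √5 = 0 by
      linear_combination h - v ^ 2 * h5)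
  refine ⟨u ^ 2 - 5 * v ^ 2,
    sub_mem (pow_mem hu 2) (mul_mem (ofNat_mem K 5) (pow_mem hv 2)), ?_⟩
  rw [← sub_eq_zero.1 hA', ← sub_eq_zero.1 hB']
  ring

variable {c : ℝ} (hc : c ∈ K) (hc0 : c ≠ 0) {x : ℝ} (hx : x ∈ K⟮√5⟯)
include hc hc0 hx

lemma sq_ne_mul_sqrt_five : x ^ 2 ≠ c * √5 := fun h => by
  obtain ⟨w, -, hw⟩ := exists_sq_eq_norm_of_sq_eq hK hx (zero_mem K) hc (by rw [h, zero_add])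
  have := sq_pos_of_ne_zero hc0
  nlinarith [sq_nonneg w]

lemma sq_ne_mul_goldenRatio : x ^ 2 ≠ c * Real.goldenRatio := fun h => by
  have hc2 : c / 2 ∈ K := div_mem hc (ofNat_mem K 2)
  obtain ⟨w, -, hw⟩ := exists_sq_eq_norm_of_sq_eq hK hx hc2 hc2 (by
    rw [h, Real.goldenRatio]; ring)
  have := sq_pos_of_ne_zero hc0
  nlinarith [sq_nonneg w]

lemma sq_ne_mul_goldenRatio_mul_sqrt_five (h5 : ∀ y ∈ K, y ^ 2 ≠ 5) :
    x ^ 2 ≠ c * (Real.goldenRatio * √5) := fun h => by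
  have hc2 : c / 2 ∈ K := div_mem hc (ofNat_mem K 2)
  obtain ⟨w, hw, hw5⟩ := exists_sq_eq_norm_of_sq_eq hK hx (mul_mem hc2 (ofNat_mem K 5)) hc2 (by
    rw [h, Real.goldenRatio]
    linear_combination c / 2 * Real.sq_sqrt (show (0 : ℝ) ≤ 5 by norm_num))
  refine h5 (w / c) (div_mem hw hc) ?_
  field_simp
  linear_combination hw5

end Nonsquares

/-- The denominator in the asymptotic Binet formula `T k ∼ ω ^ k / tribDenom ω` for the
Tribonacci numbers. -/
def tribDenom {R : Type*} [CommRing R] (ω : R) : R := -ω ^ 2 + 4 * ω - 1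

/-- The algebraic numbers whose logarithms form the linear form attached to the equation:
`φ ^ n / √5 ≈ ω ^ m / tribDenom ω` says that `n log φ - m log ω + log (tribDenom ω / √5)` is
small. -/
noncomputable def binetBase (ω : ℝ) : Fin 3 → ℝ :=
  ![Real.goldenRatio, ω, tribDenom ω / √5]

section Independence

open IntermediateField Polynomial

lemma binetBase_mem_adjoin (ω : ℝ) (j : Fin 3) : binetBase ω j ∈ ℚ⟮ω⟯⟮√5⟯ := by
  have hself : √5 ∈ ℚ⟮ω⟯⟮√5⟯ := mem_adjoin_simple_self _ _
  have hω_mem : ω ∈ ℚ⟮ω⟯⟮√5⟯ :=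
    IntermediateField.algebraMap_mem ℚ⟮ω⟯⟮√5⟯ ⟨ω, mem_adjoin_simple_self ℚ ω⟩
  fin_cases j
  · exact div_mem (add_mem (one_mem _) hself) (ofNat_mem _ 2)
  · exact hω_mem
  · exact div_mem (sub_mem (add_mem (neg_mem (pow_mem hω_mem 2))
      (mul_mem (ofNat_mem _ 4) hω_mem)) (one_mem _)) hself

variable {ω : ℝ} (hω : ω ^ 3 - ω ^ 2 - ω - 1 = 0)
include hω

lemma sqrt_five_notMem_adjoin_tribRoot : √5 ∉ ℚ⟮ω⟯ := fun h =>
  sq_ne_five_of_mem_adjoin_tribRoot hω h (Real.sq_sqrt (by norm_num))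

lemma sq_ne_tribRoot_of_mem_adjoin_sqrt_five {y : ℝ} (hy : y ∈ ℚ⟮ω⟯⟮√5⟯) : y ^ 2 ≠ ω := fun h => by
  have h5 : √5 ^ 2 = 5 := Real.sq_sqrt (by norm_num)
  rcases mem_or_mul_mem_of_sq_mem (sqrt_five_sq_mem _) (sqrt_five_notMem_adjoin_tribRoot hω) hy
    (h ▸ mem_adjoin_simple_self ℚ ω) with hy | hy
  · exact sq_ne_tribRoot hω hy h
  · exact sq_ne_five_mul_tribRoot hω hy (by rw [mul_pow, h5, h, mul_comm])

lemma sq_ne_prod_binetBase (hδ : tribDenom ω ≠ 0) {S : Finset (Fin 3)} (hS : S.Nonempty) {y : ℝ}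
    (hy : y ∈ ℚ⟮ω⟯⟮√5⟯) : y ^ 2 ≠ ∏ j ∈ S, binetBase ω j := by
  have hK := sqrt_five_notMem_adjoin_tribRoot hω
  have hω0 : ω ≠ 0 := by rintro rfl; norm_num at hω
  have hω_mem : ω ∈ ℚ⟮ω⟯ := mem_adjoin_simple_self ℚ ω
  have hδ_mem : tribDenom ω / 5 ∈ ℚ⟮ω⟯ :=
    div_mem (sub_mem (add_mem (neg_mem (pow_mem hω_mem 2)) (mul_mem (ofNat_mem _ 4) hω_mem))
      (one_mem _)) (ofNat_mem _ 5)
  have hδ0 : tribDenom ω / 5 ≠ 0 := div_ne_zero hδ (by norm_num)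
  have ha : tribDenom ω / √5 = tribDenom ω / 5 * √5 := by
    field_simp; rw [Real.sq_sqrt (by norm_num)]
  have hprod : ∏ j ∈ S, binetBase ω j = (if 0 ∈ S then Real.goldenRatio else 1) *
      (if 1 ∈ S then ω else 1) * (if 2 ∈ S then tribDenom ω / 5 * √5 else 1) := by
    rw [← ha, ← Finset.filter_univ_mem S, Finset.prod_filter, Finset.filter_univ_mem,
       Fin.prod_univ_three]
    rfl
  rw [hprod]
  by_cases h0 : 0 ∈ S <;> by_cases h1 : 1 ∈ S <;> by_cases h2 : 2 ∈ S <;>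
    simp only [h0, h1, h2, if_true, if_false, mul_one, one_mul]
  · convert sq_ne_mul_goldenRatio_mul_sqrt_five hK (mul_mem hω_mem hδ_mem) (mul_ne_zero hω0 hδ0) hy
      (fun _ => sq_ne_five_of_mem_adjoin_tribRoot hω) using 1
    ring
  · convert sq_ne_mul_goldenRatio hK hω_mem hω0 hy using 1
    ring
  · convert sq_ne_mul_goldenRatio_mul_sqrt_five hK hδ_mem hδ0 hy
      (fun _ => sq_ne_five_of_mem_adjoin_tribRoot hω) using 1
    ring
  · simpa using sq_ne_mul_goldenRatio hK (one_mem _) one_ne_zero hy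
  · convert sq_ne_mul_sqrt_five hK (mul_mem hω_mem hδ_mem) (mul_ne_zero hω0 hδ0) hy using 1
    ring
  · exact sq_ne_tribRoot_of_mem_adjoin_sqrt_five hω hy
  · exact sq_ne_mul_sqrt_five hK hδ_mem hδ0 hy
  · obtain ⟨j, hj⟩ := hS
    fin_cases j <;> contradiction

lemma kummerIndependent_sqrt_binetBase (hδ : tribDenom ω ≠ 0) {β : Fin 3 → ℝ}
    (hβ : ∀ j, β j ^ 2 = binetBase ω j) : KummerIndependent ℚ β := fun S hS hmem => by
  have hle : adjoin ℚ (Set.range fun j => β j ^ 2) ≤ ℚ⟮ω⟯⟮√5⟯.restrictScalars ℚ := by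
    rw [adjoin_le_iff]
    rintro _ ⟨j, rfl⟩
    simpa only [hβ, SetLike.mem_coe, mem_restrictScalars] using binetBase_mem_adjoin ω j
  refine sq_ne_prod_binetBase hω hδ hS (hle hmem) ?_
  rw [← Finset.prod_pow]
  exact Finset.prod_congr rfl fun j _ => hβ j

end Independence

/-! ### The Schwarz lemma and flattening -/

section EntireFunctions

open Complex

lemma exists_eq_pow_mul_of_le_analyticOrderAt {f : ℂ → ℂ} (hf : Differentiable ℂ f) {a : ℂ}
    {τ : ℕ} (ho : (τ : ℕ∞) ≤ analyticOrderAt f a) :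
    ∃ h : ℂ → ℂ, Differentiable ℂ h ∧ ∀ z, f z = (z - a) ^ τ * h z := by
  induction τ generalizing f with
  | zero => exact ⟨f, hf, by simp⟩
  | succ τ ih =>
    have hfa : f a = 0 := (hf.analyticAt a).analyticOrderAt_ne_zero.1
      (ne_of_gt (lt_of_lt_of_le (by simp) ho))
    have hd : Differentiable ℂ (dslope f a) := by
      rw [← differentiableOn_univ]
      exact (differentiableOn_dslope Filter.univ_mem).2 hf.differentiableOn
    have hfactor : f = (fun z => z - a) * dslope f a := by
      funext z
      simpa [hfa, smul_eq_mul] using (sub_smul_dslope f a z).symm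
    have hord : analyticOrderAt (fun z : ℂ => z - a) a = 1 :=
      (AnalyticAt.analyticOrderAt_eq_natCast (n := 1) (by fun_prop)).2
        ⟨fun _ => 1, analyticAt_const, one_ne_zero, by simp⟩
    rw [hfactor, analyticOrderAt_mul (by fun_prop) (hd.analyticAt a), hord, Nat.cast_succ,
      add_comm, ENat.add_le_add_iff_left (by simp)] at ho
    obtain ⟨h, hh, he⟩ := ih hd ho
    refine ⟨h, hh, fun z => ?_⟩
    rw [hfactor, Pi.mul_apply, he]
    ring

lemma exists_eq_prod_pow_mul_of_le_analyticOrderAt {ι : Type*} (s : Finset ι) {a : ι → ℂ}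
    (ha : Set.InjOn a s) {f : ℂ → ℂ} (hf : Differentiable ℂ f) {τ : ℕ}
    (ho : ∀ i ∈ s, (τ : ℕ∞) ≤ analyticOrderAt f (a i)) :
    ∃ h : ℂ → ℂ, Differentiable ℂ h ∧ ∀ z, f z = (∏ i ∈ s, (z - a i)) ^ τ * h z := by
  classical
  induction s using Finset.induction_on generalizing f with
  | empty => exact ⟨f, hf, by simp⟩
  | insert i s hi ih =>
    obtain ⟨g, hg, hfg⟩ :=
      exists_eq_pow_mul_of_le_analyticOrderAt hf (ho i (Finset.mem_insert_self i s))
    obtain ⟨h, hh, hgh⟩ := ih (ha.mono (by simp)) hg fun j hj => by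
      have hne : a j - a i ≠ 0 := sub_ne_zero.2 fun hij =>
        hi (ha (by simp [hj]) (by simp) hij ▸ hj)
      have hzero : analyticOrderAt (fun z => (z - a i) ^ τ) (a j) = 0 :=
        (AnalyticAt.analyticOrderAt_eq_zero (by fun_prop)).2 (pow_ne_zero _ hne)
      have hj_ord := ho j (Finset.mem_insert_of_mem hj)
      rwa [show f = (fun z => (z - a i) ^ τ) * g from funext hfg,
        analyticOrderAt_mul (by fun_prop) (hg.analyticAt _), hzero, zero_add] at hj_ord
    refine ⟨h, hh, fun z => ?_⟩
    rw [hfg, hgh, Finset.prod_insert hi, mul_pow, mul_assoc]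

lemma norm_le_of_factorization {f g h : ℂ → ℂ} (hh : Differentiable ℂ h) {τ : ℕ}
    (hf : ∀ z, f z = g z ^ τ * h z) {R B ρ ρ' : ℝ} (hR : 0 < R) (hρ : 0 < ρ)
    (hB : ∀ z, ‖z‖ = R → ‖f z‖ ≤ B) (hg : ∀ z, ‖z‖ = R → ρ ≤ ‖g z‖) {x : ℂ} (hx : ‖x‖ ≤ R)
    (hgx : ‖g x‖ ≤ ρ') : ‖f x‖ ≤ B * (ρ' / ρ) ^ τ := by
  have hh_circle : ∀ z, ‖z‖ = R → ‖h z‖ ≤ B / ρ ^ τ := fun z hz => by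
    rw [le_div_iff₀ (by positivity)]
    calc ‖h z‖ * ρ ^ τ ≤ ‖h z‖ * ‖g z‖ ^ τ := by gcongr; exact hg z hz
      _ = ‖f z‖ := by rw [hf, norm_mul, norm_pow, mul_comm]
      _ ≤ B := hB z hz
  have hhx : ‖h x‖ ≤ B / ρ ^ τ := by
    refine norm_le_of_forall_mem_frontier_norm_le (U := Metric.ball 0 R) Metric.isBounded_ball
      hh.diffContOnCl (fun z hz => hh_circle z ?_) ?_
    · rw [frontier_ball _ hR.ne'] at hz
      simpa using hz
    · rw [closure_ball _ hR.ne']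
      simpa using hx
  have : 0 ≤ ρ' := (norm_nonneg _).trans hgx
  calc ‖f x‖ = ‖g x‖ ^ τ * ‖h x‖ := by rw [hf, norm_mul, norm_pow]
    _ ≤ ρ' ^ τ * (B / ρ ^ τ) := by gcongr
    _ = B * (ρ' / ρ) ^ τ := by rw [div_pow]; ring

lemma exists_eq_prod_sq_sub_sq_pow_mul (N : Finset ℝ) (hN : ∀ c ∈ N, 0 < c) {f : ℂ → ℂ}
    (hf : Differentiable ℂ f) {τ : ℕ}
    (ho : ∀ c ∈ N, (τ : ℕ∞) ≤ analyticOrderAt f c ∧ (τ : ℕ∞) ≤ analyticOrderAt f (-c)) :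
    ∃ h : ℂ → ℂ, Differentiable ℂ h ∧ ∀ z, f z = (∏ c ∈ N, (z ^ 2 - (c : ℂ) ^ 2)) ^ τ * h z := by
  let node : ℝ ⊕ ℝ → ℂ := Sum.elim (↑) fun c => -(c : ℂ)
  have hinj : Set.InjOn node (N.disjSum N) := by
    rintro (c | c) hc (d | d) hd hcd <;> simp only [Finset.mem_coe, Finset.inl_mem_disjSum,
      Finset.inr_mem_disjSum, node, Sum.elim_inl, Sum.elim_inr, neg_inj] at hc hd hcd <;>
      norm_cast at hcd
    · rw [hcd]
    · linarith [hN c hc, hN d hd]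
    · linarith [hN c hc, hN d hd]
    · rw [hcd]
  obtain ⟨h, hh, hfac⟩ := exists_eq_prod_pow_mul_of_le_analyticOrderAt (N.disjSum N) hinj hf
    (τ := τ) (by
      rintro (c | c) hc
      · exact (ho c (by simpa using hc)).1
      · exact (ho c (by simpa using hc)).2)
  refine ⟨h, hh, fun z => ?_⟩
  rw [hfac, Finset.prod_disjSum, ← Finset.prod_mul_distrib]
  congr 2
  exact Finset.prod_congr rfl fun c _ => by simp only [node, Sum.elim_inl, Sum.elim_inr]; ring

lemma norm_le_of_le_analyticOrderAt_symm_nodes (N : Finset ℝ) {S E B : ℝ} (hS : 0 < S)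
    (hE : 1 < E) (hN : ∀ c ∈ N, 0 < c ∧ c ≤ S) {f : ℂ → ℂ} (hf : Differentiable ℂ f) {τ : ℕ}
    (ho : ∀ c ∈ N, (τ : ℕ∞) ≤ analyticOrderAt f c ∧ (τ : ℕ∞) ≤ analyticOrderAt f (-c))
    (hB : ∀ z : ℂ, ‖z‖ = E * S → ‖f z‖ ≤ B) {x : ℝ} (hx : |x| ≤ S) :
    ‖f x‖ ≤ B * ((E ^ 2 - 1)⁻¹) ^ (N.card * τ) := by
  have hE2 : 0 < E ^ 2 - 1 := by nlinarith
  obtain ⟨h, hh, hfac⟩ := exists_eq_prod_sq_sub_sq_pow_mul N (fun c hc => (hN c hc).1) hf ho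
  have hcircle : ∀ z : ℂ, ‖z‖ = E * S →
      (S ^ 2 * (E ^ 2 - 1)) ^ N.card ≤ ‖∏ c ∈ N, (z ^ 2 - (c : ℂ) ^ 2)‖ := fun z hz => by
    rw [norm_prod, ← Finset.prod_const]
    refine Finset.prod_le_prod (fun c _ => by positivity) fun c hc => ?_
    have htri := norm_sub_norm_le (z ^ 2) ((c : ℂ) ^ 2)
    rw [norm_pow, norm_pow, hz, norm_real, Real.norm_of_nonneg (hN c hc).1.le] at htri
    nlinarith [hN c hc]
  have hxbound : ‖∏ c ∈ N, ((x : ℂ) ^ 2 - (c : ℂ) ^ 2)‖ ≤ (S ^ 2) ^ N.card := by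
    rw [norm_prod, ← Finset.prod_const]
    refine Finset.prod_le_prod (fun c _ => norm_nonneg _) fun c hc => ?_
    rw [← ofReal_pow, ← ofReal_pow, ← ofReal_sub, norm_real, Real.norm_eq_abs, abs_le]
    have := sq_le_sq.2 (hx.trans (le_abs_self S))
    constructor <;> nlinarith [hN c hc, sq_nonneg x, sq_nonneg c]
  refine (norm_le_of_factorization hh hfac (by positivity) (by positivity) hB hcircle
    (by rw [norm_real, Real.norm_eq_abs]; nlinarith) hxbound).trans_eq ?_
  rw [pow_mul, ← div_pow]
  congr 3
  field_simp

end EntireFunctions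

section Flattening

open Complex

/-- The frequencies `2πi(j - κ)` of the Fourier expansion of `(exp (πiy) - exp (-πiy)) ^ (2κ)`. -/
noncomputable def flatFreq (κ j : ℕ) : ℂ := 2 * Real.pi * I * ((j : ℂ) - κ)

/-- The Fourier coefficients of `(exp (πiy) - exp (-πiy)) ^ (2κ)`, normalized so that the constant
term is `1`. -/
noncomputable def flatCoeff (κ j : ℕ) : ℂ :=
  (Nat.choose (2 * κ) j : ℂ) * (-1) ^ j / ((Nat.choose (2 * κ) κ : ℂ) * (-1) ^ κ)

/-- The identity flattened at the integers: the antiderivative of the normalized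
`(exp (πiy) - exp (-πiy)) ^ (2κ)` which fixes every integer. Precomposing exponentials with it turns
values at integers into zeros of order `2κ`. -/
noncomputable def flatId (κ : ℕ) (y : ℂ) : ℂ :=
  y + ∑ j ∈ (Finset.range (2 * κ + 1)).erase κ,
    flatCoeff κ j * ((exp (flatFreq κ j * y) - 1) / flatFreq κ j)

lemma flatCoeff_denom_ne_zero (κ : ℕ) : (Nat.choose (2 * κ) κ : ℂ) * (-1) ^ κ ≠ 0 :=
  mul_ne_zero (Nat.cast_ne_zero.2 (Nat.choose_pos (by omega)).ne') (pow_ne_zero _ (by norm_num))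

lemma norm_flatCoeff_le_one (κ j : ℕ) : ‖flatCoeff κ j‖ ≤ 1 := by
  simp only [flatCoeff, norm_div, norm_mul, norm_pow, norm_neg, norm_one, one_pow, mul_one,
    Complex.norm_natCast]
  exact div_le_one_of_le₀ (mod_cast Nat.choose_le_centralBinom j κ) (Nat.cast_nonneg _)

lemma norm_flatFreq (κ j : ℕ) : ‖flatFreq κ j‖ = 2 * Real.pi * |(j : ℝ) - κ| := by
  rw [flatFreq, norm_mul, norm_mul, norm_mul, norm_I, norm_real, Real.norm_of_nonneg Real.pi_pos.le,
    norm_ofNat, mul_one, show (j : ℂ) - κ = ((j - κ : ℝ) : ℂ) by push_cast; ring, norm_real,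
    Real.norm_eq_abs]

lemma flatFreq_ne_zero {κ j : ℕ} (h : j ≠ κ) : flatFreq κ j ≠ 0 :=
  mul_ne_zero two_pi_I_ne_zero (sub_ne_zero.2 (Nat.cast_injective.ne h))

lemma exp_flatFreq_mul_intCast (κ j : ℕ) (k : ℤ) : exp (flatFreq κ j * k) = 1 :=
  exp_eq_one_iff.2 ⟨(j - κ) * k, by simp only [flatFreq]; push_cast; ring⟩

lemma sum_flatCoeff_mul_exp (κ : ℕ) (y : ℂ) :
    ∑ j ∈ Finset.range (2 * κ + 1), flatCoeff κ j * exp (flatFreq κ j * y) =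
      ((Nat.choose (2 * κ) κ : ℂ) * (-1) ^ κ)⁻¹ *
        (exp (Real.pi * I * y) - exp (-(Real.pi * I * y))) ^ (2 * κ) := by
  rw [sub_eq_add_neg, add_pow, Finset.mul_sum]
  refine Finset.sum_congr rfl fun j hj => ?_
  have hj : j ≤ 2 * κ := Nat.lt_succ_iff.1 (Finset.mem_range.1 hj)
  have hexp : exp (flatFreq κ j * y) =
      exp (j * (Real.pi * I * y)) * exp ((2 * κ - j : ℕ) * -(Real.pi * I * y)) := by
    rw [← exp_add, Nat.cast_sub hj, flatFreq]
    congr 1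
    push_cast
    ring
  have hsign : (-1 : ℂ) ^ (2 * κ - j) = (-1) ^ j := by
    rw [neg_one_pow_congr]
    rw [Nat.even_sub hj]
    simp
  rw [neg_pow (exp _), ← exp_nat_mul, ← exp_nat_mul, flatCoeff, hexp, hsign]
  ring

lemma differentiable_flatId (κ : ℕ) : Differentiable ℂ (flatId κ) := by
  unfold flatId
  fun_prop

lemma deriv_flatId (κ : ℕ) : deriv (flatId κ) =
    (fun _ => ((Nat.choose (2 * κ) κ : ℂ) * (-1) ^ κ)⁻¹) *
      (fun y => exp (Real.pi * I * y) - exp (-(Real.pi * I * y))) ^ (2 * κ) := by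
  funext y
  have hterm : ∀ j ∈ (Finset.range (2 * κ + 1)).erase κ,
      HasDerivAt (fun y => flatCoeff κ j * ((exp (flatFreq κ j * y) - 1) / flatFreq κ j))
        (flatCoeff κ j * exp (flatFreq κ j * y)) y := fun j hj => by
    have hne := flatFreq_ne_zero (Finset.ne_of_mem_erase hj)
    have h : HasDerivAt (fun y => flatCoeff κ j * ((exp (flatFreq κ j * y) - 1) / flatFreq κ j))
        (flatCoeff κ j * (exp (flatFreq κ j * y) * (flatFreq κ j * 1) / flatFreq κ j)) y :=
      (((((hasDerivAt_id y).const_mul _).cexp.sub_const 1).div_const _).const_mul _)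
    rwa [mul_one, mul_div_cancel_right₀ _ hne] at h
  have hκ : flatCoeff κ κ * exp (flatFreq κ κ * y) = 1 := by
    rw [flatCoeff, div_self (flatCoeff_denom_ne_zero κ), flatFreq, sub_self, mul_zero, zero_mul,
      exp_zero, one_mul]
  refine ((hasDerivAt_id y).add (HasDerivAt.fun_sum hterm)).deriv.trans ?_
  rw [Pi.mul_apply, Pi.pow_apply, ← sum_flatCoeff_mul_exp, ← hκ]
  exact Finset.add_sum_erase _ (fun j => flatCoeff κ j * exp (flatFreq κ j * y))
    (Finset.mem_range.2 (by omega))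

lemma flatId_intCast (κ : ℕ) (k : ℤ) : flatId κ k = k := by
  simp only [flatId, exp_flatFreq_mul_intCast, sub_self, zero_div, mul_zero, Finset.sum_const_zero,
    add_zero]

lemma le_analyticOrderAt_flatId_sub (κ : ℕ) (k : ℤ) :
    ((2 * κ : ℕ) : ℕ∞) ≤ analyticOrderAt (fun y => flatId κ y - k) k := by
  have hsine : AnalyticAt ℂ (fun y : ℂ => exp (Real.pi * I * y) - exp (-(Real.pi * I * y))) k := by
    fun_prop
  have hzero : analyticOrderAt (fun y : ℂ => exp (Real.pi * I * y) - exp (-(Real.pi * I * y))) k ≠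
      0 := by
    rw [hsine.analyticOrderAt_ne_zero, sub_eq_zero, exp_eq_exp_iff_exists_int]
    exact ⟨k, by ring⟩
  have hord := ((differentiable_flatId κ).analyticAt (k : ℂ)).analyticOrderAt_deriv_add_one
  rw [flatId_intCast, deriv_flatId, analyticOrderAt_mul (by fun_prop) (hsine.pow _),
    analyticOrderAt_pow hsine] at hord
  rw [← hord, nsmul_eq_mul, add_assoc, add_left_comm]
  exact (le_mul_of_one_le_right zero_le (Order.one_le_iff_ne_zero.2 hzero)).trans le_self_add

lemma norm_flatId_le (κ : ℕ) (y : ℂ) :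
    ‖flatId κ y‖ ≤ ‖y‖ + 2 * κ * Real.exp (2 * Real.pi * κ * ‖y‖) := by
  have hterm : ∀ j ∈ (Finset.range (2 * κ + 1)).erase κ,
      ‖flatCoeff κ j * ((exp (flatFreq κ j * y) - 1) / flatFreq κ j)‖ ≤
        Real.exp (2 * Real.pi * κ * ‖y‖) := fun j hj => by
    obtain ⟨hjκ, hj⟩ := Finset.mem_erase.1 hj
    have hj : (j : ℝ) ≤ 2 * κ := mod_cast Nat.lt_succ_iff.1 (Finset.mem_range.1 hj)
    have hone : (1 : ℤ) ≤ |(j : ℤ) - κ| := Int.one_le_abs (by omega)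
    have hone : (1 : ℝ) ≤ |(j : ℝ) - κ| := mod_cast hone
    have habs : |(j : ℝ) - κ| ≤ κ := abs_le.2 ⟨by linarith [j.cast_nonneg (α := ℝ)], by linarith⟩
    have hfreq : 2 ≤ ‖flatFreq κ j‖ := by
      rw [norm_flatFreq]
      nlinarith [Real.pi_gt_three]
    have hexp : ‖exp (flatFreq κ j * y)‖ ≤ Real.exp (2 * Real.pi * κ * ‖y‖) := by
      refine (norm_exp_le_exp_norm _).trans ?_
      rw [norm_mul, norm_flatFreq]
      gcongr
    have hexp_sub : ‖exp (flatFreq κ j * y) - 1‖ ≤ 2 * Real.exp (2 * Real.pi * κ * ‖y‖) := by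
      have := Real.one_le_exp (show 0 ≤ 2 * Real.pi * κ * ‖y‖ by positivity)
      linarith [norm_sub_le (exp (flatFreq κ j * y)) 1, norm_one (α := ℂ)]
    calc _ = ‖flatCoeff κ j‖ * (‖exp (flatFreq κ j * y) - 1‖ / ‖flatFreq κ j‖) := by
          rw [norm_mul, norm_div]
      _ ≤ 1 * (2 * Real.exp (2 * Real.pi * κ * ‖y‖) / 2) := by
          gcongr
          exact norm_flatCoeff_le_one κ j
      _ = _ := by ring
  have hcard : ((Finset.range (2 * κ + 1)).erase κ).card = 2 * κ := by
    rw [Finset.card_erase_of_mem (Finset.mem_range.2 (by omega)), Finset.card_range]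
    rfl
  refine (norm_add_le _ _).trans (add_le_add_right ((norm_sum_le_of_le _ hterm).trans_eq ?_) _)
  rw [Finset.sum_const, hcard, nsmul_eq_mul]
  push_cast
  ring

/-- The identity flattened at the points `s / G` with `s` an odd integer. -/
noncomputable def oddFlatId (κ G : ℕ) (z : ℂ) : ℂ := (1 + 2 * flatId κ ((G * z - 1) / 2)) / G

lemma differentiable_oddFlatId (κ G : ℕ) : Differentiable ℂ (oddFlatId κ G) := by
  have := differentiable_flatId κ
  unfold oddFlatId
  fun_prop

lemma mul_odd_div_sub_one_div_two {G : ℕ} (hG : G ≠ 0) (k : ℤ) :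
    ((G : ℂ) * (((2 * k + 1 : ℤ) : ℂ) / G) - 1) / 2 = k := by
  have : (G : ℂ) ≠ 0 := mod_cast hG
  push_cast
  field_simp
  ring

lemma oddFlatId_odd_div (κ : ℕ) {G : ℕ} (hG : G ≠ 0) {s : ℤ} (hs : Odd s) :
    oddFlatId κ G (s / G) = s / G := by
  obtain ⟨k, rfl⟩ := hs
  rw [oddFlatId, mul_odd_div_sub_one_div_two hG, flatId_intCast]
  push_cast
  ring

lemma le_analyticOrderAt_oddFlatId_sub (κ : ℕ) {G : ℕ} (hG : G ≠ 0) {s : ℤ} (hs : Odd s) :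
    ((2 * κ : ℕ) : ℕ∞) ≤ analyticOrderAt (fun z => oddFlatId κ G z - (s : ℂ) / G) (s / G) := by
  obtain ⟨k, rfl⟩ := hs
  set z₀ : ℂ := ((2 * k + 1 : ℤ) : ℂ) / G with hz₀
  have hz₀k : ((G : ℂ) * z₀ - 1) / 2 = k := mul_odd_div_sub_one_div_two hG k
  have hcomp : (fun z => oddFlatId κ G z - z₀) =
      (fun _ => (2 / G : ℂ)) * ((fun y => flatId κ y - k) ∘ fun z : ℂ => (G * z - 1) / 2) := by
    funext z
    simp only [Pi.mul_apply, Function.comp_apply, hz₀, oddFlatId]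
    push_cast
    ring
  have haff : AnalyticAt ℂ (fun z : ℂ => (G * z - 1) / 2) z₀ := by fun_prop
  have hderiv : deriv (fun z : ℂ => (G * z - 1) / 2) z₀ ≠ 0 := by
    have : HasDerivAt (fun z : ℂ => (G * z - 1) / 2) (G * 1 / 2) z₀ :=
      (((hasDerivAt_id z₀).const_mul (G : ℂ)).sub_const 1).div_const 2
    rw [this.deriv]
    simpa using hG
  rw [hcomp, analyticOrderAt_mul (by fun_prop)
    ((((differentiable_flatId κ).sub_const (k : ℂ)).analyticAt _).comp haff),
    analyticOrderAt_comp_of_deriv_ne_zero haff hderiv, hz₀k]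
  exact (le_analyticOrderAt_flatId_sub κ k).trans le_add_self

lemma norm_oddFlatId_le (κ : ℕ) {G : ℕ} (hG : G ≠ 0) (z : ℂ) :
    ‖oddFlatId κ G z‖ ≤ 2 + G * ‖z‖ + 4 * κ * Real.exp (Real.pi * κ * (G * ‖z‖ + 1)) := by
  have hy : ‖((G : ℂ) * z - 1) / 2‖ ≤ (G * ‖z‖ + 1) / 2 := by
    rw [norm_div, norm_ofNat]
    gcongr
    exact (norm_sub_le _ _).trans_eq (by simp)
  have hG1 : (1 : ℝ) ≤ G := mod_cast Nat.one_le_iff_ne_zero.2 hG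
  calc ‖oddFlatId κ G z‖ ≤ ‖1 + 2 * flatId κ ((G * z - 1) / 2)‖ := by
        rw [oddFlatId, norm_div, Complex.norm_natCast]
        exact div_le_self (norm_nonneg _) hG1
    _ ≤ 1 + 2 * ‖flatId κ ((G * z - 1) / 2)‖ := (norm_add_le _ _).trans_eq (by simp)
    _ ≤ 1 + 2 * ((G * ‖z‖ + 1) / 2 +
          2 * κ * Real.exp (2 * Real.pi * κ * ((G * ‖z‖ + 1) / 2))) := by
        gcongr
        exact (norm_flatId_le κ _).trans (by gcongr)
    _ = 2 + G * ‖z‖ + 4 * κ * Real.exp (Real.pi * κ * (G * ‖z‖ + 1)) := by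
        rw [show 2 * Real.pi * κ * ((G * ‖z‖ + 1) / 2) = Real.pi * κ * (G * ‖z‖ + 1) by ring]
        ring

end Flattening

/-! ### Siegel's lemma and the Liouville inequality -/

section Siegel

variable {ι κ X : Type*} [Fintype ι] [Fintype κ] [Fintype X]

lemma exists_ne_forall_abs_sub_mul_lt (f : X → κ → ℝ) (c : κ → ℝ) {D : ℝ} (hD : 0 < D) {ℓ : ℕ}
    (hℓ : 0 < ℓ) (hf : ∀ x k, f x k ∈ Set.Ico (c k) (c k + D))
    (hcard : ℓ ^ Fintype.card κ < Fintype.card X) :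
    ∃ x y, x ≠ y ∧ ∀ k, |f x k - f y k| * ℓ < D := by
  have hℓ' : (0 : ℝ) < ℓ := mod_cast hℓ
  have hnonneg (x k) : 0 ≤ (f x k - c k) / D * ℓ := by
    have := sub_nonneg.2 (hf x k).1
    positivity
  have hbox (x k) : ⌊(f x k - c k) / D * ℓ⌋₊ < ℓ := by
    rw [Nat.floor_lt (hnonneg x k)]
    exact mul_lt_of_lt_one_left hℓ' ((div_lt_one hD).2 (sub_lt_iff_lt_add'.2 (hf x k).2))
  classical
  obtain ⟨x, y, hxy, heq⟩ := Fintype.exists_ne_map_eq_of_card_lt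
    (fun x k => (⟨_, hbox x k⟩ : Fin ℓ)) (by simpa using hcard)
  refine ⟨x, y, hxy, fun k => ?_⟩
  have hfloor : ⌊(f x k - c k) / D * ℓ⌋ = ⌊(f y k - c k) / D * ℓ⌋ := by
    rw [← Int.natCast_floor_eq_floor (hnonneg x k), ← Int.natCast_floor_eq_floor (hnonneg y k)]
    exact congrArg _ (Fin.mk.inj_iff.1 (congrFun heq k))
  have hlt := Int.abs_sub_lt_one_of_floor_eq_floor hfloor
  rw [← sub_mul, ← sub_div, sub_sub_sub_cancel_right, abs_mul, abs_div, abs_of_pos hD,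
    abs_of_pos hℓ', div_mul_eq_mul_div, div_lt_one hD] at hlt
  exact hlt

/-- Siegel's lemma for real linear forms. -/
lemma exists_int_vec_abs_sum_mul_le (a : κ → ι → ℝ) {A : ℝ} (hA : 0 < A)
    (ha : ∀ k i, |a k i| ≤ A) {Y r : ℕ} (hY : 2 ≤ Y)
    (hcard : r * Fintype.card κ < Fintype.card ι) :
    ∃ p : ι → ℤ, p ≠ 0 ∧ (∀ i, |p i| ≤ Y) ∧
      ∀ k, |∑ i, (p i : ℝ) * a k i| * (Y : ℝ) ^ r ≤ Fintype.card ι * A * Y := by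
  classical
  have : (0 : ℝ) < Y := mod_cast (by omega : 0 < Y)
  have hι : Nonempty ι := Fintype.card_pos_iff.1 (by omega)
  have hbox (q : ι → Fin Y) (k : κ) : ∑ i, ((q i : ℕ) : ℝ) * a k i ∈
      Set.Ico (∑ i, ((Y : ℝ) - 1) * min (a k i) 0)
        (∑ i, ((Y : ℝ) - 1) * min (a k i) 0 + Fintype.card ι * A * Y) := by
    have hq (i) : ((q i : ℕ) : ℝ) + 1 ≤ Y := mod_cast (q i).2
    have hq0 (i) : (0 : ℝ) ≤ (q i : ℕ) := Nat.cast_nonneg _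
    have hDsum : Fintype.card ι * A * Y = ∑ _i : ι, A * Y := by
      rw [Finset.sum_const, Finset.card_univ, nsmul_eq_mul, mul_assoc]
    rw [hDsum, ← Finset.sum_add_distrib]
    refine ⟨Finset.sum_le_sum fun i _ => ?_,
      Finset.sum_lt_sum_of_nonempty Finset.univ_nonempty fun i _ => ?_⟩ <;>
    rcases le_total (a k i) 0 with h | h <;>
    simp only [min_eq_left, min_eq_right, h] <;>
    nlinarith [hq i, hq0 i, abs_le.1 (ha k i)]
  obtain ⟨q, q', hne, hq⟩ := exists_ne_forall_abs_sub_mul_lt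
    (fun (q : ι → Fin Y) (k : κ) => ∑ i, ((q i : ℕ) : ℝ) * a k i) _
    (by positivity : 0 < Fintype.card ι * A * Y) (ℓ := Y ^ r) (by positivity) hbox (by
      rw [Fintype.card_fun, Fintype.card_fin, ← pow_mul]
      exact Nat.pow_lt_pow_right (by omega) hcard)
  refine ⟨fun i => (q i : ℤ) - q' i, fun h => hne ?_, fun i => ?_, fun k => ?_⟩
  · exact funext fun i => Fin.ext (by simpa [sub_eq_zero] using congrFun h i)
  · have := (q i).2
    have := (q' i).2
    dsimp only
    exact abs_le.2 ⟨by omega, by omega⟩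
  · refine le_trans (le_of_eq ?_) (hq k).le
    push_cast
    simp only [sub_mul, Finset.sum_sub_distrib]

end Siegel

section LiouvilleInequality

/-- The norm of a nonzero algebraic integer is a nonzero rational integer. -/
lemma one_le_norm_mul_pow {F : Type*} [Field F] [NumberField F] (σ₀ : F →+* ℂ) {x : F}
    (hx : IsIntegral ℤ x) (hx0 : x ≠ 0) {B : ℝ} (hB : ∀ σ : F →+* ℂ, ‖σ x‖ ≤ B) :
    1 ≤ ‖σ₀ x‖ * B ^ (Module.finrank ℚ F - 1) := by
  classical
  obtain ⟨n, hn⟩ := IsIntegrallyClosed.isIntegral_iff.1 (Algebra.isIntegral_norm ℚ hx)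
  have hn0 : n ≠ 0 := by
    rintro rfl
    exact hx0 (Algebra.norm_eq_zero_iff.1 (by rw [← hn, map_zero]))
  have hone : (1 : ℝ) ≤ ‖algebraMap ℚ ℂ (Algebra.norm ℚ x)‖ := by
    rw [← hn, eq_intCast, map_intCast, Complex.norm_intCast]
    exact_mod_cast Int.one_le_abs hn0
  rw [Algebra.norm_eq_prod_embeddings, norm_prod,
    ← Finset.mul_prod_erase _ _ (Finset.mem_univ σ₀.toRatAlgHom)] at hone
  refine hone.trans (mul_le_mul_of_nonneg_left ?_ (norm_nonneg _))
  calc ∏ σ ∈ Finset.univ.erase σ₀.toRatAlgHom, ‖σ x‖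
      ≤ ∏ _σ ∈ Finset.univ.erase σ₀.toRatAlgHom, B :=
        Finset.prod_le_prod (fun _ _ => norm_nonneg _) fun σ _ => hB σ
    _ = B ^ (Module.finrank ℚ F - 1) := by
        rw [Finset.prod_const, Finset.card_erase_of_mem (Finset.mem_univ _), Finset.card_univ,
          AlgHom.card]

lemma one_le_norm_sum_mul {F : Type*} [Field F] [NumberField F] (σ₀ : F →+* ℂ) {ι : Type*}
    {U : Finset ι} {C : ι → ℤ} {y : ι → F} {m : F} (hm : m ≠ 0)
    (hint : ∀ i ∈ U, IsIntegral ℤ (m * y i)) {R : ℝ} (hR : 1 ≤ R)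
    (hσ : ∀ σ : F →+* ℂ, ∀ i ∈ U, ‖σ (m * y i)‖ ≤ R) {A : ℝ} (hA : 1 ≤ A)
    (hC : ∑ i ∈ U, |(C i : ℝ)| ≤ A) {d : ℕ} (hd : Module.finrank ℚ F ≤ d)
    (hne : ∑ i ∈ U, C i * y i ≠ 0) :
    1 ≤ ‖σ₀ (∑ i ∈ U, C i * y i)‖ * ‖σ₀ m‖ * (A * R) ^ (d - 1) := by
  have hsum : m * ∑ i ∈ U, C i * y i = ∑ i ∈ U, C i * (m * y i) := by
    rw [Finset.mul_sum]
    exact Finset.sum_congr rfl fun i _ => mul_left_comm _ _ _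
  have hbound (σ : F →+* ℂ) : ‖σ (m * ∑ i ∈ U, C i * y i)‖ ≤ A * R := by
    rw [hsum, map_sum]
    calc ‖∑ i ∈ U, σ (C i * (m * y i))‖ ≤ ∑ i ∈ U, |(C i : ℝ)| * R :=
          norm_sum_le_of_le _ fun i hi => by
            rw [map_mul, norm_mul, map_intCast, Complex.norm_intCast]
            exact mul_le_mul_of_nonneg_left (hσ σ i hi) (abs_nonneg _)
      _ ≤ A * R := by
          rw [← Finset.sum_mul]
          exact mul_le_mul_of_nonneg_right hC (by linarith)
  have hintegral : IsIntegral ℤ (m * ∑ i ∈ U, C i * y i) := by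
    rw [hsum]
    exact IsIntegral.sum _ fun i hi => (isIntegral_algebraMap (x := C i)).mul (hint i hi)
  have h := one_le_norm_mul_pow σ₀ hintegral (mul_ne_zero hm hne) hbound
  rw [map_mul, norm_mul, mul_comm ‖σ₀ m‖] at h
  refine h.trans (mul_le_mul_of_nonneg_left ?_ (by positivity))
  exact pow_le_pow_right₀ (one_le_mul_of_one_le_of_one_le hA hR) (by omega)

end LiouvilleInequality

section RadicalExtension

open IntermediateField Polynomial

variable {K L : Type*} [Field K] [Field L] [Algebra K L]

lemma finrank_restrictScalars_adjoin_le_of_pow_mem (E : IntermediateField K L)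
    [FiniteDimensional K E] {N : ℕ} (hN : N ≠ 0) {b : L} (hb : b ^ N ∈ E) :
    FiniteDimensional K (E⟮b⟯.restrictScalars K) ∧
      Module.finrank K (E⟮b⟯.restrictScalars K) ≤ Module.finrank K E * N := by
  have hmonic : (X ^ N - Polynomial.C (⟨b ^ N, hb⟩ : E)).Monic := monic_X_pow_sub_C _ hN
  have haeval : aeval b (X ^ N - Polynomial.C (⟨b ^ N, hb⟩ : E)) = 0 := by
    simp [IntermediateField.algebraMap_apply]
  have hint : IsIntegral E b := ⟨_, hmonic, haeval⟩
  have : FiniteDimensional E E⟮b⟯ := adjoin.finiteDimensional hint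
  have : Module.Free E E⟮b⟯ := Module.Free.of_divisionRing _ _
  refine ⟨FiniteDimensional.trans K E E⟮b⟯, ?_⟩
  calc Module.finrank K E⟮b⟯ = Module.finrank K E * Module.finrank E E⟮b⟯ :=
        (Module.finrank_mul_finrank K E E⟮b⟯).symm
    _ ≤ Module.finrank K E * N := by
        gcongr
        rw [adjoin.finrank hint, ← natDegree_X_pow_sub_C (n := N) (r := (⟨b ^ N, hb⟩ : E))]
        exact natDegree_le_of_dvd (minpoly.dvd E b haeval) hmonic.ne_zero

lemma exists_finrank_le_mul_pow_of_pow_mem (E : IntermediateField K L) [FiniteDimensional K E]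
    {N : ℕ} (hN : N ≠ 0) {J : Type*} (S : Finset J) {b : J → L} (hb : ∀ j, b j ^ N ∈ E) :
    ∃ F : IntermediateField K L, E ≤ F ∧ (∀ j ∈ S, b j ∈ F) ∧ FiniteDimensional K F ∧
      Module.finrank K F ≤ Module.finrank K E * N ^ S.card := by
  classical
  induction S using Finset.induction_on with
  | empty => exact ⟨E, le_rfl, by simp, ‹_›, by simp⟩
  | insert j S hj ih =>
    obtain ⟨F, hEF, hF, _, hfinrank⟩ := ih
    obtain ⟨hfin, hle⟩ := finrank_restrictScalars_adjoin_le_of_pow_mem F hN (hEF (hb j))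
    have hFF : F ≤ F⟮b j⟯.restrictScalars K := fun x hx => F⟮b j⟯.algebraMap_mem ⟨x, hx⟩
    refine ⟨F⟮b j⟯.restrictScalars K, hEF.trans hFF,
      Finset.forall_mem_insert _ _ _ |>.2 ⟨mem_adjoin_simple_self F _, fun i hi => hFF (hF i hi)⟩,
      hfin, hle.trans ?_⟩
    rw [Finset.card_insert_of_notMem hj, pow_succ, ← mul_assoc]
    gcongr

end RadicalExtension

section BinetConjugates

/-- The relations satisfied by `binetBase ω` and by all its conjugates. -/
structure IsBinetConjugate {K : Type*} [Field K] (g : Fin 3 → K) : Prop where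
  golden : g 0 ^ 2 = g 0 + 1
  trib : g 1 ^ 3 - g 1 ^ 2 - g 1 - 1 = 0
  denom : 5 * g 2 ^ 2 = tribDenom (g 1) ^ 2

namespace IsBinetConjugate

lemma comp_ringHom {K K' : Type*} [Field K] [Field K'] {g : Fin 3 → K} (hg : IsBinetConjugate g)
    (σ : K →+* K') : IsBinetConjugate (σ ∘ g) where
  golden := by simpa using congrArg σ hg.golden
  trib := by simpa using congrArg σ hg.trib
  denom := by simpa [tribDenom, map_ofNat σ] using congrArg σ hg.denom

lemma of_comp_ringHom {K K' : Type*} [Field K] [Field K'] {g : Fin 3 → K} (σ : K →+* K')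
    (hg : IsBinetConjugate (σ ∘ g)) : IsBinetConjugate g where
  golden := σ.injective (by simpa using hg.golden)
  trib := σ.injective (by simpa using hg.trib)
  denom := σ.injective (by simpa [tribDenom, map_ofNat σ] using hg.denom)

variable {K : Type*} [Field K] {g : Fin 3 → K} (hg : IsBinetConjugate g)
include hg

lemma tribDenom_pow_three : tribDenom (g 1) ^ 3 = 44 - 2 * tribDenom (g 1) ^ 2 := by
  simp only [tribDenom]
  linear_combination (-g 1 ^ 3 + 11 * g 1 ^ 2 - 39 * g 1 + 43) * hg.trib

lemma ne_zero [CharZero K] (j : Fin 3) : g j ≠ 0 := by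
  intro h
  fin_cases j
  · simpa [show g 0 = 0 from h] using hg.golden
  · simpa [show g 1 = 0 from h] using hg.trib
  · have hδ : tribDenom (g 1) = 0 := (pow_eq_zero_iff two_ne_zero).1 <| by
      rw [← hg.denom, show g 2 = 0 from h, zero_pow two_ne_zero, mul_zero]
    simpa [hδ] using hg.tribDenom_pow_three

lemma isIntegral_golden : IsIntegral ℤ (g 0) :=
  ⟨.X ^ 2 - .X - 1, by monicity!, by simpa [sub_sub, sub_eq_zero] using hg.golden⟩

lemma isIntegral_trib : IsIntegral ℤ (g 1) :=
  ⟨.X ^ 3 - .X ^ 2 - .X - 1, by monicity!, by simpa using hg.trib⟩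

lemma isIntegral_five_pow_mul {M k : ℕ} (hk : k ≤ 2 * M) : IsIntegral ℤ (5 ^ M * g 2 ^ k) := by
  have hint (n : ℕ) : IsIntegral ℤ (n : K) := by
    simpa using isIntegral_algebraMap (A := K) (x := (n : ℤ))
  have hδ : IsIntegral ℤ (tribDenom (g 1)) :=
    ((hg.isIntegral_trib.pow 2).neg.add ((hint 4).mul hg.isIntegral_trib)).sub isIntegral_one
  refine .of_pow two_pos ?_
  have hsq : (5 ^ M * g 2 ^ k) ^ 2 = ((5 : ℕ) : K) ^ (2 * M - k) * (tribDenom (g 1) ^ 2) ^ k := by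
    rw [← hg.denom, Nat.cast_ofNat, mul_pow 5 (g 2 ^ 2), ← mul_assoc, pow_sub_mul_pow _ hk]
    ring
  rw [hsq]
  exact ((hint 5).pow _).mul ((hδ.pow 2).pow k)

lemma scaled_prod_zpow_eq [CharZero K] {M : ℕ} {e : Fin 3 → ℤ} (he : |e 2| ≤ M) :
    (5 * g 2) ^ M * ∏ j, g j ^ e j =
      g 0 ^ e 0 * g 1 ^ e 1 * (5 ^ M * g 2 ^ (M + e 2).toNat) := by
  rw [← zpow_natCast (g 2), Int.toNat_of_nonneg (by linarith [neg_abs_le (e 2)]),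
    zpow_add₀ (hg.ne_zero 2), zpow_natCast, Fin.prod_univ_three]
  ring

lemma isIntegral_scaled_prod_zpow [CharZero K] {M : ℕ} {e : Fin 3 → ℤ} (he : |e 2| ≤ M) :
    IsIntegral ℤ ((5 * g 2) ^ M * ∏ j, g j ^ e j) := by
  have hzpow {x : K} (hx : IsIntegral ℤ x) (hx' : IsIntegral ℤ x⁻¹) (n : ℤ) :
      IsIntegral ℤ (x ^ n) := by
    obtain ⟨n, rfl | rfl⟩ := n.eq_nat_or_neg
    · simpa only [zpow_natCast] using hx.pow n
    · simpa only [zpow_neg, zpow_natCast, inv_pow] using hx'.pow n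
  have hinv₀ : (g 0)⁻¹ = g 0 - 1 := by
    field_simp [hg.ne_zero 0]
    linear_combination -hg.golden
  have hinv₁ : (g 1)⁻¹ = g 1 ^ 2 - g 1 - 1 := by
    field_simp [hg.ne_zero 1]
    linear_combination -hg.trib
  rw [hg.scaled_prod_zpow_eq he]
  refine ((hzpow hg.isIntegral_golden ?_ _).mul (hzpow hg.isIntegral_trib ?_ _)).mul
    (hg.isIntegral_five_pow_mul (Int.toNat_le.2 (by push_cast; linarith [le_abs_self (e 2)])))
  · rw [hinv₀]
    exact hg.isIntegral_golden.sub isIntegral_one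
  · rw [hinv₁]
    exact ((hg.isIntegral_trib.pow 2).sub hg.isIntegral_trib).sub isIntegral_one

end IsBinetConjugate

namespace IsBinetConjugate

variable {g : Fin 3 → ℂ} (hg : IsBinetConjugate g)
include hg

lemma norm_golden_le : ‖g 0‖ ≤ 1.6181 ∧ ‖(g 0)⁻¹‖ ≤ 1.6181 := by
  have hle {r : ℝ} (hr : 0 ≤ r) (h : r ^ 2 ≤ r + 1) : r ≤ 1.6181 := by
    by_contra! hlt
    nlinarith
  have hinv : (g 0)⁻¹ ^ 2 = 1 - (g 0)⁻¹ := by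
    field_simp [hg.ne_zero 0]
    linear_combination -hg.golden
  refine ⟨hle (norm_nonneg _) ?_, hle (norm_nonneg _) ?_⟩
  · rw [← norm_pow, hg.golden]
    exact (norm_add_le _ _).trans_eq (by rw [norm_one])
  · rw [← norm_pow, hinv]
    exact (norm_sub_le _ _).trans_eq (by rw [norm_one, add_comm])

lemma norm_trib_le : ‖g 1‖ ≤ 1.84 ∧ ‖(g 1)⁻¹‖ ≤ 1.84 := by
  have hle {r : ℝ} (hr : 0 ≤ r) (h : r ^ 3 ≤ r ^ 2 + r + 1) : r ≤ 1.84 := by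
    by_contra! hlt
    nlinarith [mul_pos (sub_pos.2 hlt) (sub_pos.2 hlt)]
  have hcube : g 1 ^ 3 = g 1 ^ 2 + g 1 + 1 := by linear_combination hg.trib
  have hinv : (g 1)⁻¹ ^ 3 = 1 - (g 1)⁻¹ - (g 1)⁻¹ ^ 2 := by
    field_simp [hg.ne_zero 1]
    linear_combination -hg.trib
  refine ⟨hle (norm_nonneg _) ?_, hle (norm_nonneg _) ?_⟩
  · rw [← norm_pow, ← norm_pow, hcube]
    exact norm_add₃_le.trans_eq (by rw [norm_one])
  · have h := norm_sub_le (1 - (g 1)⁻¹) ((g 1)⁻¹ ^ 2)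
    have h' := norm_sub_le 1 (g 1)⁻¹
    rw [norm_one] at h'
    rw [← norm_pow, ← norm_pow, hinv]
    linarith

lemma norm_denom_le : ‖g 2‖ ≤ 1.95 := by
  have hδ : ‖tribDenom (g 1)‖ ≤ 4.36 := by
    have h : ‖tribDenom (g 1)‖ ^ 3 ≤ 44 + 2 * ‖tribDenom (g 1)‖ ^ 2 := by
      rw [← norm_pow, hg.tribDenom_pow_three]
      exact (norm_sub_le _ _).trans_eq (by simp)
    by_contra! hlt
    nlinarith [mul_pos (sub_pos.2 hlt) (sub_pos.2 hlt)]
  have h : 5 * ‖g 2‖ ^ 2 = ‖tribDenom (g 1)‖ ^ 2 := by simpa using congrArg norm hg.denom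
  by_contra! hlt
  nlinarith [norm_nonneg (tribDenom (g 1))]

lemma norm_scaled_prod_zpow_le {M : ℕ} {e : Fin 3 → ℤ} (he : ∀ j, |e j| ≤ M) :
    ‖(5 * g 2) ^ M * ∏ j, g j ^ e j‖ ≤ Real.exp 4.06 ^ M := by
  have hzpow {z : ℂ} {ρ : ℝ} (hρ : 1 ≤ ρ) (hz : ‖z‖ ≤ ρ ∧ ‖z⁻¹‖ ≤ ρ) {n : ℤ} (hn : |n| ≤ M) :
      ‖z ^ n‖ ≤ ρ ^ M := by
    obtain ⟨n, rfl | rfl⟩ := n.eq_nat_or_neg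
    · rw [zpow_natCast, norm_pow]
      exact (pow_le_pow_left₀ (norm_nonneg _) hz.1 n).trans
        (pow_le_pow_right₀ hρ (by simpa using hn))
    · rw [zpow_neg, ← inv_zpow, zpow_natCast, norm_pow]
      exact (pow_le_pow_left₀ (norm_nonneg _) hz.2 n).trans
        (pow_le_pow_right₀ hρ (by simpa using hn))
  have hexp : (57.5 : ℝ) ≤ Real.exp 4.06 := by
    rw [show (4.06 : ℝ) = (4 : ℕ) * 1 + 0.06 by norm_num, Real.exp_add, Real.exp_nat_mul]
    have : (2.7182818283 : ℝ) ^ 4 ≤ Real.exp 1 ^ 4 := by gcongr; exact Real.exp_one_gt_d9.le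
    nlinarith [Real.add_one_le_exp 0.06]
  have htoNat : (M + e 2).toNat ≤ 2 * M :=
    Int.toNat_le.2 (by push_cast; linarith [le_abs_self (e 2), he 2])
  rw [hg.scaled_prod_zpow_eq (he 2), norm_mul, norm_mul, norm_mul, norm_pow, norm_pow,
    Complex.norm_ofNat]
  calc _ ≤ (1.6181 : ℝ) ^ M * 1.84 ^ M * (5 ^ M * 1.95 ^ (2 * M)) := by
        gcongr
        · exact hzpow (by norm_num) hg.norm_golden_le (he 0)
        · exact hzpow (by norm_num) hg.norm_trib_le (he 1)
        · exact (pow_le_pow_left₀ (norm_nonneg _) hg.norm_denom_le _).trans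
            (pow_le_pow_right₀ (by norm_num) htoNat)
    _ = (1.6181 * 1.84 * (5 * 1.95 ^ 2)) ^ M := by rw [pow_mul, ← mul_pow, ← mul_pow, ← mul_pow]
    _ ≤ Real.exp 4.06 ^ M := pow_le_pow_left₀ (by norm_num) (by linarith) _

end IsBinetConjugate

open IntermediateField

lemma isBinetConjugate_binetBase {ω : ℝ} (hω : ω ^ 3 - ω ^ 2 - ω - 1 = 0) :
    IsBinetConjugate (binetBase ω) where
  golden := Real.goldenRatio_sq
  trib := hω
  denom := by
    simp only [binetBase, Matrix.cons_val, div_pow, Real.sq_sqrt (Nat.ofNat_nonneg 5)]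
    ring

lemma exists_finrank_le_of_pow_eq_binetBase {ω : ℝ} (hω : ω ^ 3 - ω ^ 2 - ω - 1 = 0) {N : ℕ}
    (hN : N ≠ 0) {β : Fin 3 → ℝ} (hβ : ∀ j, β j ^ N = binetBase ω j) :
    ∃ F : IntermediateField ℚ ℝ, (∀ j, β j ∈ F) ∧ FiniteDimensional ℚ F ∧
      Module.finrank ℚ F ≤ 6 * N ^ 3 := by
  have : FiniteDimensional ℚ ℚ⟮ω⟯ := adjoin.finiteDimensional (isIntegral_tribRoot hω).tower_top
  have hbase := finrank_restrictScalars_adjoin_le_of_pow_mem ℚ⟮ω⟯ two_ne_zero (sqrt_five_sq_mem _)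
  have : FiniteDimensional ℚ (ℚ⟮ω⟯⟮√5⟯.restrictScalars ℚ) := hbase.1
  obtain ⟨F, -, hβF, hfin, hF⟩ := exists_finrank_le_mul_pow_of_pow_mem
    (ℚ⟮ω⟯⟮√5⟯.restrictScalars ℚ) hN Finset.univ
    (fun j => (hβ j).symm ▸ binetBase_mem_adjoin ω j : ∀ j, β j ^ N ∈ _)
  refine ⟨F, fun j => hβF j (Finset.mem_univ j), hfin, hF.trans ?_⟩
  exact Nat.mul_le_mul_right _ (hbase.2.trans_eq (by rw [finrank_adjoin_tribRoot hω]))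

lemma five_mul_binetBase_le {ω : ℝ} (hω₁ : 1.839 < ω) (hω₂ : ω < 1.84) :
    0 < binetBase ω 2 ∧ 5 * binetBase ω 2 ≤ Real.exp 1.92 := by
  have h5 : 2.236 < √5 := Real.lt_sqrt_of_sq_lt (by norm_num)
  have hexp : (6.7 : ℝ) ≤ Real.exp 1.92 := by
    rw [show (1.92 : ℝ) = (2 : ℕ) * 1 + -0.08 by norm_num, Real.exp_add, Real.exp_nat_mul]
    have : (2.7182818283 : ℝ) ^ 2 ≤ Real.exp 1 ^ 2 := by gcongr; exact Real.exp_one_gt_d9.le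
    nlinarith [Real.add_one_le_exp (-0.08)]
  have hbase : binetBase ω 2 = tribDenom ω / √5 := rfl
  have hpos : 0 < tribDenom ω := by unfold tribDenom; nlinarith
  refine ⟨div_pos hpos (by positivity), le_trans ?_ hexp⟩
  rw [hbase, ← le_div_iff₀' (by norm_num), div_le_iff₀ (by positivity), tribDenom]
  nlinarith

lemma one_le_abs_sum_mul_prod_zpow {ω : ℝ} (hω : ω ^ 3 - ω ^ 2 - ω - 1 = 0)
    (hω₁ : 1.839 < ω) (hω₂ : ω < 1.84) {N : ℕ} (hN : N ≠ 0) {β : Fin 3 → ℝ}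
    (hβ : ∀ j, β j ^ N = binetBase ω j) {ι : Type*} {U : Finset ι} {C : ι → ℤ}
    {e : ι → Fin 3 → ℤ} {P : ℕ} (he : ∀ i ∈ U, ∀ j, |e i j| ≤ N * P) {A : ℝ} (hA : 1 ≤ A)
    (hC : ∑ i ∈ U, |(C i : ℝ)| ≤ A) (hne : ∑ i ∈ U, C i * ∏ j, β j ^ e i j ≠ 0) :
    1 ≤ |∑ i ∈ U, C i * ∏ j, β j ^ e i j| * Real.exp (1.92 * P) *
      (A * Real.exp (4.06 * P)) ^ (6 * N ^ 3 - 1) := by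
  obtain ⟨F, hβF, _, hF⟩ := exists_finrank_le_of_pow_eq_binetBase hω hN hβ
  have : NumberField F := { }
  set γ : Fin 3 → F := fun j => ⟨β j, hβF j⟩ with hγ
  have hg : IsBinetConjugate fun j => γ j ^ N := by
    have hcomp : algebraMap F ℝ ∘ (fun j => γ j ^ N) = binetBase ω :=
      funext fun j => (map_pow _ _ _).trans (hβ j)
    exact .of_comp_ringHom (algebraMap F ℝ) (hcomp ▸ isBinetConjugate_binetBase hω)
  obtain ⟨hpos, hle⟩ := five_mul_binetBase_le hω₁ hω₂
  have hscaled (i) : ((5 * γ 2 ^ N) ^ P * ∏ j, γ j ^ e i j) ^ N =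
      (5 * γ 2 ^ N) ^ (N * P) * ∏ j, (γ j ^ N) ^ e i j := by
    rw [mul_pow, ← pow_mul, mul_comm P, ← Finset.prod_pow]
    simp only [← zpow_natCast, ← zpow_mul, mul_comm]
  have he' (i) (hi : i ∈ U) (j) : |e i j| ≤ (N * P : ℕ) := mod_cast he i hi j
  have hcoe : ((∑ i ∈ U, C i * ∏ j, γ j ^ e i j : F) : ℝ) = ∑ i ∈ U, C i * ∏ j, β j ^ e i j := by
    change algebraMap F ℝ _ = _
    simp only [map_sum, map_mul, map_intCast, map_prod, map_zpow₀, hγ]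
    rfl
  have key := one_le_norm_sum_mul (Complex.ofRealHom.comp (algebraMap F ℝ)) (U := U) (C := C)
    (y := fun i => ∏ j, γ j ^ e i j) (m := (5 * γ 2 ^ N) ^ P) (R := Real.exp 4.06 ^ P)
    (pow_ne_zero _ (mul_ne_zero (by norm_num) (hg.ne_zero 2)))
    (fun i hi => .of_pow (Nat.pos_of_ne_zero hN) <| by
      rw [hscaled]
      exact hg.isIntegral_scaled_prod_zpow (he' i hi 2))
    (one_le_pow₀ (Real.one_le_exp (by norm_num)))
    (fun σ i hi => (pow_le_pow_iff_left₀ (norm_nonneg _) (by positivity) hN).1 <| by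
      rw [← norm_pow, ← map_pow, hscaled, ← pow_mul, mul_comm P]
      simpa [map_ofNat σ] using (hg.comp_ringHom σ).norm_scaled_prod_zpow_le (he' i hi))
    hA hC hF (fun h => hne (by rw [← hcoe, h, ZeroMemClass.coe_zero]))
  rw [mul_comm 1.92, mul_comm 4.06, Real.exp_nat_mul, Real.exp_nat_mul, ← hcoe]
  refine key.trans ?_
  have hnorm : ‖(Complex.ofRealHom.comp (algebraMap F ℝ)) ((5 * γ 2 ^ N) ^ P)‖ =
      (5 * binetBase ω 2) ^ P := by
    rw [← hβ 2, RingHom.comp_apply, Complex.ofRealHom_eq_coe, Complex.norm_real, map_pow, map_mul,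
      map_ofNat, map_pow, norm_pow, Real.norm_of_nonneg]
    · rfl
    · exact (mul_pos (by norm_num) (hβ 2 ▸ hpos)).le
  rw [hnorm, RingHom.comp_apply, Complex.ofRealHom_eq_coe, Complex.norm_real]
  gcongr
  exact le_rfl

end BinetConjugates

/-! ### Delta-polynomials -/

section DeltaPolynomials

open Polynomial

/-- The polynomial `z ↦ z (z - 1) ⋯ (z - k + 1) / k!`. -/
noncomputable def binomialPoly (k : ℕ) : ℂ[X] :=
  C ((k.factorial : ℂ)⁻¹) * descPochhammer ℂ k

/-- The polynomials with which Baker's auxiliary functions are built when denominators of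
derivatives have to be kept small (Feldman). The degrees `a + h * b` with `a < h` are
distinct. -/
noncomputable def deltaPoly (h b a : ℕ) : ℂ[X] :=
  binomialPoly a * binomialPoly h ^ b

lemma binomialPoly_ne_zero (k : ℕ) : binomialPoly k ≠ 0 :=
  mul_ne_zero (by simp [Nat.factorial_ne_zero]) (monic_descPochhammer ℂ k).ne_zero

lemma natDegree_binomialPoly (k : ℕ) : (binomialPoly k).natDegree = k := by
  rw [binomialPoly, natDegree_C_mul (by simp [Nat.factorial_ne_zero]), descPochhammer_natDegree]

lemma binomialPoly_zero : binomialPoly 0 = 1 := by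
  simp [binomialPoly]

lemma C_inv_factorial_succ (k : ℕ) :
    C (((k + 1).factorial : ℂ)⁻¹) = C ((k + 1 : ℂ)⁻¹) * C ((k.factorial : ℂ)⁻¹) := by
  rw [← C_mul, Nat.factorial_succ, Nat.cast_mul, mul_inv, Nat.cast_succ]

lemma binomialPoly_succ (k : ℕ) :
    binomialPoly (k + 1) = C ((k + 1 : ℂ)⁻¹) * X * (binomialPoly k).comp (X - 1) := by
  rw [binomialPoly, binomialPoly, descPochhammer_succ_left, C_inv_factorial_succ, mul_comp, C_comp]
  ring

lemma binomialPoly_succ_comp_sub_one (k : ℕ) :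
    (binomialPoly (k + 1)).comp (X - 1) =
      binomialPoly (k + 1) - (binomialPoly k).comp (X - 1) := by
  have hk : C ((k + 1 : ℂ)⁻¹) * (k + 1 : ℂ[X]) = 1 := by
    rw [← map_natCast C, ← C_1, ← C_add, ← C_mul, inv_mul_cancel₀ k.cast_add_one_ne_zero]
  simp only [binomialPoly, mul_comp, C_comp, descPochhammer_succ_comp_X_sub_one,
    C_inv_factorial_succ, smul_eq_mul]
  linear_combination
    -(C ((k.factorial : ℂ)⁻¹) * (descPochhammer ℂ k).comp (X - 1)) * hk

/-- The subring of complex polynomials with integer coefficients. -/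
noncomputable def integerPolys : Subring ℂ[X] :=
  (mapRingHom (Int.castRingHom ℂ)).range

lemma C_intCast_mem_integerPolys (c : ℤ) : C (c : ℂ) ∈ integerPolys :=
  ⟨C c, by simp⟩

lemma X_mem_integerPolys : X ∈ integerPolys :=
  ⟨X, by simp⟩

lemma binomialPoly_comp_mem_integerPolys {ν h : ℕ} (hν : ∀ j < h, j + 1 ∣ ν) {k : ℕ}
    (hk : k ≤ h) (u : ℤ) :
    (binomialPoly k).comp (C (ν : ℂ) * X + C (u : ℂ)) ∈ integerPolys := by
  induction k generalizing u with
  | zero => simp [binomialPoly_zero, one_mem]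
  | succ k ih =>
    have shift (u : ℤ) (p : ℂ[X]) : (p.comp (X - 1)).comp (C (ν : ℂ) * X + C (u : ℂ)) =
        p.comp (C (ν : ℂ) * X + C ((u - 1 : ℤ) : ℂ)) := by
      rw [comp_assoc]; congr 1; simp; ring
    have pascal (u : ℤ) : (binomialPoly (k + 1)).comp (C (ν : ℂ) * X + C ((u - 1 : ℤ) : ℂ)) =
        (binomialPoly (k + 1)).comp (C (ν : ℂ) * X + C (u : ℂ)) -
          (binomialPoly k).comp (C (ν : ℂ) * X + C ((u - 1 : ℤ) : ℂ)) := by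
      rw [← shift, binomialPoly_succ_comp_sub_one, sub_comp, shift]
    have ihk := ih (by omega)
    induction u using Int.induction_on with
    | zero =>
      obtain ⟨d, rfl⟩ := hν k (by omega)
      have hlin : C ((k + 1 : ℂ)⁻¹) * (C (((k + 1) * d : ℕ) : ℂ) * X) = C ((d : ℤ) : ℂ) * X := by
        rw [← mul_assoc, ← C_mul, Nat.cast_mul, Nat.cast_succ, ← mul_assoc,
          inv_mul_cancel₀ k.cast_add_one_ne_zero, one_mul, Int.cast_natCast]
      have hmem := mul_mem (mul_mem (C_intCast_mem_integerPolys d) X_mem_integerPolys) (ihk (0 - 1))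
      rw [binomialPoly_succ, mul_comp, shift]
      simpa only [mul_comp, C_comp, X_comp, Int.cast_zero, C_0, add_zero, hlin] using hmem
    | succ u hu =>
      have h := pascal (u + 1)
      rw [add_sub_cancel_right] at h
      rw [← sub_add_cancel ((binomialPoly (k + 1)).comp _) ((binomialPoly k).comp _), ← h]
      exact add_mem hu (ihk u)
    | pred u hu =>
      rw [pascal]
      exact sub_mem hu (ihk _)

lemma deltaPoly_comp_mem_integerPolys {ν h : ℕ} (hν : ∀ j < h, j + 1 ∣ ν) {a : ℕ}
    (ha : a ≤ h) (b : ℕ) (u : ℤ) :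
    (deltaPoly h b a).comp (C (ν : ℂ) * X + C (u : ℂ)) ∈ integerPolys := by
  rw [deltaPoly, mul_comp, pow_comp]
  exact mul_mem (binomialPoly_comp_mem_integerPolys hν ha u)
    (pow_mem (binomialPoly_comp_mem_integerPolys hν le_rfl u) b)

lemma exists_int_eq_pow_mul_eval_hasseDeriv {p : ℂ[X]} {c u : ℂ}
    (hp : p.comp (C c * X + C u) ∈ integerPolys) (t : ℕ) :
    ∃ d : ℤ, c ^ t * (hasseDeriv t p).eval u = d := by
  obtain ⟨q, hq⟩ := hp
  refine ⟨q.coeff t, ?_⟩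
  have hcomp : p.comp (C c * X + C u) = (taylor u p).comp (C c * X) := by
    rw [taylor_apply, comp_assoc]; simp
  have hcoeff := congrArg (coeff · t) (hq.trans hcomp)
  simp only [coe_mapRingHom, coeff_map, comp_C_mul_X_coeff, taylor_coeff] at hcoeff
  rw [mul_comm, ← hcoeff, eq_intCast]

lemma norm_eval_binomialPoly_le {k h : ℕ} (hk : k ≤ h) {K : ℝ} (hK : 1 ≤ K) {z : ℂ}
    (hz : ‖z‖ + h ≤ K * h) : ‖(binomialPoly k).eval z‖ ≤ (Real.exp 1 * K) ^ h := by
  have hprod : ‖∏ j ∈ Finset.range k, (z - j)‖ ≤ (K * h) ^ k := by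
    rw [norm_prod]
    refine (Finset.prod_le_prod (g := fun _ => K * h) (fun _ _ => norm_nonneg _)
      fun j hj => ?_).trans_eq (by simp)
    have hj : (j : ℝ) ≤ h := by exact_mod_cast (Finset.mem_range.1 hj).le.trans hk
    calc ‖z - j‖ ≤ ‖z‖ + j := by simpa using norm_sub_le z (j : ℂ)
      _ ≤ K * h := by linarith
  rw [binomialPoly, eval_mul, eval_C, descPochhammer_eval_eq_prod_range, norm_mul, norm_inv,
    Complex.norm_natCast]
  calc (k.factorial : ℝ)⁻¹ * ‖∏ j ∈ Finset.range k, (z - j)‖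
      ≤ (k.factorial : ℝ)⁻¹ * (K * h) ^ k := by gcongr
    _ = K ^ k * ((h : ℝ) ^ k / k.factorial) := by rw [mul_pow]; ring
    _ ≤ K ^ h * Real.exp h := by
        gcongr
        exact Real.pow_div_factorial_le_exp _ h.cast_nonneg k
    _ = (Real.exp 1 * K) ^ h := by rw [mul_pow, ← Real.exp_nat_mul]; simp [mul_comm]

lemma norm_eval_deltaPoly_le {h B a b : ℕ} (ha : a ≤ h) (hb : b < B) {K : ℝ} (hK : 1 ≤ K)
    {z : ℂ} (hz : ‖z‖ + h ≤ K * h) :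
    ‖(deltaPoly h b a).eval z‖ ≤ (Real.exp 1 * K) ^ (h * B) := by
  have hbase : 1 ≤ Real.exp 1 * K := one_le_mul_of_one_le_of_one_le (by simp) hK
  rw [deltaPoly, eval_mul, eval_pow, norm_mul, norm_pow]
  calc ‖(binomialPoly a).eval z‖ * ‖(binomialPoly h).eval z‖ ^ b
      ≤ (Real.exp 1 * K) ^ h * ((Real.exp 1 * K) ^ h) ^ b := by
        gcongr
        · exact norm_eval_binomialPoly_le ha hK hz
        · exact norm_eval_binomialPoly_le le_rfl hK hz
    _ = (Real.exp 1 * K) ^ (h * (b + 1)) := by ring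
    _ ≤ (Real.exp 1 * K) ^ (h * B) := pow_le_pow_right₀ hbase (by gcongr; omega)

lemma norm_eval_hasseDeriv_le (p : ℂ[X]) {z : ℂ} {M : ℝ}
    (hM : ∀ y, ‖y - z‖ = 1 → ‖p.eval y‖ ≤ M) (t : ℕ) : ‖(hasseDeriv t p).eval z‖ ≤ M := by
  have hiter : iteratedDeriv t (fun y => p.eval y) = fun y => (derivative^[t] p).eval y := by
    induction t with
    | zero => simp
    | succ t ih =>
      rw [iteratedDeriv_succ, ih, Function.iterate_succ_apply']
      exact funext fun y => Polynomial.deriv _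
  have hderiv : iteratedDeriv t (fun y => p.eval y) z =
      t.factorial * (hasseDeriv t p).eval z := by
    rw [hiter, ← factorial_smul_hasseDeriv]
    simp
  have hcauchy := Complex.norm_iteratedDeriv_le_of_forall_mem_sphere_norm_le t one_pos
    p.differentiable.diffContOnCl fun y hy => hM y (by simpa using hy)
  rw [hderiv, norm_mul, Complex.norm_natCast, one_pow, div_one] at hcauchy
  exact le_of_mul_le_mul_left hcauchy (by positivity)

lemma norm_eval_hasseDeriv_deltaPoly_le {h B a b : ℕ} (ha : a ≤ h) (hb : b < B) {K : ℝ}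
    (hK : 1 ≤ K) {z : ℂ} (hz : ‖z‖ + 1 + h ≤ K * h) (t : ℕ) :
    ‖(hasseDeriv t (deltaPoly h b a)).eval z‖ ≤ (Real.exp 1 * K) ^ (h * B) :=
  norm_eval_hasseDeriv_le _ (fun y hy => norm_eval_deltaPoly_le ha hb hK (by
    linarith [norm_le_norm_add_norm_sub' y z])) t

lemma deltaPoly_ne_zero (h b a : ℕ) : deltaPoly h b a ≠ 0 :=
  mul_ne_zero (binomialPoly_ne_zero a) (pow_ne_zero b (binomialPoly_ne_zero h))

lemma natDegree_deltaPoly (h b a : ℕ) : (deltaPoly h b a).natDegree = a + h * b := by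
  rw [deltaPoly, natDegree_mul (binomialPoly_ne_zero a) (pow_ne_zero b (binomialPoly_ne_zero h)),
    natDegree_pow, natDegree_binomialPoly, natDegree_binomialPoly, mul_comm]

lemma exists_card_le_natDegree_of_sum_eval_eq_zero {ι F : Type*} [Field F] {U : Finset ι}
    (hU : U.Nonempty) {q : ι → F[X]} (hq : ∀ i ∈ U, q i ≠ 0)
    (hinj : Set.InjOn (fun i => (q i).natDegree) U) {a : ι → F} (ha : ∀ i ∈ U, a i ≠ 0)
    {Z : Finset F} (hZ : ∀ z ∈ Z, ∑ i ∈ U, a i * (q i).eval z = 0) :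
    ∃ i ∈ U, Z.card ≤ (q i).natDegree := by
  obtain ⟨m, hm, hmax⟩ := U.exists_max_image (fun i => (q i).natDegree) hU
  set p : F[X] := ∑ i ∈ U, C (a i) * q i with hp
  have hdeg : p.natDegree ≤ (q m).natDegree :=
    natDegree_sum_le_of_forall_le _ _ fun i hi => (natDegree_C_mul_le _ _).trans (hmax i hi)
  have hlead : p.coeff (q m).natDegree = a m * (q m).leadingCoeff := by
    rw [hp, finsetSum_coeff, Finset.sum_eq_single_of_mem m hm, coeff_C_mul, leadingCoeff]
    intro i hi hne
    rw [coeff_C_mul, coeff_eq_zero_of_natDegree_lt, mul_zero]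
    exact (hmax i hi).lt_of_ne fun h => hne (hinj hi hm h)
  have hp0 : p ≠ 0 := fun h0 => mul_ne_zero (ha m hm) (leadingCoeff_ne_zero.2 (hq m hm))
    (by rw [← hlead, h0, coeff_zero])
  refine ⟨m, hm, (card_le_degree_of_subset_roots fun z hz => ?_).trans hdeg⟩
  rw [mem_roots hp0, IsRoot, hp, eval_finsetSum]
  simpa only [eval_mul, eval_C] using hZ z hz

end DeltaPolynomials

/-! ### Exponential sums -/

lemma le_analyticOrderAt_finsetSum {𝕜 E ι : Type*} [NontriviallyNormedField 𝕜]
    [NormedAddCommGroup E] [NormedSpace 𝕜 E] {U : Finset ι} {f : ι → 𝕜 → E} {c : 𝕜} {k : ℕ∞}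
    (h : ∀ i ∈ U, k ≤ analyticOrderAt (f i) c) :
    k ≤ analyticOrderAt (fun z => ∑ i ∈ U, f i z) c := by
  classical
  induction U using Finset.induction_on with
  | empty => simp [analyticOrderAt_eq_top.2]
  | insert i U hi ih =>
    simp only [Finset.sum_insert hi]
    exact (le_min (h i (U.mem_insert_self i))
      (ih fun j hj => h j (Finset.mem_insert_of_mem hj))).trans le_analyticOrderAt_add

lemma le_analyticOrderAt_mul_left {f g : ℂ → ℂ} (hf : Differentiable ℂ f)
    (hg : Differentiable ℂ g) {c : ℂ} {k : ℕ∞} (h : k ≤ analyticOrderAt g c) :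
    k ≤ analyticOrderAt (fun z => f z * g z) c := by
  change k ≤ analyticOrderAt (f * g) c
  rw [analyticOrderAt_mul (hf.analyticAt c) (hg.analyticAt c)]
  exact h.trans le_add_self

lemma le_analyticOrderAt_exp_mul_sub {v : ℂ → ℂ} (hv : Differentiable ℂ v) {c : ℂ}
    (hvc : v c = c) {k : ℕ∞} (hk : k ≤ analyticOrderAt (fun z => v z - c) c) (θ : ℂ) :
    k ≤ analyticOrderAt (fun z => Complex.exp (θ * v z) - Complex.exp (θ * c)) c := by
  have hexp : AnalyticAt ℂ (fun u => Complex.exp (θ * u) - Complex.exp (θ * c)) (v c) := by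
    fun_prop
  have hzero : analyticOrderAt (fun u => Complex.exp (θ * u) - Complex.exp (θ * c)) (v c) ≠ 0 :=
    hexp.analyticOrderAt_ne_zero.2 (by rw [hvc, sub_self])
  have hcomp := hexp.analyticOrderAt_comp (hv.analyticAt c)
  rw [hvc] at hcomp hzero
  exact (hk.trans (le_mul_of_one_le_left (by simp) (Order.one_le_iff_ne_zero.2 hzero))).trans_eq
    hcomp.symm

lemma norm_sum_mul_exp_le {ι : Type*} {U : Finset ι} {c u : ι → ℂ} {M R : ℝ}
    (hc : ∑ i ∈ U, ‖c i‖ ≤ M) (hu : ∀ i ∈ U, ‖u i‖ ≤ R) :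
    ‖∑ i ∈ U, c i * Complex.exp (u i)‖ ≤ M * Real.exp R :=
  calc ‖∑ i ∈ U, c i * Complex.exp (u i)‖ ≤ ∑ i ∈ U, ‖c i‖ * Real.exp R := by
        refine norm_sum_le_of_le _ fun i hi => ?_
        rw [norm_mul]
        gcongr
        exact (Complex.norm_exp_le_exp_norm _).trans (Real.exp_le_exp.2 (hu i hi))
    _ ≤ M * Real.exp R := by rw [← Finset.sum_mul]; gcongr

open Polynomial in
lemma derivative_hasseDeriv {R : Type*} [Semiring R] (t : ℕ) (q : R[X]) :
    derivative (hasseDeriv t q) = (t + 1) * hasseDeriv (t + 1) q := by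
  have h := LinearMap.congr_fun (hasseDeriv_comp (R := R) 1 t) q
  rw [LinearMap.comp_apply, hasseDeriv_one, LinearMap.smul_apply, add_comm 1 t,
    Nat.choose_one_right] at h
  simpa using h

/-- Data for exponential sums `∑ aᵢ qᵢ(scale z) exp ((∑ⱼ slope i j * rate j) z)`, whose
derivatives in the `rate` directions are recorded by powers of the slopes. -/
structure ExpPolyFamily (ι J : Type*) where
  scale : ℂ
  poly : ι → Polynomial ℂ
  slope : ι → J → ℂ
  rate : J → ℂ

namespace ExpPolyFamily

variable {ι J : Type*} [Fintype J] (F : ExpPolyFamily ι J)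

/-- The frequency of the `i`-th exponential. -/
noncomputable def freq (i : ι) : ℂ := ∑ j, F.slope i j * F.rate j

/-- The coefficient of the `i`-th exponential after `t₀` divided differentiations of the
polynomial and `t j` differentiations in the direction `rate j`. -/
noncomputable def term (i : ι) (t₀ : ℕ) (t : J → ℕ) (z : ℂ) : ℂ :=
  (Polynomial.hasseDeriv t₀ (F.poly i)).eval (F.scale * z) * ∏ j, F.slope i j ^ t j

/-- The exponential sum with coefficients `a` and differentiation orders `t₀`, `t`. -/
noncomputable def sum (U : Finset ι) (a : ι → ℂ) (t₀ : ℕ) (t : J → ℕ) (z : ℂ) : ℂ :=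
  ∑ i ∈ U, a i * F.term i t₀ t z * Complex.exp (F.freq i * z)

lemma hasDerivAt_term (i : ι) (t₀ : ℕ) (t : J → ℕ) (z : ℂ) :
    HasDerivAt (F.term i t₀ t) (F.scale * (t₀ + 1) * F.term i (t₀ + 1) t z) z := by
  have hlin : HasDerivAt (fun z => F.scale * z) F.scale z := by
    simpa using (hasDerivAt_id z).const_mul F.scale
  have h := (((Polynomial.hasseDeriv t₀ (F.poly i)).hasDerivAt (F.scale * z)).comp z
    hlin).mul_const (∏ j, F.slope i j ^ t j)
  refine h.congr_deriv ?_
  rw [derivative_hasseDeriv, term]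
  simp only [Polynomial.eval_mul, Polynomial.eval_add, Polynomial.eval_natCast,
    Polynomial.eval_one]
  ring

lemma differentiable_term (i : ι) (t₀ : ℕ) (t : J → ℕ) : Differentiable ℂ (F.term i t₀ t) :=
  fun z => (F.hasDerivAt_term i t₀ t z).differentiableAt

lemma term_add_single [DecidableEq J] (i : ι) (t₀ : ℕ) (t : J → ℕ) (j : J) (z : ℂ) :
    F.term i t₀ (t + Pi.single j 1) z = F.term i t₀ t z * F.slope i j := by
  have hsingle : ∏ k, F.slope i k ^ (Pi.single j 1 : J → ℕ) k = F.slope i j := by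
    rw [Finset.prod_eq_single j (fun k _ hk => by rw [Pi.single_eq_of_ne hk, pow_zero])
      (fun h => absurd (Finset.mem_univ j) h), Pi.single_eq_same, pow_one]
  simp only [term, Pi.add_apply, pow_add, Finset.prod_mul_distrib, hsingle, mul_assoc]

variable (U : Finset ι) (a : ι → ℂ)

lemma differentiable_sum (t₀ : ℕ) (t : J → ℕ) : Differentiable ℂ (F.sum U a t₀ t) := by
  have := F.differentiable_term
  unfold sum
  fun_prop

lemma deriv_sum [DecidableEq J] (t₀ : ℕ) (t : J → ℕ) :
    deriv (F.sum U a t₀ t) = fun z => F.scale * (t₀ + 1) * F.sum U a (t₀ + 1) t z +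
      ∑ j, F.rate j * F.sum U a t₀ (t + Pi.single j 1) z := by
  ext z
  have hexp (i : ι) : HasDerivAt (fun z => Complex.exp (F.freq i * z))
      (Complex.exp (F.freq i * z) * F.freq i) z := by
    simpa using ((hasDerivAt_id z).const_mul (F.freq i)).cexp
  have hsum := HasDerivAt.fun_sum (u := U) fun i _ =>
    ((F.hasDerivAt_term i t₀ t z).const_mul (a i)).fun_mul (hexp i)
  refine hsum.deriv.trans ?_
  simp only [sum, term_add_single, Finset.mul_sum]
  rw [Finset.sum_comm, ← Finset.sum_add_distrib]
  refine Finset.sum_congr rfl fun i _ => ?_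
  have hdirections : ∑ j, F.rate j * (a i * (F.term i t₀ t z * F.slope i j) *
      Complex.exp (F.freq i * z)) =
      F.freq i * (a i * F.term i t₀ t z * Complex.exp (F.freq i * z)) := by
    nth_rw 2 [freq]
    rw [Finset.sum_mul]
    exact Finset.sum_congr rfl fun j _ => by ring
  rw [hdirections]
  ring

variable {U a}

lemma le_analyticOrderAt_sum {c : ℂ} {N k t₀ : ℕ} {t : J → ℕ} (hk : t₀ + ∑ j, t j + k ≤ N)
    (h : ∀ u₀ u, u₀ + ∑ j, u j < N → F.sum U a u₀ u c = 0) :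
    (k : ℕ∞) ≤ analyticOrderAt (F.sum U a t₀ t) c := by
  classical
  induction k generalizing t₀ t with
  | zero => simp
  | succ k ih =>
    have hanalytic := (F.differentiable_sum U a t₀ t).analyticAt c
    have hzero : F.sum U a t₀ t c = 0 := h t₀ t (by omega)
    have horder := hanalytic.analyticOrderAt_deriv_add_one
    simp only [hzero, sub_zero] at horder
    rw [← horder, Nat.cast_succ]
    gcongr
    rw [deriv_sum]
    refine le_trans (le_min ?_ ?_) le_analyticOrderAt_add
    · exact le_analyticOrderAt_mul_left (differentiable_const _)
        (F.differentiable_sum U a _ t) (ih (by omega))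
    · refine le_analyticOrderAt_finsetSum fun j _ => le_analyticOrderAt_mul_left
        (differentiable_const _) (F.differentiable_sum U a t₀ _) (ih ?_)
      simp only [Pi.add_apply, Finset.sum_add_distrib, Finset.sum_pi_single', Finset.mem_univ,
        if_true]
      omega

lemma le_analyticOrderAt_sum_exp_mul {θ : ι → ℂ} {v : ℂ → ℂ} (hv : Differentiable ℂ v) {c : ℂ}
    (hvc : v c = c) {N k t₀ : ℕ} {t : J → ℕ}
    (hvk : (k : ℕ∞) ≤ analyticOrderAt (fun z => v z - c) c) (hk : t₀ + ∑ j, t j + k ≤ N)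
    (h : ∀ u₀ u, u₀ + ∑ j, u j < N →
      F.sum U (fun i => a i * Complex.exp (θ i * c)) u₀ u c = 0) :
    (k : ℕ∞) ≤
      analyticOrderAt (fun z => F.sum U (fun i => a i * Complex.exp (θ i * v z)) t₀ t z) c := by
  have hsplit : (fun z => F.sum U (fun i => a i * Complex.exp (θ i * v z)) t₀ t z) =
      F.sum U (fun i => a i * Complex.exp (θ i * c)) t₀ t + fun z => ∑ i ∈ U,
        a i * F.term i t₀ t z * Complex.exp (F.freq i * z) *
          (Complex.exp (θ i * v z) - Complex.exp (θ i * c)) := by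
    ext z
    simp only [sum, Pi.add_apply]
    rw [← Finset.sum_add_distrib]
    exact Finset.sum_congr rfl fun i _ => by ring
  rw [hsplit]
  refine le_trans (le_min (F.le_analyticOrderAt_sum hk h) ?_) le_analyticOrderAt_add
  refine le_analyticOrderAt_finsetSum fun i _ => le_analyticOrderAt_mul_left ?_ (by fun_prop)
    (le_analyticOrderAt_exp_mul_sub hv hvc hvk (θ i))
  have := F.differentiable_term i t₀ t
  fun_prop

lemma norm_sum_exp_mul_sub_le {θ : ι → ℂ} {x y : ℂ} {t₀ : ℕ} {t : J → ℕ} {M W Θ V : ℝ}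
    (hM : ∑ i ∈ U, ‖a i * F.term i t₀ t x‖ ≤ M) (hW : ∀ i ∈ U, ‖F.freq i * x‖ ≤ W)
    (hΘ₀ : 0 ≤ Θ) (hΘ : ∀ i ∈ U, ‖θ i‖ ≤ Θ) (hx : ‖x‖ ≤ V) (hy : ‖y‖ ≤ V) (hΘV : Θ * V ≤ 1) :
    ‖F.sum U (fun i => a i * Complex.exp (θ i * x)) t₀ t x -
      F.sum U (fun i => a i * Complex.exp (θ i * y)) t₀ t x‖ ≤
      M * Real.exp W * (4 * (Θ * V)) := by
  have hsub (u : ℂ) (hu : ‖u‖ ≤ V) {i : ι} (hi : i ∈ U) :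
      ‖Complex.exp (θ i * u) - 1‖ ≤ 2 * (Θ * V) := by
    have hθu : ‖θ i * u‖ ≤ Θ * V := by
      rw [norm_mul]
      exact mul_le_mul (hΘ i hi) hu (norm_nonneg _) ((norm_nonneg _).trans (hΘ i hi))
    exact (Complex.norm_exp_sub_one_le (hθu.trans hΘV)).trans (by linarith)
  have hdiff : ∀ i ∈ U, ‖Complex.exp (θ i * x) - Complex.exp (θ i * y)‖ ≤ 4 * (Θ * V) :=
    fun i hi => by
      have h := norm_sub_le (Complex.exp (θ i * x) - 1) (Complex.exp (θ i * y) - 1)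
      rw [sub_sub_sub_cancel_right] at h
      linarith [hsub x hx hi, hsub y hy hi]
  rw [sum, sum, ← Finset.sum_sub_distrib]
  calc _ ≤ ∑ i ∈ U, ‖a i * F.term i t₀ t x‖ * (Real.exp W * (4 * (Θ * V))) := by
        refine norm_sum_le_of_le _ fun i hi => ?_
        have hexp := (Complex.norm_exp_le_exp_norm _).trans (Real.exp_le_exp.2 (hW i hi))
        calc _ = ‖a i * F.term i t₀ t x‖ * (‖Complex.exp (F.freq i * x)‖ *
              ‖Complex.exp (θ i * x) - Complex.exp (θ i * y)‖) := by
              rw [← norm_mul, ← norm_mul]; congr 1; ring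
          _ ≤ _ := by gcongr; exact hdiff i hi
    _ ≤ M * Real.exp W * (4 * (Θ * V)) := by
        have hV := (norm_nonneg x).trans hx
        rw [← Finset.sum_mul, mul_assoc]
        gcongr

lemma norm_sum_exp_mul_le {θ : ι → ℂ} {z y : ℂ} {t₀ : ℕ} {t : J → ℕ} {M W Θ V : ℝ}
    (hM : ∑ i ∈ U, ‖a i * F.term i t₀ t z‖ ≤ M) (hW : ∀ i ∈ U, ‖F.freq i * z‖ ≤ W)
    (hΘ₀ : 0 ≤ Θ) (hΘ : ∀ i ∈ U, ‖θ i‖ ≤ Θ) (hy : ‖y‖ ≤ V) (hΘV : Θ * V ≤ 1) :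
    ‖F.sum U (fun i => a i * Complex.exp (θ i * y)) t₀ t z‖ ≤ M * Real.exp (W + 1) := by
  have hexp : F.sum U (fun i => a i * Complex.exp (θ i * y)) t₀ t z =
      ∑ i ∈ U, a i * F.term i t₀ t z * Complex.exp (F.freq i * z + θ i * y) :=
    Finset.sum_congr rfl fun i _ => by rw [Complex.exp_add]; ring
  rw [hexp]
  refine norm_sum_mul_exp_le hM fun i hi => (norm_add_le _ _).trans (add_le_add (hW i hi) ?_)
  rw [norm_mul]
  exact (mul_le_mul (hΘ i hi) hy (norm_nonneg _) hΘ₀).trans hΘV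

/-- The points `1/G, 3/G, …, (2n-1)/G`. -/
noncomputable def oddNodes (G n : ℕ) : Finset ℝ :=
  (Finset.range n).image fun i : ℕ => ((2 * i + 1 : ℤ) : ℝ) / G

lemma card_oddNodes {G : ℕ} (hG : G ≠ 0) (n : ℕ) : (oddNodes G n).card = n := by
  refine (Finset.card_image_of_injective _ fun i j hij => ?_).trans (Finset.card_range n)
  have hG' : (G : ℝ) ≠ 0 := Nat.cast_ne_zero.2 hG
  have := Int.cast_injective ((div_left_inj' hG').1 hij)
  omega

lemma exists_odd_of_mem_oddNodes {G S : ℕ} {c : ℝ} (hc : c ∈ oddNodes G (G * (S / 2))) :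
    ∃ s : ℤ, Odd s ∧ 0 < s ∧ s < G * S ∧ c = s / G := by
  obtain ⟨i, hi, rfl⟩ := Finset.mem_image.1 hc
  have hS : (G : ℤ) * (S / 2 : ℕ) * 2 ≤ G * S := by
    rw [mul_assoc]; exact_mod_cast Nat.mul_le_mul_left G (Nat.div_mul_le_self S 2)
  have hi : (i : ℤ) < G * (S / 2 : ℕ) := by exact_mod_cast Finset.mem_range.1 hi
  exact ⟨2 * i + 1, ⟨i, rfl⟩, by omega, by lia, rfl⟩

lemma differentiable_sum_exp_mul (θ : ι → ℂ) {v : ℂ → ℂ} (hv : Differentiable ℂ v) (t₀ : ℕ)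
    (t : J → ℕ) :
    Differentiable ℂ fun z => F.sum U (fun i => a i * Complex.exp (θ i * v z)) t₀ t z := by
  have := F.differentiable_term
  unfold sum
  fun_prop

lemma norm_sum_exp_mul_le_of_forall_eq_zero {θ : ι → ℂ} {G κ S : ℕ} (hG : G ≠ 0) (hS : 0 < S)
    {E M W Θ V : ℝ} (hE : 1 < E) {t₀ : ℕ} {t : J → ℕ} (ht : t₀ + ∑ j, t j < 2 * κ)
    (hM : ∀ z : ℂ, ‖z‖ ≤ E * S → ∑ i ∈ U, ‖a i * F.term i t₀ t z‖ ≤ M)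
    (hW : ∀ i ∈ U, ‖F.freq i‖ ≤ W) (hΘ₀ : 0 ≤ Θ) (hΘ : ∀ i ∈ U, ‖θ i‖ ≤ Θ)
    (hV : 2 + G * (E * S) + 4 * κ * Real.exp (Real.pi * κ * (G * (E * S) + 1)) ≤ V)
    (hΘV : Θ * V ≤ 1)
    (hzero : ∀ s : ℤ, Odd s → |s| < G * S → ∀ u₀ u, u₀ + ∑ j, u j < 4 * κ →
      F.sum U (fun i => a i * Complex.exp (θ i * (s / G))) u₀ u (s / G) = 0)
    {x : ℝ} (hx : |x| ≤ S) :
    ‖F.sum U (fun i => a i * Complex.exp (θ i * x)) t₀ t x‖ ≤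
      M * Real.exp (W * (E * S) + 1) * ((E ^ 2 - 1)⁻¹) ^ (G * (S / 2) * (2 * κ)) +
        M * Real.exp (W * S) * (4 * (Θ * V)) := by
  set v := oddFlatId κ G
  have hS' : (0 : ℝ) < S := Nat.cast_pos.2 hS
  have hG' : (0 : ℝ) < G := Nat.cast_pos.2 (Nat.pos_of_ne_zero hG)
  have hSE : (S : ℝ) ≤ E * S := le_mul_of_one_le_left hS'.le hE.le
  have hvV (z : ℂ) (hz : ‖z‖ ≤ E * S) : ‖v z‖ ≤ V :=
    (norm_oddFlatId_le κ hG z).trans (le_trans (by gcongr) hV)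
  have hfreq (R : ℝ) {z : ℂ} (hz : ‖z‖ ≤ R) : ∀ i ∈ U, ‖F.freq i * z‖ ≤ W * R := fun i hi => by
    rw [norm_mul]
    exact mul_le_mul (hW i hi) hz (norm_nonneg _) ((norm_nonneg _).trans (hW i hi))
  have horder (s : ℤ) (hs : Odd s) (hsS : |s| < G * S) : ((2 * κ : ℕ) : ℕ∞) ≤ analyticOrderAt
      (fun z => F.sum U (fun i => a i * Complex.exp (θ i * v z)) t₀ t z) (s / G) :=
    F.le_analyticOrderAt_sum_exp_mul (differentiable_oddFlatId κ G) (oddFlatId_odd_div κ hG hs)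
      (N := 4 * κ) (le_analyticOrderAt_oddFlatId_sub κ hG hs) (by omega) (hzero s hs hsS)
  have hflat : ‖F.sum U (fun i => a i * Complex.exp (θ i * v x)) t₀ t x‖ ≤
      M * Real.exp (W * (E * S) + 1) * ((E ^ 2 - 1)⁻¹) ^ (G * (S / 2) * (2 * κ)) := by
    rw [← card_oddNodes hG (G * (S / 2))]
    refine norm_le_of_le_analyticOrderAt_symm_nodes _ hS' hE (fun c hc => ?_)
      (F.differentiable_sum_exp_mul θ (differentiable_oddFlatId κ G) t₀ t) (fun c hc => ?_)
      (fun z hz => F.norm_sum_exp_mul_le (hM z hz.le) (hfreq _ hz.le) hΘ₀ hΘ (hvV z hz.le) hΘV) hx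
    · obtain ⟨s, -, hs0, hsS, rfl⟩ := exists_odd_of_mem_oddNodes hc
      refine ⟨div_pos (by exact_mod_cast hs0) hG', (div_le_iff₀ hG').2 ?_⟩
      rw [mul_comm (S : ℝ)]
      exact_mod_cast hsS.le
    · obtain ⟨s, hs, hs0, hsS, rfl⟩ := exists_odd_of_mem_oddNodes hc
      have hpos := horder s hs (by rwa [abs_of_pos hs0])
      have hneg := horder (-s) hs.neg (by rwa [abs_neg, abs_of_pos hs0])
      rw [Int.cast_neg, neg_div] at hneg
      exact_mod_cast And.intro hpos hneg
  have hx' : ‖(x : ℂ)‖ ≤ S := by rwa [Complex.norm_real]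
  have hclose := F.norm_sum_exp_mul_sub_le (t₀ := t₀) (t := t) (hM x (hx'.trans hSE))
    (hfreq S hx') hΘ₀ hΘ (y := v x) (hx'.trans ?_) (hvV x (hx'.trans hSE)) hΘV
  · exact (norm_le_norm_add_norm_sub' _ _).trans (add_le_add hflat hclose)
  · have hG1 : (1 : ℝ) ≤ G := Nat.one_le_cast.2 (Nat.pos_of_ne_zero hG)
    refine le_trans ?_ hV
    nlinarith [Real.exp_pos (Real.pi * κ * (G * (E * S) + 1)), κ.cast_nonneg (α := ℝ),
      mul_nonneg (κ.cast_nonneg (α := ℝ)) (Real.exp_pos (Real.pi * κ * (G * (E * S) + 1))).le]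

end ExpPolyFamily

/-! ### Baker's auxiliary functions -/

lemma one_le_binetBase {ω : ℝ} (hω₁ : 1.839 < ω) (hω₂ : ω < 1.84) (j : Fin 3) :
    1 ≤ binetBase ω j := by
  have hsqrt : √5 ≤ 2.24 := by rw [Real.sqrt_le_left (by norm_num)]; norm_num
  fin_cases j
  · exact Real.one_lt_goldenRatio.le
  · change 1 ≤ ω
    linarith
  · change 1 ≤ (-ω ^ 2 + 4 * ω - 1) / √5
    rw [one_le_div (by positivity)]
    nlinarith

lemma binetBase_pos {ω : ℝ} (hω₁ : 1.839 < ω) (hω₂ : ω < 1.84) (j : Fin 3) :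
    0 < binetBase ω j :=
  one_pos.trans_le (one_le_binetBase hω₁ hω₂ j)

lemma sum_log_binetBase_le {ω : ℝ} (hω₁ : 1.839 < ω) (hω₂ : ω < 1.84) :
    ∑ j, Real.log (binetBase ω j) ≤ 1.395 := by
  have hpos := binetBase_pos hω₁ hω₂
  have hsqrt : 2.236 ≤ √5 := Real.le_sqrt_of_sq_le (by norm_num)
  have hsqrt' : √5 ≤ 2.2361 := by rw [Real.sqrt_le_left (by norm_num)]; norm_num
  have hgolden : binetBase ω 0 ≤ 1.6181 := by
    change (1 + √5) / 2 ≤ 1.6181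
    linarith
  have hdenom : binetBase ω 2 ≤ 1.3304 := by
    change (-ω ^ 2 + 4 * ω - 1) / √5 ≤ 1.3304
    rw [div_le_iff₀ (by positivity)]
    nlinarith
  rw [← Real.log_prod fun j _ => (hpos j).ne', Fin.prod_univ_three,
    Real.log_le_iff_le_exp (by have := hpos 0; have := hpos 1; have := hpos 2; positivity)]
  calc binetBase ω 0 * binetBase ω 1 * binetBase ω 2 ≤ 1.6181 * 1.84 * 1.3304 := by
        have := (hpos 1).le
        have := (hpos 2).le
        gcongr
        exact hω₂.le
    _ ≤ 2.718 * (1 + 0.395 + 0.395 ^ 2 / 2) := by norm_num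
    _ ≤ Real.exp 1 * Real.exp 0.395 := by
        gcongr
        · linarith [Real.exp_one_gt_d9]
        · exact Real.quadratic_le_exp_of_nonneg (by norm_num)
    _ = Real.exp 1.395 := by rw [← Real.exp_add]; norm_num

/-- The linear form `k₀ log φ + k₁ log ω + k₂ log (δ / √5)`. -/
noncomputable def logForm (ω : ℝ) (k : Fin 3 → ℤ) : ℝ :=
  ∑ j, k j * Real.log (binetBase ω j)

lemma abs_logForm_le {ω : ℝ} (hω₁ : 1.839 < ω) (hω₂ : ω < 1.84) {k : Fin 3 → ℤ} {K : ℝ}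
    (hk : ∀ j, |(k j : ℝ)| ≤ K) : |logForm ω k| ≤ 1.395 * K := by
  have hlog (j : Fin 3) : 0 ≤ Real.log (binetBase ω j) :=
    Real.log_nonneg (one_le_binetBase hω₁ hω₂ j)
  have hK : 0 ≤ K := (abs_nonneg _).trans (hk 0)
  calc |logForm ω k| ≤ ∑ j, K * Real.log (binetBase ω j) := by
        refine (Finset.abs_sum_le_sum_abs _ _).trans (Finset.sum_le_sum fun j _ => ?_)
        rw [abs_mul, abs_of_nonneg (hlog j)]
        exact mul_le_mul_of_nonneg_right (hk j) (hlog j)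
    _ ≤ 1.395 * K := by
        rw [← Finset.mul_sum, mul_comm]
        exact mul_le_mul_of_nonneg_right (sum_log_binetBase_le hω₁ hω₂) hK

/-- The positive real `N`-th root of `binetBase ω j`. -/
noncomputable def binetRoot (ω : ℝ) (N : ℕ) (j : Fin 3) : ℝ :=
  Real.exp (Real.log (binetBase ω j) / N)

lemma binetRoot_pow {ω : ℝ} (hω₁ : 1.839 < ω) (hω₂ : ω < 1.84) {N : ℕ} (hN : N ≠ 0)
    (j : Fin 3) : binetRoot ω N j ^ N = binetBase ω j := by
  rw [binetRoot, ← Real.exp_nat_mul, mul_div_cancel₀ _ (Nat.cast_ne_zero.2 hN),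
    Real.exp_log (binetBase_pos hω₁ hω₂ j)]

lemma prod_binetRoot_zpow (ω : ℝ) (N : ℕ) (k : Fin 3 → ℤ) :
    ∏ j, binetRoot ω N j ^ k j = Real.exp (logForm ω k / N) := by
  simp only [binetRoot, ← Real.rpow_intCast, ← Real.exp_mul, ← Real.exp_sum, logForm,
    Finset.sum_div, mul_comm, mul_div_assoc]

/-- Since `k j = k j % G + G * (k j / G)`, the exponential splits off a factor that is common to
all `k` in a residue class modulo `G`. -/
lemma exp_logForm_mul_div (ω : ℝ) {N G : ℕ} (hG : G ≠ 0) (k : Fin 3 → ℤ) (s : ℤ) :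
    Real.exp (logForm ω k * (s / (N * G))) =
      Real.exp (logForm ω (fun j => k j % G) * (s / (N * G))) *
        ∏ j, binetRoot ω N j ^ (k j / G * s) := by
  have hG' : (G : ℝ) ≠ 0 := Nat.cast_ne_zero.2 hG
  rw [prod_binetRoot_zpow, ← Real.exp_add]
  congr 1
  simp only [logForm, Finset.sum_mul, Finset.sum_div, ← Finset.sum_add_distrib]
  refine Finset.sum_congr rfl fun j _ => ?_
  have hdiv : (k j : ℝ) = (k j % G : ℤ) + G * (k j / G : ℤ) := by
    exact_mod_cast (Int.emod_add_mul_ediv (k j) G).symm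
  rw [hdiv]
  push_cast
  rcases N.eq_zero_or_pos with rfl | hN
  · simp
  · field_simp

/-- The parameters of Baker's auxiliary functions
`∑ pᵢ qᵢ(2 L z) exp (logForm root (expo i) * z)` with `L = 2 ^ depth` and integers `pᵢ`, which are
studied on `|z| ≤ radius`; `den` clears the denominators of their derivatives, and `b` holds the
first two coefficients of the linear form in logarithms. -/
structure BakerData (ι : Type*) where
  root : ℝ
  b : Fin 2 → ℤ
  depth : ℕ
  radius : ℕ
  den : ℕ
  poly : ι → Polynomial ℂ
  expo : ι → Fin 3 → ℤ

namespace BakerData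

variable {ι : Type*} (D : BakerData ι)

/-- The bound for the exponents. -/
def L : ℕ := 2 ^ D.depth

/-- The scale in which the logarithms of all occurring quantities are measured. -/
def size : ℕ := D.L * D.radius

/-- The linear form in logarithms that is to be bounded from below. -/
noncomputable def linForm : ℝ := logForm D.root ![D.b 0, D.b 1, 1]

/-- The exponential sums that arise by eliminating the third logarithm with the help of
`linForm`. -/
noncomputable def family : ExpPolyFamily ι (Fin 2) where
  scale := 2 * D.L
  poly := D.poly
  slope i j := D.expo i j.castSucc - D.b j * D.expo i 2
  rate j := Real.log (binetBase D.root j.castSucc)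

/-- Baker's auxiliary function and its derivatives, formed with the exact frequencies. -/
noncomputable def auxSum (U : Finset ι) (p : ι → ℤ) (t₀ : ℕ) (t : Fin 2 → ℕ) (z : ℂ) : ℂ :=
  ∑ i ∈ U, p i * D.family.term i t₀ t z * Complex.exp (logForm D.root (D.expo i) * z)

lemma freq_add_mul_linForm (i : ι) :
    D.family.freq i + D.expo i 2 * D.linForm = logForm D.root (D.expo i) := by
  simp only [ExpPolyFamily.freq, family, linForm, logForm, Fin.sum_univ_two, Fin.sum_univ_three,
    Fin.castSucc_zero, Fin.castSucc_one, Matrix.cons_val]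
  push_cast
  ring

lemma auxSum_eq_sum (U : Finset ι) (p : ι → ℤ) (t₀ : ℕ) (t : Fin 2 → ℕ) (z : ℂ) :
    D.auxSum U p t₀ t z =
      D.family.sum U (fun i => p i * Complex.exp (D.expo i 2 * D.linForm * z)) t₀ t z :=
  Finset.sum_congr rfl fun i _ => by
    rw [← freq_add_mul_linForm, add_mul, Complex.exp_add]
    ring

/-- The size restrictions on the parameters under which the extrapolation argument works. -/
structure Admissible [Fintype ι] : Prop where
  root_eq : D.root ^ 3 - D.root ^ 2 - D.root - 1 = 0
  lt_root : 1.839 < D.root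
  root_lt : D.root < 1.84
  le_radius : 10240 ≤ D.radius
  even_radius : Even D.radius
  den_pos : 0 < D.den
  integral (i : ι) (t : ℕ) (u : ℤ) :
    ∃ c : ℤ, (D.den : ℂ) ^ t * (Polynomial.hasseDeriv t (D.poly i)).eval (u : ℂ) = c
  expo_mem (i : ι) (j : Fin 3) : D.expo i j ∈ Set.Ico (-(D.L : ℤ)) D.L
  norm_term_le (i : ι) (t₀ : ℕ) (t : Fin 2 → ℕ) (ht : t₀ + ∑ j, t j < 320 * D.L) (z : ℂ)
    (hz : ‖z‖ ≤ 30 * D.radius) :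
    (D.den : ℝ) ^ t₀ * ‖D.family.term i t₀ t z‖ ≤ Real.exp (3.5 * D.size)
  den_pow_le (t : ℕ) (ht : t < 320 * D.L) : (D.den : ℝ) ^ t ≤ Real.exp (2 * D.size)
  card_le : (Fintype.card ι : ℝ) ≤ Real.exp (0.2 * D.size)

variable {D}

namespace Admissible

variable [Fintype ι] (hD : D.Admissible)
include hD

lemma L_mul_le_size : 10240 * D.L ≤ D.size := by
  rw [mul_comm, size]
  exact Nat.mul_le_mul_left _ hD.le_radius

lemma le_size : 10240 ≤ D.size :=
  (Nat.le_mul_of_pos_right _ (by unfold L; positivity)).trans hD.L_mul_le_size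

lemma exists_int_pow_mul_term (i : ι) (t₀ : ℕ) (t : Fin 2 → ℕ) {z : ℂ} {u : ℤ}
    (hz : 2 * D.L * z = u) : ∃ c : ℤ, (c : ℂ) = D.den ^ t₀ * D.family.term i t₀ t z := by
  obtain ⟨c, hc⟩ := hD.integral i t₀ u
  refine ⟨c * ∏ j, (D.expo i j.castSucc - D.b j * D.expo i 2) ^ t j, ?_⟩
  rw [ExpPolyFamily.term, ← mul_assoc]
  change _ = D.den ^ t₀ * (Polynomial.hasseDeriv t₀ (D.poly i)).eval (2 * D.L * z) *
    ∏ j : Fin 2, ((D.expo i j.castSucc : ℂ) - D.b j * D.expo i 2) ^ t j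
  rw [hz, hc]
  push_cast
  rfl

lemma norm_term_le_exp (i : ι) {t₀ : ℕ} {t : Fin 2 → ℕ} (ht : t₀ + ∑ j, t j < 320 * D.L)
    {z : ℂ} (hz : ‖z‖ ≤ 30 * D.radius) : ‖D.family.term i t₀ t z‖ ≤ Real.exp (3.5 * D.size) :=
  (le_mul_of_one_le_left (norm_nonneg _)
    (one_le_pow₀ (Nat.one_le_cast.2 hD.den_pos))).trans (hD.norm_term_le i t₀ t ht z hz)

lemma sum_abs_mul_le {p : ι → ℤ} (hp : ∀ i, |p i| ≤ 3 ^ (2 * D.size)) (U : Finset ι)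
    {B : ι → ℝ} (hB₀ : ∀ i, 0 ≤ B i) (hB : ∀ i, B i ≤ Real.exp (3.5 * D.size)) :
    ∑ i ∈ U, |(p i : ℝ)| * B i ≤ Real.exp (6 * D.size) := by
  have hthree : (3 : ℝ) ≤ Real.exp 1.1 := by
    rw [show (1.1 : ℝ) = 1 + 0.1 by norm_num, Real.exp_add]
    nlinarith [Real.exp_one_gt_d9, Real.quadratic_le_exp_of_nonneg (x := 0.1) (by norm_num)]
  have hpow : (3 : ℝ) ^ (2 * D.size) ≤ Real.exp (2.2 * D.size) := by
    refine (pow_le_pow_left₀ (by norm_num) hthree _).trans_eq ?_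
    rw [← Real.exp_nat_mul]
    push_cast
    ring_nf
  calc ∑ i ∈ U, |(p i : ℝ)| * B i
      ≤ ∑ _i : ι, Real.exp (2.2 * D.size) * Real.exp (3.5 * D.size) := by
        refine (Finset.sum_le_univ_sum_of_nonneg fun i => mul_nonneg (abs_nonneg _) (hB₀ i)).trans
          (Finset.sum_le_sum fun i _ => mul_le_mul ?_ (hB i) (hB₀ i) (Real.exp_nonneg _))
        exact le_trans (by exact_mod_cast hp i) hpow
    _ ≤ Real.exp (0.2 * D.size) * (Real.exp (2.2 * D.size) * Real.exp (3.5 * D.size)) := by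
        rw [Finset.sum_const, nsmul_eq_mul, Finset.card_univ]
        gcongr
        exact hD.card_le
    _ ≤ Real.exp (6 * D.size) := by
        rw [← Real.exp_add, ← Real.exp_add, Real.exp_le_exp]
        linarith [D.size.cast_nonneg (α := ℝ)]

lemma abs_expo_le (i : ι) (j : Fin 3) : |(D.expo i j : ℝ)| ≤ D.L := by
  obtain ⟨hl, hu⟩ := hD.expo_mem i j
  exact_mod_cast abs_le.2 ⟨hl, hu.le⟩

lemma abs_expo_div_le {G d : ℕ} (hG : G ≠ 0) (hGd : G * d = D.L) (i : ι) (j : Fin 3) :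
    |D.expo i j / G| ≤ d := by
  obtain ⟨hl, hu⟩ := hD.expo_mem i j
  have hG' : (0 : ℤ) < G := by omega
  have hL : (D.L : ℤ) = d * G := by rw [← hGd]; push_cast; ring
  rw [abs_le, Int.le_ediv_iff_mul_le hG', neg_mul, ← hL]
  exact ⟨hl, (Int.ediv_lt_of_lt_mul hG' (hL ▸ hu)).le⟩

end Admissible

end BakerData

lemma norm_intCast_div_le {𝕜 : Type*} [RCLike 𝕜] {N G S : ℕ} {s : ℤ}
    (hs : |s| ≤ N * (G * S)) : ‖(s : 𝕜) / (N * G)‖ ≤ S := by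
  have hs' : |(s : ℝ)| ≤ N * (G * S) := by exact_mod_cast hs
  rw [norm_div, norm_mul, RCLike.norm_natCast, RCLike.norm_natCast]
  refine div_le_of_le_mul₀ (by positivity) (by positivity) ?_
  calc ‖(s : 𝕜)‖ = |(s : ℝ)| := by
        rw [← RCLike.ofReal_intCast, RCLike.norm_ofReal]
    _ ≤ S * (N * G) := by linarith

namespace BakerData.Admissible

variable {ι : Type*} {D : BakerData ι} [Fintype ι] (hD : D.Admissible)
include hD

lemma exists_pow_mul_auxSum_eq {N G d : ℕ} (hN : N ∣ 2) (hG : G ≠ 0) (hGd : G * d = D.L)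
    {U : Finset ι} {k : Fin 3 → ℤ} (hU : ∀ i ∈ U, ∀ j, D.expo i j ≡ k j [ZMOD G]) (p : ι → ℤ)
    (t₀ : ℕ) (t : Fin 2 → ℕ) (s : ℤ) :
    ∃ C : ι → ℤ, (∀ i, (C i : ℂ) = D.den ^ t₀ * D.family.term i t₀ t (s / (N * G))) ∧
      D.den ^ t₀ * D.auxSum U p t₀ t (s / (N * G)) =
        ((Real.exp (logForm D.root (fun j => k j % G) * (s / (N * G))) *
          ∑ i ∈ U, ((p i * C i : ℤ) : ℝ) *
            ∏ j, binetRoot D.root N j ^ (D.expo i j / G * s) : ℝ) : ℂ) := by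
  obtain ⟨c, hc⟩ := hN
  have hpoint : 2 * D.L * ((s : ℂ) / (N * G)) = (c * d * s : ℤ) := by
    have htwo : (2 : ℂ) = N * c := by exact_mod_cast hc
    have hL : (D.L : ℂ) = G * d := by exact_mod_cast hGd.symm
    have hN' : (N : ℂ) ≠ 0 := left_ne_zero_of_mul (htwo ▸ two_ne_zero)
    have hG' : (G : ℂ) ≠ 0 := Nat.cast_ne_zero.2 hG
    rw [htwo, hL]
    push_cast
    field_simp
  choose C hC using fun i => hD.exists_int_pow_mul_term i t₀ t hpoint
  refine ⟨C, hC, ?_⟩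
  rw [auxSum, Finset.mul_sum, Finset.mul_sum, Complex.ofReal_sum]
  refine Finset.sum_congr rfl fun i hi => ?_
  have hexp : Complex.exp (logForm D.root (D.expo i) * (s / (N * G))) =
      ((Real.exp (logForm D.root (fun j => k j % G) * (s / (N * G))) *
        ∏ j, binetRoot D.root N j ^ (D.expo i j / G * s) : ℝ) : ℂ) := by
    rw [← funext fun j => hU i hi j, ← exp_logForm_mul_div D.root hG]
    push_cast
    rfl
  rw [hexp]
  push_cast
  rw [hC]
  ring

lemma abs_logForm_emod_mul_le {N G d : ℕ} (hG : G ≠ 0) (hGd : G * d = D.L)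
    (k : Fin 3 → ℤ) {s : ℤ} (hs : |s| ≤ N * (G * D.radius)) :
    |logForm D.root (fun j => k j % G) * (s / (N * G))| ≤ 1.395 * D.size := by
  have hmod (j : Fin 3) : |((k j % G : ℤ) : ℝ)| ≤ G := by
    have hpos : (0 : ℤ) < G := by omega
    rw [abs_of_nonneg (by exact_mod_cast Int.emod_nonneg _ hpos.ne')]
    exact_mod_cast (Int.emod_lt_of_pos _ hpos).le
  have hGL : G ≤ D.L := Nat.le_of_dvd (by unfold BakerData.L; positivity) ⟨d, hGd.symm⟩
  rw [abs_mul]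
  calc _ ≤ 1.395 * (G : ℝ) * D.radius :=
        mul_le_mul (abs_logForm_le hD.lt_root hD.root_lt hmod) (norm_intCast_div_le (𝕜 := ℝ) hs)
          (abs_nonneg _) (by positivity)
    _ ≤ 1.395 * D.size := by
        rw [mul_assoc]
        gcongr
        exact_mod_cast Nat.mul_le_mul_right _ hGL

lemma abs_expo_div_mul_le {N G d : ℕ} (hG : G ≠ 0) (hGd : G * d = D.L) {s : ℤ}
    (hs : |s| ≤ N * (G * D.radius)) (i : ι) (j : Fin 3) :
    |D.expo i j / G * s| ≤ N * D.size := by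
  rw [abs_mul, BakerData.size, ← hGd]
  calc _ ≤ (d : ℤ) * (N * (G * D.radius)) := mul_le_mul (hD.abs_expo_div_le hG hGd i j) hs
        (abs_nonneg _) (by positivity)
    _ = _ := by push_cast; ring

lemma sum_abs_mul_int_le {p : ι → ℤ} (hp : ∀ i, |p i| ≤ 3 ^ (2 * D.size)) (U : Finset ι)
    {t₀ : ℕ} {t : Fin 2 → ℕ} (ht : t₀ + ∑ j, t j < 320 * D.L) {z : ℂ} (hz : ‖z‖ ≤ 30 * D.radius)
    {C : ι → ℤ} (hC : ∀ i, (C i : ℂ) = D.den ^ t₀ * D.family.term i t₀ t z) :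
    ∑ i ∈ U, |((p i * C i : ℤ) : ℝ)| ≤ Real.exp (6 * D.size) := by
  simp only [Int.cast_mul, abs_mul]
  refine hD.sum_abs_mul_le hp U (fun i => abs_nonneg _) fun i => ?_
  rw [← Real.norm_eq_abs, ← Complex.norm_real, Complex.ofReal_intCast, hC, norm_mul, norm_pow,
    Complex.norm_natCast]
  exact hD.norm_term_le i t₀ t ht z hz

/-- Liouville's inequality: at rational points the auxiliary function cannot be small without
vanishing. -/
lemma auxSum_eq_zero_of_norm_lt {N G d : ℕ} (hN : N ∣ 2) (hG : G ≠ 0) (hGd : G * d = D.L)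
    {U : Finset ι} {k : Fin 3 → ℤ} (hU : ∀ i ∈ U, ∀ j, D.expo i j ≡ k j [ZMOD G]) {p : ι → ℤ}
    (hp : ∀ i, |p i| ≤ 3 ^ (2 * D.size)) {t₀ : ℕ} {t : Fin 2 → ℕ} (ht : t₀ + ∑ j, t j < 320 * D.L)
    {s : ℤ} (hs : |s| ≤ N * (G * D.radius))
    (hsmall : ‖D.auxSum U p t₀ t (s / (N * G))‖ *
      Real.exp ((5.32 + 10.06 * (6 * N ^ 3 - 1 : ℕ)) * D.size) < 1) :
    D.auxSum U p t₀ t (s / (N * G)) = 0 := by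
  have hN₀ : N ≠ 0 := ne_zero_of_dvd_ne_zero two_ne_zero hN
  obtain ⟨C, hC, hsum⟩ := hD.exists_pow_mul_auxSum_eq hN hG hGd hU p t₀ t s
  set σ := ∑ i ∈ U, ((p i * C i : ℤ) : ℝ) * ∏ j, binetRoot D.root N j ^ (D.expo i j / G * s)
  set θ := logForm D.root (fun j => k j % G) * (s / (N * G))
  set y := D.auxSum U p t₀ t (s / (N * G))
  have hθ : |θ| ≤ 1.395 * D.size := hD.abs_logForm_emod_mul_le hG hGd k hs
  have hσ : |σ| ≤ Real.exp (3.395 * D.size) * ‖y‖ := by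
    have hnorm := congrArg norm hsum
    rw [norm_mul, norm_pow, Complex.norm_natCast, Complex.norm_real, Real.norm_eq_abs, abs_mul,
      Real.abs_exp] at hnorm
    calc |σ| = Real.exp (-θ) * (D.den ^ t₀ * ‖y‖) := by
          rw [hnorm, ← mul_assoc, ← Real.exp_add, neg_add_cancel, Real.exp_zero, one_mul]
      _ ≤ Real.exp (1.395 * D.size) * (Real.exp (2 * D.size) * ‖y‖) := by
          gcongr
          · exact (neg_le_abs θ).trans hθ
          · exact hD.den_pow_le t₀ (by omega)
      _ = Real.exp (3.395 * D.size) * ‖y‖ := by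
          rw [← mul_assoc, ← Real.exp_add]
          ring_nf
  by_contra hne
  have hσ₀ : σ ≠ 0 := fun h => by
    rw [h, mul_zero, Complex.ofReal_zero] at hsum
    exact hne ((mul_eq_zero.1 hsum).resolve_left
      (pow_ne_zero _ (Nat.cast_ne_zero.2 hD.den_pos.ne')))
  refine hsmall.not_ge ?_
  calc 1 ≤ |σ| * Real.exp (1.92 * D.size) *
        (Real.exp (6 * D.size) * Real.exp (4.06 * D.size)) ^ (6 * N ^ 3 - 1) :=
        one_le_abs_sum_mul_prod_zpow hD.root_eq hD.lt_root hD.root_lt hN₀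
          (binetRoot_pow hD.lt_root hD.root_lt hN₀)
          (fun i _ j => by exact_mod_cast hD.abs_expo_div_mul_le hG hGd hs i j)
          (Real.one_le_exp (by positivity))
          (hD.sum_abs_mul_int_le hp U ht ((norm_intCast_div_le hs).trans (by linarith)) hC) hσ₀
    _ ≤ Real.exp (3.395 * D.size) * ‖y‖ * Real.exp (1.92 * D.size) *
        (Real.exp (6 * D.size) * Real.exp (4.06 * D.size)) ^ (6 * N ^ 3 - 1) := by gcongr
    _ = ‖y‖ * Real.exp (3.395 * D.size + 1.92 * D.size +
        (6 * N ^ 3 - 1 : ℕ) * (6 * D.size + 4.06 * D.size)) := by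
        rw [Real.exp_add, Real.exp_add, Real.exp_nat_mul, Real.exp_add]
        ring
    _ ≤ ‖y‖ * Real.exp ((5.32 + 10.06 * (6 * N ^ 3 - 1 : ℕ)) * D.size) := by
        gcongr
        nlinarith [D.size.cast_nonneg (α := ℝ)]

end BakerData.Admissible

lemma extrapolation_ratio_pow_le (n : ℕ) :
    (((30 : ℝ) ^ 2 - 1)⁻¹) ^ (80 * n) ≤ Real.exp (-540 * n) := by
  have hbase : Real.exp 6.75 ≤ 30 ^ 2 - 1 := by
    refine le_of_pow_le_pow_left₀ four_ne_zero (by norm_num) ?_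
    rw [← Real.exp_nat_mul, show ((4 : ℕ) : ℝ) * 6.75 = (27 : ℕ) * 1 by norm_num,
      Real.exp_nat_mul]
    refine (pow_le_pow_left₀ (Real.exp_nonneg _) Real.exp_one_lt_d9.le _).trans ?_
    norm_num
  calc (((30 : ℝ) ^ 2 - 1)⁻¹) ^ (80 * n) ≤ (Real.exp 6.75)⁻¹ ^ (80 * n) := by gcongr
    _ = Real.exp (-540 * n) := by
      rw [← Real.exp_neg, ← Real.exp_nat_mul]
      push_cast
      ring_nf

namespace BakerData

variable {ι : Type*} {D : BakerData ι}

/-- A stage of the Kummer descent: the exponents in `U` agree modulo `G`, and the auxiliary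
function restricted to `U` vanishes to order `T` at the fractions `s / G` with odd numerator. -/
structure IsStage (D : BakerData ι) (p : ι → ℤ) (G T : ℕ) (U : Finset ι) : Prop where
  nonempty : U.Nonempty
  modEq (i : ι) (hi : i ∈ U) (i' : ι) (hi' : i' ∈ U) (j : Fin 3) :
    D.expo i j ≡ D.expo i' j [ZMOD G]
  auxSum_eq_zero (s : ℤ) (hs : Odd s) (hsG : |s| < G * D.radius) (t₀ : ℕ) (t : Fin 2 → ℕ)
    (ht : t₀ + ∑ j, t j < T) : D.auxSum U p t₀ t (s / G) = 0

namespace Admissible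

variable [Fintype ι] (hD : D.Admissible)
include hD

lemma norm_freq_le (hΛ : |D.linForm| ≤ Real.exp (-10000 * D.size)) (i : ι) :
    ‖D.family.freq i‖ ≤ 1.4 * D.L := by
  have hlog := abs_logForm_le hD.lt_root hD.root_lt (hD.abs_expo_le i)
  have hsmall : |D.linForm| ≤ 0.005 := hΛ.trans <| by
    rw [neg_mul, Real.exp_neg]
    refine inv_le_of_inv_le₀ (by norm_num) ?_
    have hsize : (10240 : ℝ) ≤ D.size := by exact_mod_cast hD.le_size
    linarith [Real.add_one_le_exp (10000 * (D.size : ℝ))]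
  have hfreq : D.family.freq i =
      ((logForm D.root (D.expo i) - D.expo i 2 * D.linForm : ℝ) : ℂ) := by
    push_cast
    rw [← D.freq_add_mul_linForm i, add_sub_cancel_right]
  rw [hfreq, Complex.norm_real]
  calc _ ≤ |logForm D.root (D.expo i)| + |(D.expo i 2 : ℝ)| * |D.linForm| := by
        rw [← abs_mul]
        exact abs_sub _ _
    _ ≤ 1.395 * D.L + D.L * 0.005 := by
        gcongr
        exact hD.abs_expo_le i 2
    _ = 1.4 * D.L := by ring

lemma flatId_bound_le {G d : ℕ} (hG : G ≠ 0) (hGd : G * d = D.L) :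
    2 + G * (30 * D.radius) + 4 * (80 * d : ℕ) *
      Real.exp (Real.pi * (80 * d : ℕ) * (G * (30 * D.radius) + 1)) ≤
        Real.exp (7560 * D.size) := by
  have hsize : (10240 : ℝ) ≤ D.size := by exact_mod_cast hD.le_size
  have hL : 10240 * (D.L : ℝ) ≤ D.size := by exact_mod_cast hD.L_mul_le_size
  have hdL : (d : ℝ) ≤ D.L := by
    exact_mod_cast hGd ▸ Nat.le_mul_of_pos_left d (Nat.pos_of_ne_zero hG)
  have hP : (D.size : ℝ) = G * d * D.radius := by
    rw [BakerData.size, ← hGd]; push_cast; ring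
  have hGS : (G : ℝ) * (30 * D.radius) ≤ 30 * D.size := by
    have hGL : (G : ℝ) ≤ D.L := by
      exact_mod_cast Nat.le_of_dvd (by unfold BakerData.L; positivity) ⟨d, hGd.symm⟩
    rw [BakerData.size]
    push_cast
    nlinarith [D.radius.cast_nonneg (α := ℝ)]
  have hexpo : Real.pi * (80 * d : ℕ) * (G * (30 * D.radius) + 1) ≤ 7540 * D.size :=
    calc Real.pi * (80 * d : ℕ) * (G * (30 * D.radius) + 1)
        = Real.pi * (2400 * D.size + 80 * d) := by rw [hP]; push_cast; ring
      _ ≤ 3.1416 * (2400 * D.size + 80 * d) := by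
        gcongr
        exact Real.pi_lt_d4.le
      _ ≤ 7540 * D.size := by linarith
  have hone : 1 ≤ Real.exp (7540 * D.size) := Real.one_le_exp (by positivity)
  calc _ ≤ (2 + 30 * D.size) * Real.exp (7540 * D.size) +
        4 * (80 * d : ℕ) * Real.exp (7540 * D.size) := by
        gcongr
        nlinarith
    _ ≤ Real.exp (20 * D.size) * Real.exp (7540 * D.size) := by
        rw [← add_mul]
        gcongr
        push_cast
        have := Real.quadratic_le_exp_of_nonneg (x := 20 * D.size) (by positivity)
        nlinarith
    _ = Real.exp (7560 * D.size) := by rw [← Real.exp_add]; ring_nf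

lemma extrapolation_exponents_le {G d : ℕ} (hGd : G * d = D.L) {ε : ℝ} (hε₀ : 0 ≤ ε)
    (hε : ε ≤ Real.exp (-2439 * D.size)) :
    Real.exp (6 * D.size) * Real.exp (1.4 * D.L * (30 * D.radius) + 1) *
        (((30 : ℝ) ^ 2 - 1)⁻¹) ^ (G * (D.radius / 2) * (2 * (80 * d))) +
      Real.exp (6 * D.size) * Real.exp (1.4 * D.L * D.radius) * (4 * ε) ≤
        Real.exp (-490 * D.size) := by
  have hsize : (10240 : ℝ) ≤ D.size := by exact_mod_cast hD.le_size
  have hP : (D.L : ℝ) * D.radius = D.size := by rw [BakerData.size]; push_cast; ring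
  have hcount : G * (D.radius / 2) * (2 * (80 * d)) = 80 * D.size := by
    rw [BakerData.size, ← hGd]
    nth_rewrite 2 [← Nat.div_two_mul_two_of_even hD.even_radius]
    ring
  have hfirst : Real.exp (6 * D.size) * Real.exp (1.4 * D.L * (30 * D.radius) + 1) *
      (((30 : ℝ) ^ 2 - 1)⁻¹) ^ (G * (D.radius / 2) * (2 * (80 * d))) ≤
        Real.exp (-490 * D.size - 1) := by
    rw [hcount]
    refine (mul_le_mul_of_nonneg_left (extrapolation_ratio_pow_le D.size) (by positivity)).trans ?_
    rw [← Real.exp_add, ← Real.exp_add, Real.exp_le_exp]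
    linarith
  have hsecond : Real.exp (6 * D.size) * Real.exp (1.4 * D.L * D.radius) * (4 * ε) ≤
      Real.exp (-490 * D.size - 1) := by
    have hfour : (4 : ℝ) ≤ Real.exp 3 := by linarith [Real.add_one_le_exp (3 : ℝ)]
    refine (mul_le_mul_of_nonneg_left (mul_le_mul hfour hε hε₀ (Real.exp_nonneg _))
      (by positivity)).trans ?_
    rw [← Real.exp_add, ← Real.exp_add, ← Real.exp_add, Real.exp_le_exp]
    linarith
  calc _ ≤ 2 * Real.exp (-490 * D.size - 1) := by linarith
    _ ≤ Real.exp 1 * Real.exp (-490 * D.size - 1) := by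
        gcongr
        linarith [Real.add_one_le_exp (1 : ℝ)]
    _ = Real.exp (-490 * D.size) := by rw [← Real.exp_add]; ring_nf

lemma norm_auxSum_le (hΛ : |D.linForm| ≤ Real.exp (-10000 * D.size)) {p : ι → ℤ}
    (hp : ∀ i, |p i| ≤ 3 ^ (2 * D.size)) {G d : ℕ} (hG : G ≠ 0) (hGd : G * d = D.L)
    {U : Finset ι} (hU : D.IsStage p G (320 * d) U) {t₀ : ℕ} {t : Fin 2 → ℕ}
    (ht : t₀ + ∑ j, t j < 160 * d) {x : ℝ} (hx : |x| ≤ D.radius) :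
    ‖D.auxSum U p t₀ t x‖ ≤ Real.exp (-490 * D.size) := by
  set V := Real.exp (7560 * D.size)
  set Θ := D.L * |D.linForm|
  have hsize : (10240 : ℝ) ≤ D.size := by exact_mod_cast hD.le_size
  have hΘV : Θ * V ≤ Real.exp (-2439 * D.size) := by
    have hL : (D.L : ℝ) ≤ Real.exp D.size := by
      have := hD.L_mul_le_size
      have hLP : (D.L : ℝ) ≤ D.size := by exact_mod_cast (by omega : D.L ≤ D.size)
      linarith [Real.add_one_le_exp (D.size : ℝ)]
    calc Θ * V ≤ Real.exp D.size * Real.exp (-10000 * D.size) * V :=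
          mul_le_mul_of_nonneg_right (mul_le_mul hL hΛ (abs_nonneg _) (Real.exp_nonneg _))
            (Real.exp_nonneg _)
      _ = Real.exp (-2439 * D.size) := by
        rw [← Real.exp_add, ← Real.exp_add]
        ring_nf
  have hΘ (i : ι) : ‖(D.expo i 2 * D.linForm : ℂ)‖ ≤ Θ := by
    rw [norm_mul, Complex.norm_intCast, Complex.norm_real]
    exact mul_le_mul_of_nonneg_right (hD.abs_expo_le i 2) (abs_nonneg _)
  have hzero (s : ℤ) (hs : Odd s) (hsG : |s| < G * D.radius) (u₀ : ℕ) (u : Fin 2 → ℕ)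
      (hu : u₀ + ∑ j, u j < 4 * (80 * d)) : D.family.sum U
        (fun i => p i * Complex.exp (D.expo i 2 * D.linForm * (s / G))) u₀ u (s / G) = 0 := by
    rw [← D.auxSum_eq_sum]
    exact hU.auxSum_eq_zero s hs hsG u₀ u (by omega)
  have hdL : d ≤ D.L := hGd ▸ Nat.le_mul_of_pos_left d (Nat.pos_of_ne_zero hG)
  have hM (z : ℂ) (hz : ‖z‖ ≤ 30 * D.radius) :
      ∑ i ∈ U, ‖p i * D.family.term i t₀ t z‖ ≤ Real.exp (6 * D.size) := by
    simp only [norm_mul, Complex.norm_intCast]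
    exact hD.sum_abs_mul_le hp U (fun i => norm_nonneg _)
      fun i => hD.norm_term_le_exp i (by omega) hz
  rw [D.auxSum_eq_sum]
  exact (D.family.norm_sum_exp_mul_le_of_forall_eq_zero hG (by have := hD.le_radius; omega)
    (by norm_num) (by omega) hM (fun i _ => hD.norm_freq_le hΛ i) (by positivity)
    (fun i _ => hΘ i) (hD.flatId_bound_le hG hGd)
    (hΘV.trans (Real.exp_le_one_iff.2 (by linarith))) hzero hx).trans
    (hD.extrapolation_exponents_le hGd (by positivity) hΘV)

end Admissible

end BakerData

lemma ediv_mul_odd_modEq_two_iff {G : ℕ} (hG : G ≠ 0) {a b s : ℤ} (hab : a ≡ b [ZMOD G])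
    (hs : Odd s) : a / G * s ≡ b / G * s [ZMOD 2] ↔ a ≡ b [ZMOD (2 * G : ℕ)] := by
  have hG' : (G : ℤ) ≠ 0 := Int.natCast_ne_zero.2 hG
  have hdiff : b - a = G * (b / G - a / G) := by
    have ha := Int.emod_add_mul_ediv a G
    have hb := Int.emod_add_mul_ediv b G
    rw [hab] at ha
    linarith
  rw [Int.modEq_iff_dvd, Int.modEq_iff_dvd, ← sub_mul, ← even_iff_two_dvd, Int.even_mul,
    or_iff_left (Int.not_even_iff_odd.2 hs), even_iff_two_dvd, hdiff, mul_comm 2 G, Nat.cast_mul,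
    mul_dvd_mul_iff_left hG', Nat.cast_two]

namespace BakerData.Admissible

variable {ι : Type*} {D : BakerData ι} [Fintype ι] (hD : D.Admissible)
include hD

lemma auxSum_halfInt_eq_zero (hΛ : |D.linForm| ≤ Real.exp (-10000 * D.size)) {p : ι → ℤ}
    (hp : ∀ i, |p i| ≤ 3 ^ (2 * D.size)) {G d : ℕ} (hG : G ≠ 0) (hGd : G * d = D.L)
    {U : Finset ι} (hU : D.IsStage p G (320 * d) U) {s : ℤ} (hs : |s| ≤ 2 * (G * D.radius))
    {t₀ : ℕ} {t : Fin 2 → ℕ} (ht : t₀ + ∑ j, t j < 160 * d) :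
    D.auxSum U p t₀ t (s / ((2 : ℕ) * G)) = 0 := by
  obtain ⟨i₀, hi₀⟩ := hU.nonempty
  have hdL : d ≤ D.L := hGd ▸ Nat.le_mul_of_pos_left d (Nat.pos_of_ne_zero hG)
  refine hD.auxSum_eq_zero_of_norm_lt dvd_rfl hG hGd (fun i hi => hU.modEq i hi i₀ hi₀) hp
    (by omega) hs ?_
  have hx : |(s : ℝ) / ((2 : ℕ) * G)| ≤ D.radius := norm_intCast_div_le (𝕜 := ℝ) hs
  have hsmall := hD.norm_auxSum_le hΛ hp hG hGd hU ht hx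
  push_cast at hsmall ⊢
  refine (mul_le_mul_of_nonneg_right hsmall (Real.exp_nonneg _)).trans_lt ?_
  rw [← Real.exp_add, Real.exp_lt_one_iff]
  have hsize : (10240 : ℝ) ≤ D.size := by exact_mod_cast hD.le_size
  norm_num
  linarith

/-- The Kummer step: as the square roots of the bases are independent, the vanishing at odd
multiples of `1 / (2 * G)` passes to each class of exponents modulo `2 * G`. -/
lemma exists_isStage_two_mul (hΛ : |D.linForm| ≤ Real.exp (-10000 * D.size)) {p : ι → ℤ}
    (hp : ∀ i, |p i| ≤ 3 ^ (2 * D.size)) {G d : ℕ} (hG : G ≠ 0) (hGd : G * d = D.L)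
    {U : Finset ι} (hU : D.IsStage p G (320 * d) U) :
    ∃ U' ⊆ U, D.IsStage p (2 * G) (160 * d) U' := by
  obtain ⟨i₀, hi₀⟩ := hU.nonempty
  set U' := {i ∈ U | ∀ j, D.expo i j ≡ D.expo i₀ j [ZMOD (2 * G : ℕ)]}
  refine ⟨U', Finset.filter_subset _ _, ⟨i₀, by simp [U', hi₀]⟩, fun i hi i' hi' j =>
    ((Finset.mem_filter.1 hi).2 j).trans ((Finset.mem_filter.1 hi').2 j).symm,
    fun s hs hsG t₀ t ht => ?_⟩
  have hmod (i : ι) (hi : i ∈ U) (j : Fin 3) : D.expo i j ≡ D.expo i₀ j [ZMOD G] :=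
    hU.modEq i hi i₀ hi₀ j
  have hsG' : |s| ≤ 2 * (G * D.radius) := by push_cast at hsG; linarith
  obtain ⟨C, hC, hsum⟩ := hD.exists_pow_mul_auxSum_eq dvd_rfl hG hGd hmod p t₀ t s
  obtain ⟨C', hC', hsum'⟩ := hD.exists_pow_mul_auxSum_eq dvd_rfl hG hGd
    (fun i hi => hmod i (Finset.filter_subset _ _ hi)) p t₀ t s (U := U')
  obtain rfl : C' = C := funext fun i => by exact_mod_cast (hC' i).trans (hC i).symm
  rw [hD.auxSum_halfInt_eq_zero hΛ hp hG hGd hU hsG' ht, mul_zero, eq_comm,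
    Complex.ofReal_eq_zero, mul_eq_zero, or_iff_right (Real.exp_ne_zero _)] at hsum
  have hδ : tribDenom D.root ≠ 0 := by
    rw [tribDenom]
    nlinarith [hD.lt_root, hD.root_lt]
  have hclass := (kummerIndependent_sqrt_binetBase hD.root_eq hδ (binetRoot_pow hD.lt_root
    hD.root_lt two_ne_zero)).sum_parity_class_eq_zero (fun i _ => intCast_mem _ _) hsum
    (fun j => D.expo i₀ j / G * s)
  have hsum₀ : ∑ i ∈ U', ((p i * C' i : ℤ) : ℝ) *
      ∏ j, binetRoot D.root 2 j ^ (D.expo i j / G * s) = 0 := by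
    rw [← hclass]
    refine Finset.sum_congr (Finset.ext fun i => ?_) fun _ _ => rfl
    simp only [U', Finset.mem_filter]
    exact and_congr_right fun hi => forall_congr' fun j =>
      (ediv_mul_odd_modEq_two_iff hG (hmod i hi j) hs).symm
  rw [hsum₀, mul_zero, Complex.ofReal_zero, mul_eq_zero,
    or_iff_right (pow_ne_zero _ (Nat.cast_ne_zero.2 hD.den_pos.ne'))] at hsum'
  exact_mod_cast hsum'

lemma exists_isStage_two_mul_L (hΛ : |D.linForm| ≤ Real.exp (-10000 * D.size)) {p : ι → ℤ}
    (hp : ∀ i, |p i| ≤ 3 ^ (2 * D.size)) {e G : ℕ} (hG : G ≠ 0) (hGe : G * 2 ^ e = D.L)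
    {U : Finset ι} (hU : D.IsStage p G (320 * 2 ^ e) U) :
    ∃ U' ⊆ U, D.IsStage p (2 * D.L) 160 U' := by
  induction e generalizing G U with
  | zero =>
    rw [← hGe]
    simpa using hD.exists_isStage_two_mul hΛ hp hG hGe hU
  | succ e ih =>
    obtain ⟨U₁, hUU₁, hU₁⟩ := hD.exists_isStage_two_mul hΛ hp hG hGe hU
    rw [show 160 * 2 ^ (e + 1) = 320 * 2 ^ e by ring] at hU₁
    obtain ⟨U', hU', h⟩ := ih (by omega) (by rw [← hGe]; ring) hU₁
    exact ⟨U', hU'.trans hUU₁, h⟩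

lemma expo_eq_of_modEq {i i' : ι} (h : ∀ j, D.expo i j ≡ D.expo i' j [ZMOD (2 * D.L : ℕ)]) :
    D.expo i = D.expo i' := funext fun j => by
  have hi := hD.expo_mem i j
  have hi' := hD.expo_mem i' j
  have hdvd := (h j).dvd
  push_cast at hdvd
  rw [Set.mem_Ico] at hi hi'
  have := Int.eq_zero_of_abs_lt_dvd hdvd (by rw [abs_lt]; omega)
  omega

/-- At the last stage the exponentials have a common value, so only a linear relation between
polynomials of different degrees remains, which would hold at too many points. -/
lemma exists_two_mul_size_le_natDegree {p : ι → ℤ} {U : Finset ι}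
    (hU : D.IsStage p (2 * D.L) 160 U) (hp : ∀ i ∈ U, p i ≠ 0) (hq : ∀ i, D.poly i ≠ 0)
    (hinj : ∀ i i', D.expo i = D.expo i' → (D.poly i).natDegree = (D.poly i').natDegree → i = i') :
    ∃ i ∈ U, 2 * D.size ≤ (D.poly i).natDegree := by
  obtain ⟨i₀, hi₀⟩ := hU.nonempty
  have hexpo (i : ι) (hi : i ∈ U) : D.expo i = D.expo i₀ :=
    hD.expo_eq_of_modEq (hU.modEq i hi i₀ hi₀)
  have hzero (s : ℤ) (hs : Odd s) (hsP : |s| < 2 * D.size) :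
      ∑ i ∈ U, (p i : ℂ) * (D.poly i).eval (s : ℂ) = 0 := by
    have h := hU.auxSum_eq_zero s hs (by rw [BakerData.size] at hsP; push_cast at hsP ⊢; linarith)
      0 0 (by simp)
    have hL : (2 * D.L : ℂ) ≠ 0 := by
      simp [BakerData.L]
    have hterm (i : ι) : D.family.term i 0 0 (s / (2 * D.L : ℕ)) = (D.poly i).eval (s : ℂ) := by
      simp [ExpPolyFamily.term, family, mul_div_cancel₀ _ hL]
    simp only [auxSum, hterm] at h
    rw [Finset.sum_congr rfl fun i hi => by rw [hexpo i hi], ← Finset.sum_mul] at h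
    exact (mul_eq_zero.1 h).resolve_right (Complex.exp_ne_zero _)
  set Z := (Finset.Ico (-(D.size : ℤ)) D.size).image fun i => ((2 * i + 1 : ℤ) : ℂ)
  have hZ : Z.card = 2 * D.size := by
    rw [Finset.card_image_of_injective _ fun a b hab => by
      have : 2 * a + 1 = 2 * b + 1 := by exact_mod_cast hab
      omega, Int.card_Ico]
    omega
  rw [← hZ]
  refine exists_card_le_natDegree_of_sum_eval_eq_zero hU.nonempty (fun i _ => hq i)
    (fun i hi i' hi' h => hinj i i' ((hexpo i hi).trans (hexpo i' hi').symm) h)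
    (a := fun i => (p i : ℂ)) (fun i hi => Int.cast_ne_zero.2 (hp i hi)) fun z hz => ?_
  obtain ⟨i, hi, rfl⟩ := Finset.mem_image.1 hz
  rw [Finset.mem_Ico] at hi
  exact hzero _ ⟨i, rfl⟩ (by rw [abs_lt]; omega)

end BakerData.Admissible

lemma exists_finset_orders (T : ℕ) (hT : 0 < T) : ∃ O : Finset (ℕ × (Fin 2 → ℕ)),
    (∀ t, t ∈ O ↔ t.1 + ∑ j, t.2 j < T) ∧ O.card ≤ (T + 2).choose 3 := by
  obtain ⟨n, rfl⟩ := Nat.exists_eq_add_of_le' hT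
  refine ⟨(Finset.finsuppAntidiag (Finset.univ : Finset (Fin 4)) n).image
    fun f => (f 0, ![f 1, f 2]), fun ⟨t₀, t⟩ => ?_, Finset.card_image_le.trans_eq ?_⟩
  · simp only [Finset.mem_image, Finset.mem_finsuppAntidiag, Prod.mk.injEq, Fin.sum_univ_two,
      Fin.sum_univ_four]
    refine ⟨fun ⟨f, hf, h₀, h⟩ => ?_, fun h => ⟨Finsupp.equivFunOnFinite.symm
      ![t₀, t 0, t 1, n - (t₀ + (t 0 + t 1))], ⟨?_, Finset.subset_univ _⟩, rfl, ?_⟩⟩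
    · rw [← h₀, ← h]
      simp only [Matrix.cons_val]
      omega
    · simp only [Finsupp.equivFunOnFinite_symm_apply_apply, Matrix.cons_val]
      omega
    · ext j
      fin_cases j <;> rfl
  · rw [Finset.card_finsuppAntidiag_nat_eq_choose, Finset.card_univ, Fintype.card_fin,
      ← Nat.choose_symm (by omega)]
    congr 1 <;> omega

lemma le_exp_of_mul_three_pow_le {x c : ℝ} {P : ℕ} (hx : 0 ≤ x) (hc : c ≤ Real.exp (5.1 * P))
    (h : x * ((3 ^ (2 * P) : ℕ) : ℝ) ^ 35 ≤ c * (3 ^ (2 * P) : ℕ)) :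
    x ≤ Real.exp (-62.9 * P) := by
  have hY : (0 : ℝ) < (3 ^ (2 * P) : ℕ) := by positivity
  have hexp : Real.exp (68 * P) ≤ ((3 ^ (2 * P) : ℕ) : ℝ) ^ 34 := by
    rw [show 68 * (P : ℝ) = (2 * P * 34 : ℕ) * 1 by push_cast; ring, Real.exp_nat_mul,
      Nat.cast_pow, ← pow_mul]
    exact pow_le_pow_left₀ (Real.exp_nonneg _)
      (by exact_mod_cast Real.exp_one_lt_d9.le.trans (by norm_num)) _
  rw [pow_succ, ← mul_assoc] at h
  calc x = x * Real.exp (68 * P) * Real.exp (-68 * P) := by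
        rw [mul_assoc, ← Real.exp_add]
        simp
    _ ≤ Real.exp (5.1 * P) * Real.exp (-68 * P) := by
        gcongr
        exact (mul_le_mul_of_nonneg_left hexp hx).trans ((le_of_mul_le_mul_right h hY).trans hc)
    _ = Real.exp (-62.9 * P) := by rw [← Real.exp_add]; ring_nf

namespace BakerData.Admissible

variable {ι : Type*} {D : BakerData ι} [Fintype ι] (hD : D.Admissible)
include hD

lemma exists_real_pow_mul_auxSum_eq {s : ℤ} (hs : |s| ≤ D.radius) {t₀ : ℕ} {t : Fin 2 → ℕ}
    (ht : t₀ + ∑ j, t j < 320 * D.L) :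
    ∃ a : ι → ℝ, (∀ i, |a i| ≤ Real.exp (4.9 * D.size)) ∧ ∀ (U : Finset ι) (p : ι → ℤ),
      D.den ^ t₀ * D.auxSum U p t₀ t s = ((∑ i ∈ U, p i * a i : ℝ) : ℂ) := by
  choose C hC using fun i => hD.exists_int_pow_mul_term i t₀ t (z := s) (u := 2 * D.L * s)
    (by push_cast; ring)
  refine ⟨fun i => C i * Real.exp (logForm D.root (D.expo i) * s), fun i => ?_, fun U p => ?_⟩
  · have hs' : |(s : ℝ)| ≤ D.radius := by exact_mod_cast hs
    have hCi : |(C i : ℝ)| ≤ Real.exp (3.5 * D.size) := by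
      rw [← Real.norm_eq_abs, ← Complex.norm_real, Complex.ofReal_intCast, hC, norm_mul, norm_pow,
        Complex.norm_natCast]
      refine hD.norm_term_le i t₀ t ht _ ?_
      rw [Complex.norm_intCast]
      linarith [abs_nonneg (s : ℝ)]
    have hlog : logForm D.root (D.expo i) * s ≤ 1.395 * D.size := by
      refine (le_abs_self _).trans ?_
      rw [abs_mul, BakerData.size, Nat.cast_mul, ← mul_assoc]
      exact mul_le_mul (abs_logForm_le hD.lt_root hD.root_lt (hD.abs_expo_le i)) hs'
        (abs_nonneg _) (by positivity)
    rw [abs_mul, Real.abs_exp]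
    refine (mul_le_mul hCi (Real.exp_le_exp.2 hlog) (Real.exp_nonneg _)
      (Real.exp_nonneg _)).trans ?_
    rw [← Real.exp_add, Real.exp_le_exp]
    linarith [D.size.cast_nonneg (α := ℝ)]
  · rw [auxSum, Finset.mul_sum]
    push_cast
    refine Finset.sum_congr rfl fun i _ => ?_
    rw [hC]
    ring

lemma exists_coeff_norm_auxSum_le
    (hcard : 35 * (D.radius * (320 * D.L + 2).choose 3) < Fintype.card ι) :
    ∃ p : ι → ℤ, p ≠ 0 ∧ (∀ i, |p i| ≤ 3 ^ (2 * D.size)) ∧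
      ∀ s : ℤ, Odd s → |s| < D.radius → ∀ t₀ t, t₀ + ∑ j, t j < 320 * D.L →
        ‖D.auxSum Finset.univ p t₀ t s‖ ≤ Real.exp (-62.9 * D.size) := by
  obtain ⟨O, hO, hOcard⟩ :=
    exists_finset_orders (320 * D.L) (by unfold BakerData.L; positivity)
  obtain ⟨r, hr⟩ := hD.even_radius
  let κ := Finset.Ico (-(r : ℤ)) r × O
  have hκ : Fintype.card κ ≤ D.radius * (320 * D.L + 2).choose 3 := by
    rw [Fintype.card_prod, Fintype.card_coe, Fintype.card_coe, Int.card_Ico]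
    exact Nat.mul_le_mul (by omega) hOcard
  have hpoint (k : κ) : |2 * (k.1 : ℤ) + 1| ≤ D.radius := by
    have := Finset.mem_Ico.1 k.1.2
    rw [abs_le]
    omega
  choose a ha hsum using fun k : κ =>
    hD.exists_real_pow_mul_auxSum_eq (hpoint k) ((hO k.2).1 k.2.2)
  have hthree : 2 ≤ 3 ^ (2 * D.size) := by
    have := hD.le_size
    exact (Nat.lt_pow_self (by norm_num : 1 < 3)).le.trans' (by omega)
  obtain ⟨p, hp, hpY, hpa⟩ := exists_int_vec_abs_sum_mul_le a (Real.exp_pos _) ha hthree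
    ((Nat.mul_le_mul_left 35 hκ).trans_lt hcard)
  refine ⟨p, hp, by exact_mod_cast hpY, fun s hs hsr t₀ t ht => ?_⟩
  obtain ⟨v, rfl⟩ := hs
  rw [abs_lt] at hsr
  let k : κ := (⟨v, Finset.mem_Ico.2 (by omega)⟩, ⟨(t₀, t), (hO _).2 ht⟩)
  have hle : ‖D.auxSum Finset.univ p t₀ t (2 * v + 1 : ℤ)‖ ≤ |∑ i, p i * a k i| := by
    have hk := congrArg norm (hsum k Finset.univ p)
    rw [norm_mul, norm_pow, Complex.norm_natCast, Complex.norm_real] at hk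
    exact (le_mul_of_one_le_left (norm_nonneg _)
      (one_le_pow₀ (Nat.one_le_cast.2 hD.den_pos))).trans_eq hk
  refine hle.trans (le_exp_of_mul_three_pow_le (abs_nonneg _) ?_ (hpa k))
  rw [show 5.1 * (D.size : ℝ) = 0.2 * D.size + 4.9 * D.size by ring, Real.exp_add]
  exact mul_le_mul_of_nonneg_right hD.card_le (Real.exp_nonneg _)

/-- At integers, the small values of Siegel's lemma vanish by Liouville's inequality. -/
lemma exists_isStage_one
    (hcard : 35 * (D.radius * (320 * D.L + 2).choose 3) < Fintype.card ι) :
    ∃ (p : ι → ℤ) (U : Finset ι), (∀ i, |p i| ≤ 3 ^ (2 * D.size)) ∧ (∀ i ∈ U, p i ≠ 0) ∧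
      D.IsStage p 1 (320 * D.L) U := by
  obtain ⟨p, hp, hpY, hpsmall⟩ := hD.exists_coeff_norm_auxSum_le hcard
  obtain ⟨i₀, hi₀⟩ := Function.ne_iff.1 hp
  refine ⟨p, ({i | p i ≠ 0} : Finset ι), hpY, fun i hi => (Finset.mem_filter.1 hi).2,
    ⟨i₀, by simpa using hi₀⟩, fun i _ i' _ j => by simpa using Int.modEq_one,
    fun s hs hsr t₀ t ht => ?_⟩
  have hsupp : D.auxSum {i | p i ≠ 0} p t₀ t (s / (1 : ℕ)) = D.auxSum Finset.univ p t₀ t s := by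
    rw [auxSum, auxSum, Nat.cast_one, div_one]
    refine Finset.sum_filter_of_ne fun i _ => ?_
    contrapose!
    intro hi
    rw [hi, Int.cast_zero, zero_mul, zero_mul]
  have hzero := hD.auxSum_eq_zero_of_norm_lt (N := 1) (U := Finset.univ) (k := 0) (by norm_num)
    one_ne_zero (one_mul D.L) (fun i _ j => by simpa using Int.modEq_one) hpY ht
    (s := s) (by push_cast at hsr ⊢; linarith)
  simp only [Nat.cast_one, mul_one, div_one, one_mul] at hsr hzero
  rw [hsupp]
  refine hzero ((mul_le_mul_of_nonneg_right (hpsmall s hs hsr t₀ t ht)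
    (Real.exp_nonneg _)).trans_lt ?_)
  rw [← Real.exp_add, Real.exp_lt_one_iff]
  have hsize : (10240 : ℝ) ≤ D.size := by exact_mod_cast hD.le_size
  norm_num
  linarith

/-- Baker's lower bound: the descent from the first to the last stage contradicts the bound for
the number of zeros of a polynomial. -/
lemma lt_abs_linForm (hcard : 35 * (D.radius * (320 * D.L + 2).choose 3) < Fintype.card ι)
    (hq : ∀ i, D.poly i ≠ 0)
    (hinj : ∀ i i', D.expo i = D.expo i' → (D.poly i).natDegree = (D.poly i').natDegree → i = i')
    (hdeg : ∀ i, (D.poly i).natDegree < 2 * D.size) :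
    Real.exp (-10000 * D.size) < |D.linForm| := by
  by_contra! hΛ
  obtain ⟨p, U, hpY, hp, hU⟩ := hD.exists_isStage_one hcard
  obtain ⟨U', hUU', hU'⟩ := hD.exists_isStage_two_mul_L hΛ hpY one_ne_zero (one_mul _) hU
  obtain ⟨i, -, hi⟩ :=
    hD.exists_two_mul_size_le_natDegree hU' (fun i hi => hp i (hUU' hi)) hq hinj
  exact (hdeg i).not_ge hi

end BakerData.Admissible

/-! ### The choice of parameters -/

lemma mem_Ioo_of_trib_root {ω : ℝ} (hω : ω ^ 3 - ω ^ 2 - ω - 1 = 0) :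
    ω ∈ Set.Ioo 1.839 1.84 := by
  have hω₁ : 1 < ω := by
    by_contra! hle
    nlinarith [sq_nonneg (ω - 1), sq_nonneg (ω + 1), mul_nonneg (sub_nonneg.2 hle) (sq_nonneg ω),
      mul_nonneg (sub_nonneg.2 hle) (sq_nonneg (ω + 1))]
  constructor <;> by_contra! hle <;>
    nlinarith [mul_nonneg (sub_nonneg.2 hle) (sq_nonneg ω),
      mul_nonneg (sub_nonneg.2 hle) (sub_nonneg.2 hω₁.le)]

lemma lcmUpto_le_exp (h : ℕ) : (Nat.lcmUpto h : ℝ) ≤ Real.exp (6.2 * h) := by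
  rw [← Real.log_le_iff_le_exp (by exact_mod_cast Nat.lcmUpto_pos h),
    ← Chebyshev.psi_eq_log_lcmUpto]
  refine (Chebyshev.psi_le_const_mul_self h.cast_nonneg).trans ?_
  gcongr
  rw [show (4 : ℝ) = 2 ^ 2 by norm_num, Real.log_pow]
  push_cast
  linarith [Real.log_two_lt_d9]

lemma pow_five_le_exp {x : ℝ} (hx : 10 ^ 9 ≤ x) : x ^ 5 ≤ Real.exp (0.1 * x) := by
  calc x ^ 5 ≤ x ^ 5 * (x / 720000000) :=
        le_mul_of_one_le_right (pow_nonneg (by linarith) 5)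
          (by rw [le_div_iff₀ (by norm_num)]; linarith)
    _ = (0.1 * x) ^ 6 / (Nat.factorial 6 : ℕ) := by norm_num [Nat.factorial]; ring
    _ ≤ Real.exp (0.1 * x) := Real.pow_div_factorial_le_exp _ (by linarith) 6

namespace BakerData

/-- The Baker data whose polynomials are the `deltaPoly h b a` with `a < h` and `b < B`, and whose
exponents run through all triples in `[-L, L)`. -/
noncomputable def ofDelta (ω : ℝ) (b : Fin 2 → ℤ) (depth h B : ℕ) :
    BakerData (Fin B × Fin h × (Fin 3 → Fin (2 * 2 ^ depth))) where
  root := ω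
  b := b
  depth := depth
  radius := 1024 * h
  den := Nat.lcmUpto h
  poly i := deltaPoly h i.1 i.2.1
  expo i j := (i.2.2 j : ℤ) - (2 ^ depth : ℕ)

variable {ω : ℝ} {b : Fin 2 → ℤ} {depth h B : ℕ}

lemma ofDelta_injective {i i' : Fin B × Fin h × (Fin 3 → Fin (2 * 2 ^ depth))}
    (hexpo : (ofDelta ω b depth h B).expo i = (ofDelta ω b depth h B).expo i')
    (hdeg : ((ofDelta ω b depth h B).poly i).natDegree =
      ((ofDelta ω b depth h B).poly i').natDegree) : i = i' := by
  obtain ⟨k, a, x⟩ := i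
  obtain ⟨k', a', x'⟩ := i'
  simp only [ofDelta, natDegree_deltaPoly] at hexpo hdeg
  have hx : x = x' := funext fun j => Fin.ext <| by
    have := congrFun hexpo j
    omega
  have ha : (a : ℕ) = a' := by
    simpa only [Nat.add_mul_mod_self_left, Nat.mod_eq_of_lt a.2, Nat.mod_eq_of_lt a'.2]
      using congrArg (· % h) hdeg
  have hk : (k : ℕ) = k' := Nat.eq_of_mul_eq_mul_left (a.pos) (by omega)
  rw [hx, Fin.ext ha, Fin.ext hk]

lemma natDegree_ofDelta_poly_lt (i : Fin B × Fin h × (Fin 3 → Fin (2 * 2 ^ depth))) :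
    ((ofDelta ω b depth h B).poly i).natDegree < h * B := by
  change (deltaPoly h i.1 i.2.1).natDegree < h * B
  rw [natDegree_deltaPoly]
  calc (i.2.1 : ℕ) + h * i.1 < h + h * i.1 := Nat.add_lt_add_right i.2.1.2 _
    _ = h * (i.1 + 1) := by ring
    _ ≤ h * B := Nat.mul_le_mul_left _ i.1.2

lemma exists_int_eq_hasseDeriv_ofDelta_poly
    (i : Fin B × Fin h × (Fin 3 → Fin (2 * 2 ^ depth))) (t : ℕ) (u : ℤ) :
    ∃ c : ℤ, ((ofDelta ω b depth h B).den : ℂ) ^ t *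
      (Polynomial.hasseDeriv t ((ofDelta ω b depth h B).poly i)).eval (u : ℂ) = c :=
  exists_int_eq_pow_mul_eval_hasseDeriv (deltaPoly_comp_mem_integerPolys (fun j hj =>
    Finset.dvd_lcm (f := id) (Finset.mem_Icc.2 ⟨by omega, by omega⟩)) i.2.1.2.le i.1 u) t

lemma ofDelta_expo_mem (i : Fin B × Fin h × (Fin 3 → Fin (2 * 2 ^ depth))) (j : Fin 3) :
    (ofDelta ω b depth h B).expo i j ∈ Set.Ico (-(2 ^ depth : ℕ) : ℤ) (2 ^ depth : ℕ) := by
  have := (i.2.2 j).2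
  simp only [ofDelta, Set.mem_Ico]
  omega

lemma norm_ofDelta_slope_le (hh : 10 ≤ h) (hb : ∀ j, |(b j : ℝ)| ≤ Real.exp (4 * h))
    (i : Fin B × Fin h × (Fin 3 → Fin (2 * 2 ^ 29))) (j : Fin 2) :
    ‖(ofDelta ω b 29 h B).family.slope i j‖ ≤ Real.exp (6.2 * h) := by
  have hexpo (j : Fin 3) : |((ofDelta ω b 29 h B).expo i j : ℝ)| ≤ 2 ^ 29 := by
    obtain ⟨hl, hu⟩ := ofDelta_expo_mem (ω := ω) (b := b) i j
    exact_mod_cast abs_le.2 ⟨hl, hu.le⟩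
  have hh' : (10 : ℝ) ≤ h := by exact_mod_cast hh
  have hslope : (ofDelta ω b 29 h B).family.slope i j =
      (((ofDelta ω b 29 h B).expo i j.castSucc - b j * (ofDelta ω b 29 h B).expo i 2 : ℝ) : ℂ) := by
    push_cast
    rfl
  rw [hslope, Complex.norm_real, Real.norm_eq_abs]
  calc |((ofDelta ω b 29 h B).expo i j.castSucc - b j * (ofDelta ω b 29 h B).expo i 2 : ℝ)|
      ≤ 1 * 2 ^ 29 + Real.exp (4 * h) * 2 ^ 29 := by
        refine (abs_sub _ _).trans ?_
        rw [abs_mul, one_mul]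
        gcongr
        exacts [hexpo _, hb j, hexpo 2]
    _ ≤ Real.exp (4 * h) * 2 ^ 29 + Real.exp (4 * h) * 2 ^ 29 := by
        gcongr
        exact Real.one_le_exp (by positivity)
    _ = Real.exp (4 * h) * 2 ^ 30 := by ring
    _ ≤ Real.exp (4 * h) * Real.exp 22 := by
        rw [show (22 : ℝ) = (22 : ℕ) * 1 by norm_num, Real.exp_nat_mul]
        gcongr
        exact (by norm_num : (2 : ℝ) ^ 30 ≤ 2.718 ^ 22).trans
          (pow_le_pow_left₀ (by norm_num) (by linarith [Real.exp_one_gt_d9]) 22)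
    _ ≤ Real.exp (6.2 * h) := by
        rw [← Real.exp_add, Real.exp_le_exp]
        linarith

lemma norm_eval_hasseDeriv_ofDelta_poly_le
    (i : Fin 24500000000 × Fin h × (Fin 3 → Fin (2 * 2 ^ 29))) (t : ℕ) {z : ℂ}
    (hz : ‖z‖ ≤ 2 ^ 30 * 30720 * h) :
    ‖(Polynomial.hasseDeriv t ((ofDelta ω b 29 h 24500000000).poly i)).eval z‖ ≤
      Real.exp (1.5 * (2 ^ 39 * h)) := by
  have hh : (1 : ℝ) ≤ h := by exact_mod_cast i.2.1.pos
  have hK : (2 ^ 30 * 30720 + 2 : ℝ) ≤ Real.exp 31.2 := by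
    rw [show (31.2 : ℝ) = (31 : ℕ) * 1 + 0.2 by norm_num, Real.exp_add, Real.exp_nat_mul]
    calc (2 ^ 30 * 30720 + 2 : ℝ) ≤ 2.718 ^ 31 * 1.2 := by norm_num
      _ ≤ Real.exp 1 ^ 31 * Real.exp 0.2 := by
        gcongr
        · linarith [Real.exp_one_gt_d9]
        · linarith [Real.add_one_le_exp (0.2 : ℝ)]
  calc ‖(Polynomial.hasseDeriv t ((ofDelta ω b 29 h 24500000000).poly i)).eval z‖
      ≤ (Real.exp 1 * (2 ^ 30 * 30720 + 2)) ^ (h * 24500000000) :=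
        norm_eval_hasseDeriv_deltaPoly_le i.2.1.2.le i.1.2 (by norm_num) (by linarith) t
    _ ≤ (Real.exp 1 * Real.exp 31.2) ^ (h * 24500000000) := by gcongr
    _ = Real.exp ((h * 24500000000 : ℕ) * (1 + 31.2)) := by
        rw [← Real.exp_add, ← Real.exp_nat_mul]
    _ ≤ Real.exp (1.5 * (2 ^ 39 * h)) := by
        rw [Real.exp_le_exp]
        push_cast
        linarith

lemma exp_pow_le_exp_of_lt {n : ℕ} (hn : n < 320 * 2 ^ 29) :
    Real.exp (6.2 * h) ^ n ≤ Real.exp (2 * (2 ^ 39 * h)) := by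
  rw [← Real.exp_nat_mul, Real.exp_le_exp]
  have hn' : (n : ℝ) ≤ 320 * 2 ^ 29 := by exact_mod_cast hn.le
  have := mul_le_mul_of_nonneg_right hn' (h.cast_nonneg (α := ℝ))
  linarith

lemma norm_ofDelta_term_le (hh : 10 ≤ h) (hb : ∀ j, |(b j : ℝ)| ≤ Real.exp (4 * h))
    (i : Fin 24500000000 × Fin h × (Fin 3 → Fin (2 * 2 ^ 29))) (t₀ : ℕ) (t : Fin 2 → ℕ)
    (ht : t₀ + ∑ j, t j < 320 * 2 ^ 29) {z : ℂ} (hz : ‖z‖ ≤ 30720 * h) :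
    (Nat.lcmUpto h : ℝ) ^ t₀ * ‖(ofDelta ω b 29 h 24500000000).family.term i t₀ t z‖ ≤
      Real.exp (3.5 * (2 ^ 39 * h)) := by
  let D := ofDelta ω b 29 h 24500000000
  have hscale : ‖D.family.scale * z‖ ≤ 2 ^ 30 * 30720 * h := by
    have hnorm : ‖D.family.scale‖ = 2 ^ 30 := by
      change ‖2 * ((2 ^ 29 : ℕ) : ℂ)‖ = 2 ^ 30
      rw [norm_mul, Complex.norm_natCast, Complex.norm_two]
      norm_num
    rw [norm_mul, hnorm, mul_assoc]
    gcongr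
  have hslopes : (Nat.lcmUpto h : ℝ) ^ t₀ * ∏ j, ‖D.family.slope i j‖ ^ t j ≤
      Real.exp (6.2 * h) ^ (t₀ + ∑ j, t j) := by
    rw [pow_add, ← Finset.prod_pow_eq_pow_sum]
    gcongr with j
    exacts [lcmUpto_le_exp h, norm_ofDelta_slope_le hh hb i j]
  calc (Nat.lcmUpto h : ℝ) ^ t₀ * ‖D.family.term i t₀ t z‖
      = ‖(Polynomial.hasseDeriv t₀ (D.poly i)).eval (D.family.scale * z)‖ *
          ((Nat.lcmUpto h : ℝ) ^ t₀ * ∏ j, ‖D.family.slope i j‖ ^ t j) := by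
        rw [ExpPolyFamily.term, norm_mul, norm_prod]
        simp only [norm_pow]
        exact mul_left_comm _ _ _
    _ ≤ Real.exp (1.5 * (2 ^ 39 * h)) * Real.exp (2 * (2 ^ 39 * h)) := by
        gcongr
        · exact norm_eval_hasseDeriv_ofDelta_poly_le i t₀ hscale
        · exact hslopes.trans (exp_pow_le_exp_of_lt ht)
    _ = Real.exp (3.5 * (2 ^ 39 * h)) := by rw [← Real.exp_add]; ring_nf

lemma card_ofDelta_index (depth h B : ℕ) :
    Fintype.card (Fin B × Fin h × (Fin 3 → Fin (2 * 2 ^ depth))) =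
      B * h * (2 * 2 ^ depth) ^ 3 := by
  simp only [Fintype.card_prod, Fintype.card_fun, Fintype.card_fin, mul_assoc]

lemma cast_size_ofDelta : ((ofDelta ω b 29 h B).size : ℝ) = 2 ^ 39 * h := by
  change ((2 ^ 29 * (1024 * h) : ℕ) : ℝ) = 2 ^ 39 * h
  push_cast
  ring

lemma admissible_ofDelta (hω : ω ^ 3 - ω ^ 2 - ω - 1 = 0) (hω₁ : 1.839 < ω) (hω₂ : ω < 1.84)
    (hh : 10 ≤ h) (hb : ∀ j, |(b j : ℝ)| ≤ Real.exp (4 * h)) :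
    (ofDelta ω b 29 h 24500000000).Admissible where
  root_eq := hω
  lt_root := hω₁
  root_lt := hω₂
  le_radius := Nat.mul_le_mul_left 1024 hh
  even_radius := ⟨512 * h, by change 1024 * h = _; ring⟩
  den_pos := Nat.lcmUpto_pos h
  integral := exists_int_eq_hasseDeriv_ofDelta_poly
  expo_mem := ofDelta_expo_mem
  norm_term_le i t₀ t ht z hz := by
    rw [cast_size_ofDelta]
    refine norm_ofDelta_term_le hh hb i t₀ t ht (hz.trans_eq ?_)
    change 30 * ((1024 * h : ℕ) : ℝ) = 30720 * h
    push_cast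
    ring
  den_pow_le t ht := by
    rw [cast_size_ofDelta]
    exact (pow_le_pow_left₀ (Nat.cast_nonneg _) (lcmUpto_le_exp h) t).trans
      (exp_pow_le_exp_of_lt ht)
  card_le := by
    have hh' : (10 : ℝ) ≤ h := by exact_mod_cast hh
    rw [cast_size_ofDelta, show 0.2 * (2 ^ 39 * (h : ℝ)) = 0.1 * (2 ^ 40 * h) by ring]
    refine le_trans ?_ (pow_five_le_exp (by linarith))
    calc (Fintype.card (Fin 24500000000 × Fin h × (Fin 3 → Fin (2 * 2 ^ 29))) : ℝ)
        = 24500000000 * h * (2 * 2 ^ 29) ^ 3 := by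
          rw [card_ofDelta_index]
          norm_num
      _ ≤ (2 ^ 40 * h) * (2 ^ 40 * h) * (2 ^ 40 * h) ^ 3 := by
          gcongr ?_ * ?_ * ?_ ^ 3 <;> linarith
      _ = (2 ^ 40 * h) ^ 5 := by ring

end BakerData

lemma exp_lt_abs_logForm {ω : ℝ} (hω : ω ^ 3 - ω ^ 2 - ω - 1 = 0) {b : Fin 2 → ℤ} {h : ℕ}
    (hh : 10 ≤ h) (hb : ∀ j, |(b j : ℝ)| ≤ Real.exp (4 * h)) :
    Real.exp (-10000 * (2 ^ 39 * h)) < |logForm ω ![b 0, b 1, 1]| := by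
  obtain ⟨hω₁, hω₂⟩ := mem_Ioo_of_trib_root hω
  have hD := BakerData.admissible_ofDelta hω hω₁ hω₂ hh hb
  rw [← BakerData.cast_size_ofDelta (ω := ω) (b := b) (B := 24500000000)]
  refine hD.lt_abs_linForm ?_ (fun i => deltaPoly_ne_zero _ _ _)
    (fun i i' => BakerData.ofDelta_injective)
    (fun i => BakerData.natDegree_ofDelta_poly_lt i |>.trans_le ?_)
  · rw [BakerData.card_ofDelta_index, show (BakerData.ofDelta ω b 29 h _).L = 2 ^ 29 from rfl,
      show (BakerData.ofDelta ω b 29 h _).radius = 1024 * h from rfl]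
    -- `B = 24500000000` is chosen just above `35 * 1024 * 320 ^ 3 / 48` to make this true.
    have hcount : 35 * 1024 * (320 * 2 ^ 29 + 2).choose 3 < 24500000000 * (2 * 2 ^ 29) ^ 3 := by
      rw [Nat.choose_eq_descFactorial_div_factorial]
      norm_num [Nat.descFactorial, Nat.factorial]
    generalize (320 * 2 ^ 29 + 2).choose 3 = c at hcount ⊢
    calc 35 * (1024 * h * c) = h * (35 * 1024 * c) := by ring
      _ < h * (24500000000 * (2 * 2 ^ 29) ^ 3) := Nat.mul_lt_mul_of_pos_left hcount (by omega)
      _ = 24500000000 * h * (2 * 2 ^ 29) ^ 3 := by ring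
  · change h * 24500000000 ≤ 2 * (2 ^ 29 * (1024 * h))
    omega

/-! ### Binet's formulas and the equation -/

lemma two_le_sqrt_five : 2 ≤ √5 := Real.le_sqrt_of_sq_le (by norm_num)

lemma tribDenom_mem_Ioo {ω : ℝ} (hω : ω ^ 3 - ω ^ 2 - ω - 1 = 0) :
    tribDenom ω ∈ Set.Ioo 2.9 3 := by
  obtain ⟨hω₁, hω₂⟩ := mem_Ioo_of_trib_root hω
  constructor <;> unfold tribDenom <;> nlinarith

lemma abs_sub_div_le_one {s x y : ℝ} (hs : 2 ≤ s) (h : |s * x - y| ≤ 2) : |x - y / s| ≤ 1 := by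
  have hs₀ : 0 < s := two_pos.trans_le hs
  rw [sub_div' hs₀.ne', abs_div, abs_of_pos hs₀, div_le_one hs₀, mul_comm x]
  exact h.trans hs

lemma abs_fib_sub_le (k : ℕ) : |(Nat.fib k : ℝ) - Real.goldenRatio ^ k / √5| ≤ 1 := by
  refine abs_sub_div_le_one two_le_sqrt_five ?_
  rw [Real.coe_fib_eq k, mul_div_cancel₀ _ (by positivity), sub_sub_cancel_left, abs_neg, abs_pow]
  refine (pow_le_one₀ (abs_nonneg _) ?_).trans one_le_two
  rw [abs_le]
  constructor <;> linarith [Real.neg_one_lt_goldenConj, Real.goldenConj_neg]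

/-- The quadratic form whose discriminant is that of the recurrence is multiplied by the product
of the two characteristic roots in each step. -/
lemma mul_quadratic_succ {c d x₀ x₁ x₂ : ℝ} (h : c * x₂ = -d * x₁ - x₀) :
    c * (c * x₂ ^ 2 + d * x₂ * x₁ + x₁ ^ 2) = c * x₁ ^ 2 + d * x₁ * x₀ + x₀ ^ 2 := by
  linear_combination (c * x₂ - x₀) * h

lemma tribError_recurrence {ω : ℝ} (hω : ω ^ 3 - ω ^ 2 - ω - 1 = 0) (k : ℕ) :
    ω * (tribDenom ω * trib (k + 2) - ω ^ (k + 2)) =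
      -(ω * (ω - 1)) * (tribDenom ω * trib (k + 1) - ω ^ (k + 1)) -
        (tribDenom ω * trib k - ω ^ k) := by
  induction k with
  | zero =>
    simp only [tribDenom, trib]
    push_cast
    linear_combination (1 - ω) * hω
  | succ k ih =>
    rw [show trib (k + 1 + 2) = trib (k + 2) + trib (k + 1) + trib k by rw [trib]]
    push_cast
    linear_combination ω * ih - tribDenom ω * (trib (k + 1) : ℝ) * hω

lemma abs_trib_sub_le {ω : ℝ} (hω : ω ^ 3 - ω ^ 2 - ω - 1 = 0) (k : ℕ) :
    |(trib k : ℝ) - ω ^ k / tribDenom ω| ≤ 1 := by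
  obtain ⟨hω₁, hω₂⟩ := mem_Ioo_of_trib_root hω
  refine abs_sub_div_le_one (by linarith [(tribDenom_mem_Ioo hω).1]) ?_
  set e : ℕ → ℝ := fun k => tribDenom ω * trib k - ω ^ k with he
  have hpos : 1 / 2 ≤ 1 - ω * (ω - 1) ^ 2 / 4 := by nlinarith
  have hform (x y : ℝ) : 1 / 2 * y ^ 2 ≤ ω * x ^ 2 + ω * (ω - 1) * x * y + y ^ 2 := by
    linear_combination mul_le_mul_of_nonneg_right hpos (sq_nonneg y) +
      mul_nonneg (by linarith : 0 ≤ ω) (sq_nonneg (x + (ω - 1) / 2 * y))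
  have hbound (k : ℕ) : ω * e (k + 1) ^ 2 + ω * (ω - 1) * e (k + 1) * e k + e k ^ 2 ≤ 2 := by
    induction k with
    | zero =>
      have he₀ : e 0 = -1 := by simp [he, trib]
      have he₁ : e 1 = -ω ^ 2 + 3 * ω - 1 := by simp only [he, trib, tribDenom]; push_cast; ring
      rw [he₀, he₁]
      nlinarith
    | succ k ih =>
      have hstep := mul_quadratic_succ (tribError_recurrence hω k)
      nlinarith [hform (e (k + 2)) (e (k + 1)), sq_nonneg (e (k + 1))]
  exact abs_le_of_sq_le_sq (by linarith [hform (e (k + 1)) (e k), hbound k]) zero_le_two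

lemma abs_log_sub_log_le {x y t : ℝ} (hx : 0 < x) (hy : 0 < y) (ht : t ≤ 1 / 3)
    (h : |x - y| ≤ t * (x + y)) : |Real.log x - Real.log y| ≤ 3 * t := by
  wlog hxy : y ≤ x generalizing x y
  · rw [abs_sub_comm]
    exact this hy hx (by rwa [abs_sub_comm, add_comm]) (le_of_not_ge hxy)
  rw [abs_of_nonneg (sub_nonneg.2 hxy)] at h
  rw [abs_of_nonneg (sub_nonneg.2 (Real.log_le_log hy hxy)), ← Real.log_div hx.ne' hy.ne']
  refine (Real.log_le_sub_one_of_pos (div_pos hx hy)).trans ?_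
  rw [sub_le_iff_le_add, div_le_iff₀ hy]
  nlinarith

lemma pow_le_exp_neg_mul_pow {x X : ℝ} (hx : 0 < x) {n k : ℕ}
    (h : X ≤ ((n : ℝ) - k) * Real.log x) : x ^ k ≤ Real.exp (-X) * x ^ n := by
  rw [← Real.exp_log (pow_pos hx k), ← Real.exp_log (pow_pos hx n), Real.log_pow, Real.log_pow,
    ← Real.exp_add, Real.exp_le_exp]
  linarith

lemma le_of_pow_div_tribDenom_le {ω : ℝ} (hω : ω ^ 3 - ω ^ 2 - ω - 1 = 0) {n m : ℕ}
    (h : ω ^ m / tribDenom ω ≤ 1.3 * (Real.goldenRatio ^ n / √5)) : m ≤ n := by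
  obtain ⟨hω₁, hω₂⟩ := mem_Ioo_of_trib_root hω
  obtain ⟨hδ₁, hδ₂⟩ := tribDenom_mem_Ioo hω
  have hsqrt : 2.2 ≤ √5 := Real.le_sqrt_of_sq_le (by norm_num)
  have hsqrt' : √5 ≤ 2.24 := by rw [Real.sqrt_le_left (by norm_num)]; norm_num
  have hpow : 0 < ω ^ n := pow_pos (by linarith) n
  by_contra! hlt
  have hlower : 0.613 * ω ^ n ≤ ω ^ m / tribDenom ω := by
    rw [le_div_iff₀ (by linarith)]
    calc 0.613 * ω ^ n * tribDenom ω ≤ 0.613 * ω ^ n * 3 := by gcongr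
      _ ≤ ω ^ (n + 1) := by rw [pow_succ]; nlinarith
      _ ≤ ω ^ m := pow_le_pow_right₀ (by linarith) hlt
  have hupper : Real.goldenRatio ^ n / √5 ≤ 0.46 * ω ^ n := by
    have hgolden : Real.goldenRatio ≤ ω := by
      rw [Real.goldenRatio]
      linarith
    rw [div_le_iff₀ (by positivity)]
    calc Real.goldenRatio ^ n ≤ ω ^ n := by gcongr
      _ ≤ 0.46 * ω ^ n * √5 := by nlinarith
  linarith

lemma logForm_natCast {ω : ℝ} (hω : ω ^ 3 - ω ^ 2 - ω - 1 = 0) (n m : ℕ) :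
    logForm ω ![n, -m, 1] =
      Real.log (Real.goldenRatio ^ n / √5) - Real.log (ω ^ m / tribDenom ω) := by
  have hω₀ : 0 < ω := (mem_Ioo_of_trib_root hω).1.trans' (by norm_num)
  have hδ : 0 < tribDenom ω := (tribDenom_mem_Ioo hω).1.trans' (by norm_num)
  rw [Real.log_div (pow_pos Real.goldenRatio_pos n).ne' (by positivity),
    Real.log_div (pow_pos hω₀ m).ne' hδ.ne', Real.log_pow, Real.log_pow]
  simp only [logForm, binetBase, Fin.sum_univ_three, Matrix.cons_val]
  rw [Real.log_div hδ.ne' (by positivity)]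
  push_cast
  ring

lemma abs_pow_div_sub_pow_div_le {ω : ℝ} (hω : ω ^ 3 - ω ^ 2 - ω - 1 = 0) {n m n₁ m₁ : ℕ}
    (hn₁ : 2 ≤ n₁) (hm₁ : 2 ≤ m₁)
    (h : (Nat.fib n : ℤ) - Nat.fib n₁ = trib m - trib m₁) {ε : ℝ}
    (hφ : Real.goldenRatio ^ n₁ ≤ ε * Real.goldenRatio ^ n) (hωm : ω ^ m₁ ≤ ε * ω ^ m) :
    |Real.goldenRatio ^ n / √5 - ω ^ m / tribDenom ω| ≤
      3 * ε * (Real.goldenRatio ^ n / √5 + ω ^ m / tribDenom ω) := by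
  obtain ⟨hω₁, hω₂⟩ := mem_Ioo_of_trib_root hω
  obtain ⟨hδ₁, hδ₂⟩ := tribDenom_mem_Ioo hω
  have hsqrt : √5 ≤ 2.24 := by rw [Real.sqrt_le_left (by norm_num)]; norm_num
  have hfib : (Nat.fib n : ℝ) - Nat.fib n₁ = trib m - trib m₁ := by exact_mod_cast h
  have hone : 1 ≤ Real.goldenRatio ^ n₁ / √5 := by
    rw [one_le_div (by positivity)]
    refine le_trans ?_ (pow_le_pow_right₀ Real.one_lt_goldenRatio.le hn₁)
    rw [Real.goldenRatio_sq, Real.goldenRatio]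
    linarith
  have hone' : 1 ≤ ω ^ m₁ / tribDenom ω := by
    rw [one_le_div (by linarith)]
    refine le_trans ?_ (pow_le_pow_right₀ (by linarith) hm₁)
    nlinarith
  calc |Real.goldenRatio ^ n / √5 - ω ^ m / tribDenom ω|
      ≤ 3 * (Real.goldenRatio ^ n₁ / √5 + ω ^ m₁ / tribDenom ω) := by
        have hn := abs_le.1 (abs_fib_sub_le n)
        have hn' := abs_le.1 (abs_fib_sub_le n₁)
        have hm := abs_le.1 (abs_trib_sub_le hω m)
        have hm' := abs_le.1 (abs_trib_sub_le hω m₁)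
        rw [abs_le]
        constructor <;> linarith
    _ ≤ 3 * (ε * Real.goldenRatio ^ n / √5 + ε * ω ^ m / tribDenom ω) := by
        gcongr
    _ = 3 * ε * (Real.goldenRatio ^ n / √5 + ω ^ m / tribDenom ω) := by ring

lemma abs_logForm_le_of_fib_sub_eq {ω : ℝ} (hω : ω ^ 3 - ω ^ 2 - ω - 1 = 0) {n m n₁ m₁ : ℕ}
    (hn₁ : 2 ≤ n₁) (hm₁ : 2 ≤ m₁)
    (h : (Nat.fib n : ℤ) - Nat.fib n₁ = trib m - trib m₁) {X : ℝ} (hX : 30 ≤ X)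
    (hφ : X ≤ ((n : ℝ) - n₁) * Real.log Real.goldenRatio)
    (hωm : X ≤ ((m : ℝ) - m₁) * Real.log ω) :
    m ≤ n ∧ |logForm ω ![n, -m, 1]| ≤ 9 * Real.exp (-X) := by
  have hω₀ : 0 < ω := (mem_Ioo_of_trib_root hω).1.trans' (by norm_num)
  have hδ : 0 < tribDenom ω := (tribDenom_mem_Ioo hω).1.trans' (by norm_num)
  have hU : 0 < Real.goldenRatio ^ n / √5 :=
    div_pos (pow_pos Real.goldenRatio_pos n) (by positivity)
  have hV : 0 < ω ^ m / tribDenom ω := by positivity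
  have hclose := abs_pow_div_sub_pow_div_le hω hn₁ hm₁ h
    (pow_le_exp_neg_mul_pow Real.goldenRatio_pos hφ) (pow_le_exp_neg_mul_pow hω₀ hωm)
  have hε : 3 * Real.exp (-X) ≤ 0.1 := by
    have : Real.exp (-X) ≤ 30⁻¹ := by
      rw [Real.exp_neg]
      exact inv_anti₀ (by norm_num) (by linarith [Real.add_one_le_exp X])
    linarith
  refine ⟨le_of_pow_div_tribDenom_le hω ?_, ?_⟩
  · nlinarith [(abs_le.1 hclose).1]
  · rw [logForm_natCast hω]
    exact (abs_log_sub_log_le hU hV (by linarith) hclose).trans_eq (by ring)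

lemma thirty_le_log_of_mul_log_le {x : ℝ} (hx : 3 ≤ x)
    (h : 2.03 * 10 ^ 15 * Real.log x ≤ x) : 30 ≤ Real.log x := by
  have hx₀ : 0 < x := by linarith
  have hone : 1 ≤ Real.log x := by
    rw [Real.le_log_iff_exp_le hx₀]
    linarith [Real.exp_one_lt_d9]
  rw [Real.le_log_iff_exp_le hx₀]
  calc Real.exp 30 = Real.exp 1 ^ 30 := by rw [← Real.exp_nat_mul]; norm_num
    _ ≤ 2.72 ^ 30 := by
      gcongr
      linarith [Real.exp_one_lt_d9]
    _ ≤ 2.03 * 10 ^ 15 * 1 := by norm_num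
    _ ≤ x := h.trans' (by gcongr)

lemma thirty_le_log_of_le_sub_mul_log_goldenRatio {n n₁ : ℕ} (hn : 3 ≤ n)
    (h : 2.03 * 10 ^ 15 * Real.log n ≤ ((n : ℝ) - n₁) * Real.log Real.goldenRatio) :
    30 ≤ Real.log n := by
  refine thirty_le_log_of_mul_log_le (by exact_mod_cast hn) (h.trans ?_)
  have hlog₀ : 0 ≤ Real.log Real.goldenRatio := Real.log_nonneg Real.one_lt_goldenRatio.le
  have hlog₁ : Real.log Real.goldenRatio ≤ 1 := by
    linarith [Real.log_le_sub_one_of_pos Real.goldenRatio_pos, Real.goldenRatio_lt_two]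
  calc ((n : ℝ) - n₁) * Real.log Real.goldenRatio ≤ n * Real.log Real.goldenRatio := by
        gcongr
        exact sub_le_self _ n₁.cast_nonneg
    _ ≤ n := mul_le_of_le_one_right n.cast_nonneg hlog₁

lemma lt_abs_logForm_of_thirty_le_log {ω : ℝ} (hω : ω ^ 3 - ω ^ 2 - ω - 1 = 0) {n m : ℕ}
    (hmn : m ≤ n) (hlog : 30 ≤ Real.log n) :
    9 * Real.exp (-(2.03 * 10 ^ 15 * Real.log n)) < |logForm ω ![n, -m, 1]| := by
  have hn : (0 : ℝ) < n := by
    rw [Nat.cast_pos, Nat.pos_iff_ne_zero]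
    rintro rfl
    norm_num at hlog
  set h := ⌈Real.log n / 3⌉₊
  have hle : Real.log n / 3 ≤ h := Nat.le_ceil _
  have hlt : h < Real.log n / 3 + 1 := Nat.ceil_lt_add_one (by positivity)
  have hh : 10 ≤ h := by
    have : (10 : ℝ) ≤ h := by linarith
    exact_mod_cast this
  have hb : (n : ℝ) ≤ Real.exp (4 * h) := by
    rw [← Real.log_le_iff_le_exp hn]
    linarith
  calc 9 * Real.exp (-(2.03 * 10 ^ 15 * Real.log n))
      ≤ Real.exp 9 * Real.exp (-(2.03 * 10 ^ 15 * Real.log n)) := by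
        gcongr
        linarith [Real.add_one_le_exp (9 : ℝ)]
    _ ≤ Real.exp (-10000 * (2 ^ 39 * h)) := by
        rw [← Real.exp_add, Real.exp_le_exp]
        linarith
    _ < |logForm ω ![n, -m, 1]| := by
        refine exp_lt_abs_logForm (b := ![n, -m]) hω hh fun j => ?_
        fin_cases j
        · simpa using hb
        · simpa using (Nat.cast_le.2 hmn).trans hb

/-- If `n > n₁ ≥ 2`, `m > m₁ ≥ 2` and `F n - F n₁ = T m - T m₁`, then
`min {(n-n₁)·log α, (m-m₁)·log α_T} < 2.03×10¹⁵·log n`. -/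
theorem fib_trib_min_bound (α αT : ℝ)
    (hα : α = (1 + Real.sqrt 5) / 2)
    (hroot : αT ^ 3 - αT ^ 2 - αT - 1 = 0)
    (huniq : ∀ x : ℝ, x ^ 3 - x ^ 2 - x - 1 = 0 → x = αT)
    (n m n₁ m₁ : ℕ) (hn₁ : 2 ≤ n₁) (hn : n₁ < n) (hm₁ : 2 ≤ m₁) (hm : m₁ < m)
    (h : (Nat.fib n : ℤ) - Nat.fib n₁ = trib m - trib m₁) :
    min (((n : ℝ) - n₁) * Real.log α) (((m : ℝ) - m₁) * Real.log αT) <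
      2.03 * 10 ^ 15 * Real.log n := by
  by_contra! hmin
  obtain ⟨hgolden, htrib⟩ := le_min_iff.1 hmin
  rw [hα] at hgolden
  have hlog := thirty_le_log_of_le_sub_mul_log_goldenRatio (by omega) hgolden
  obtain ⟨hmn, hupper⟩ :=
    abs_logForm_le_of_fib_sub_eq hroot hn₁ hm₁ h (by linarith) hgolden htrib
  exact (lt_abs_logForm_of_thirty_le_log hroot hmn hlog).not_ge hupper
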